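/- arXiv:1711.02916 — 3 statements merged into one kernel-verified Lean document; each statement's English description precedes it below -/
import Mathlib

section
/- There exist μ > 0 and n₀ ∈ ℕ such that for every n ≥ n₀ and every even integer Δ with 1 ≤ Δ ≤ μn the following holds: if G is a graph on n vertices with minimum degree at least n/2, then for every (μn/Δ)-bounded edge colouring χ of G there exists a spanning Δ-regular subgraph of G that is rainbow with respect to χ. -/
/-!
Regard `G` as a digraph, replacing each edge by two opposite arcs, and look for `k = Δ / 2`
permutations of the vertices whose arcs lie in `G` and have distinct colours, also across
permutations. Each permutation contributes an out- and an in-neighbour to every vertex, and these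
never coincide because the edges carry distinct colours, so the union is `2k`-regular.

Such permutations are rainbow perfect matchings of bipartite graphs, and they come from the
lopsided local lemma applied to a uniformly random perfect matching, the bad events being that it
contains two given arcs of equal colour. The correlation bounds come from switchings, which
replace four arcs of the matching by four others, and they hold as soon as every arc can be
switched away in at least `c n³` ways. If any two sets of half of the vertices span many arcs, a
Dirac digraph has that many switchings. Otherwise it is close to a disjoint union of two dense
bipartite clusters `A → B` and `Aᶜ → Bᶜ`, with `|A| ≥ |B|` say. Beck–Fiala rounding then reserves
a set of colours, containing about a sixteenth of the arcs at every vertex; the `|A| - |B|` arcs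
`A → Bᶜ` by which each permutation must repair the imbalance are chosen greedily in reserved
colours, and the balanced remainders of the clusters are matched, by the local lemma again, in the
other colours.
-/

namespace RainbowFactor

open Finset Function
open scoped Classical

/-! ### The lopsided local lemma -/

section LocalLemma

variable {Ω I : Type*} [DecidableEq Ω]

theorem card_sdiff_biUnion_le (Ω₀ : Finset Ω) (A : I → Finset Ω) (S T : Finset I) :
    #(Ω₀ \ T.biUnion A) ≤ #(Ω₀ \ S.biUnion A) + ∑ j ∈ S \ T, #(A j \ T.biUnion A) := by
  refine (card_le_card fun ω hω ↦ ?_).trans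
    ((card_union_le _ ((S \ T).biUnion fun j ↦ A j \ T.biUnion A)).trans
      (Nat.add_le_add_left card_biUnion_le _))
  simp only [mem_union, mem_biUnion, mem_sdiff, not_exists, not_and] at hω ⊢
  obtain ⟨hω₀, hω⟩ := hω
  by_contra! h
  obtain ⟨j, hjS, hj⟩ := h.1 hω₀
  replace h := h.2
  obtain ⟨i, hi, hij⟩ := h j ⟨hjS, fun hjT ↦ hω j hjT hj⟩ hj
  exact hω i hi hij

variable {Ω₀ : Finset Ω} {A : I → Finset Ω} {nb : I → Finset I} {q : ℝ}

theorem card_sdiff_biUnion_mul_le (hq : 0 < q) (hnb : ∀ i, 4 * (#(nb i) : ℝ) ≤ q)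
    (hA : ∀ i S, Disjoint S (nb i) → (#(A i \ S.biUnion A) : ℝ) * q ≤ #(Ω₀ \ S.biUnion A))
    (S : Finset I) (i : I) : (#(A i \ S.biUnion A) : ℝ) * q ≤ 2 * #(Ω₀ \ S.biUnion A) := by
  induction S using Finset.strongInduction generalizing i with
  | H S ih =>
    set T := S \ nb i
    have hT : (#(A i \ T.biUnion A) : ℝ) * q ≤ #(Ω₀ \ T.biUnion A) := hA i T sdiff_disjoint
    rcases (sdiff_subset : T ⊆ S).eq_or_ssubset with hTS | hTS
    · rw [show T = S from hTS] at hT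
      linarith [Nat.cast_nonneg (α := ℝ) #(Ω₀ \ S.biUnion A)]
    have hmono : (#(A i \ S.biUnion A) : ℝ) ≤ #(A i \ T.biUnion A) := mod_cast
      card_le_card (sdiff_subset_sdiff subset_rfl (biUnion_subset_biUnion_of_subset_left A hTS.1))
    have hunion : (#(Ω₀ \ T.biUnion A) : ℝ) ≤
        #(Ω₀ \ S.biUnion A) + ∑ j ∈ S \ T, (#(A j \ T.biUnion A) : ℝ) :=
      mod_cast card_sdiff_biUnion_le Ω₀ A S T
    have hcard : (#(S \ T) : ℝ) ≤ #(nb i) := mod_cast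
      card_le_card (by rw [sdiff_sdiff_right_self]; exact inter_subset_right)
    have hsum : ∑ j ∈ S \ T, (#(A j \ T.biUnion A) : ℝ) ≤ #(Ω₀ \ T.biUnion A) / 2 := by
      refine le_of_mul_le_mul_right ?_ hq
      calc (∑ j ∈ S \ T, (#(A j \ T.biUnion A) : ℝ)) * q
          ≤ ∑ _j ∈ S \ T, 2 * (#(Ω₀ \ T.biUnion A) : ℝ) := by
            rw [sum_mul]
            exact sum_le_sum fun j _ ↦ ih T hTS j
        _ = #(S \ T) * (2 * #(Ω₀ \ T.biUnion A)) := by rw [sum_const, nsmul_eq_mul]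
        _ ≤ q / 4 * (2 * #(Ω₀ \ T.biUnion A)) := by gcongr; linarith [hnb i]
        _ = #(Ω₀ \ T.biUnion A) / 2 * q := by ring
    linarith [mul_le_mul_of_nonneg_right hmono hq.le]

theorem exists_forall_notMem_of_lopsided [Finite I] (hΩ₀ : Ω₀.Nonempty) (hq : 2 < q)
    (hnb : ∀ i, 4 * (#(nb i) : ℝ) ≤ q)
    (hA : ∀ i S, Disjoint S (nb i) → (#(A i \ S.biUnion A) : ℝ) * q ≤ #(Ω₀ \ S.biUnion A)) :
    ∃ ω ∈ Ω₀, ∀ i, ω ∉ A i := by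
  cases nonempty_fintype I
  have hpos (S : Finset I) : (0 : ℝ) < #(Ω₀ \ S.biUnion A) := by
    induction S using Finset.induction_on with
    | empty => simpa using hΩ₀
    | insert i S hi ih =>
      have hkey := card_sdiff_biUnion_mul_le (by linarith) hnb hA S i
      have hsplit : (#(Ω₀ \ S.biUnion A) : ℝ) ≤
          #(Ω₀ \ (insert i S).biUnion A) + #(A i \ S.biUnion A) := by
        simpa [insert_sdiff_cancel hi] using
          (mod_cast card_sdiff_biUnion_le Ω₀ A (insert i S) S :
            (#(Ω₀ \ S.biUnion A) : ℝ) ≤ #(Ω₀ \ (insert i S).biUnion A) +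
              ∑ j ∈ insert i S \ S, (#(A j \ S.biUnion A) : ℝ))
      nlinarith
  obtain ⟨ω, hω⟩ := card_pos.1 (Nat.cast_pos.1 (hpos univ))
  obtain ⟨hω₀, hω⟩ := mem_sdiff.1 hω
  exact ⟨ω, hω₀, fun i hi ↦ hω (mem_biUnion.2 ⟨i, mem_univ i, hi⟩)⟩

end LocalLemma

/-! ### Discrepancy: Beck–Fiala rounding -/

section BeckFiala

variable {I J : Type*}

theorem card_row_sum_gt_lt [Fintype I] {w : I → J → ℝ} {D : ℝ} (hw : ∀ i j, 0 ≤ w i j)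
    (hD : 0 ≤ D) (hcol : ∀ j, ∑ i, w i j ≤ D) {F : Finset J} (hF : F.Nonempty) :
    #{i | D < ∑ j ∈ F, w i j} < #F := by
  rcases eq_empty_or_nonempty ({i | D < ∑ j ∈ F, w i j} : Finset I) with hA | hA
  · simpa [hA] using hF
  set A : Finset I := {i | D < ∑ j ∈ F, w i j}
  have hsum : #A * D < #F * D := by
    calc #A * D = ∑ _i ∈ A, D := by simp
      _ < ∑ i ∈ A, ∑ j ∈ F, w i j := sum_lt_sum_of_nonempty hA fun i hi ↦ (mem_filter.1 hi).2
      _ = ∑ j ∈ F, ∑ i ∈ A, w i j := sum_comm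
      _ ≤ ∑ _j ∈ F, D := sum_le_sum fun j _ ↦
          (sum_le_univ_sum_of_nonneg fun i ↦ hw i j).trans (hcol j)
      _ = #F * D := by simp
  exact_mod_cast lt_of_mul_lt_mul_right hsum hD

variable [Fintype J]

theorem exists_mulVec_eq_zero_of_card_lt (w : I → J → ℝ) {A : Finset I} {F : Finset J}
    (h : #A < #F) :
    ∃ z : J → ℝ, z ≠ 0 ∧ (∀ j ∉ F, z j = 0) ∧ ∀ i ∈ A, ∑ j, w i j * z j = 0 := by
  let M : Matrix (A ⊕ {j // j ∉ F}) J ℝ :=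
    Matrix.of (Sum.elim (fun i ↦ w i) fun j ↦ Pi.single j.1 1)
  have hker : LinearMap.ker M.mulVecLin ≠ ⊥ := by
    refine LinearMap.ker_ne_bot_of_finrank_lt ?_
    have := card_le_univ F
    simp only [Module.finrank_fintype_fun_eq_card, Fintype.card_sum, Fintype.card_coe,
      Fintype.card_subtype_compl]
    omega
  obtain ⟨z, hz, hz0⟩ := (Submodule.ne_bot_iff _).1 hker
  have hrow := congrFun (LinearMap.mem_ker.1 hz)
  refine ⟨z, hz0, fun j hj ↦ ?_, fun i hi ↦ hrow (.inl ⟨i, hi⟩)⟩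
  simpa [M, Matrix.mulVec] using hrow (.inr ⟨j, hj⟩)

theorem exists_exit_time {x z : ℝ} (hx : x ∈ Set.Icc 0 1) (hz : z ≠ 0) :
    ∃ t, 0 ≤ t ∧ x + t * z ∉ Set.Ioo 0 1 ∧ ∀ s ∈ Set.Icc 0 t, x + s * z ∈ Set.Icc 0 1 := by
  obtain ⟨hx0, hx1⟩ := hx
  rcases hz.lt_or_gt with hz | hz
  · refine ⟨x / -z, by have := neg_pos.2 hz; positivity, ?_, fun s hs ↦ ?_⟩
    · rw [show x + x / -z * z = 0 by field_simp; ring]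
      simp
    · have := (le_div_iff₀ (neg_pos.2 hz)).1 hs.2
      exact ⟨by linarith, by nlinarith [hs.1]⟩
  · refine ⟨(1 - x) / z, div_nonneg (by linarith) hz.le, ?_, fun s hs ↦ ?_⟩
    · rw [show x + (1 - x) / z * z = 1 by field_simp; ring]
      simp
    · have := (le_div_iff₀ hz).1 hs.2
      exact ⟨by nlinarith [hs.1], by linarith⟩

/-- The set of coordinates of a point of the unit cube that are not yet rounded to `0` or `1`. -/
noncomputable def fractional (x : J → ℝ) : Finset J := {j | x j ∈ Set.Ioo 0 1}

theorem mem_fractional {x : J → ℝ} {j : J} : j ∈ fractional x ↔ x j ∈ Set.Ioo 0 1 := by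
  simp [fractional]

theorem exists_fractional_add_mul_ssubset {x z : J → ℝ} (hx : ∀ j, x j ∈ Set.Icc 0 1)
    (hz : z ≠ 0) (hzx : ∀ j ∉ fractional x, z j = 0) :
    ∃ s : ℝ, (∀ j, x j + s * z j ∈ Set.Icc 0 1) ∧
      fractional (fun j ↦ x j + s * z j) ⊂ fractional x := by
  choose! t ht0 htexit htcube using fun j (hj : z j ≠ 0) ↦ exists_exit_time (hx j) hj
  obtain ⟨j₁, hj₁⟩ := ne_iff.1 hz
  obtain ⟨j₀, hj₀, hmin⟩ := exists_min_image {j | z j ≠ 0} t ⟨j₁, by simpa using hj₁⟩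
  have hj₀ : z j₀ ≠ 0 := by simpa using hj₀
  refine ⟨t j₀, fun j ↦ ?_, (ssubset_iff_of_subset fun j hj ↦ ?_).2 ⟨j₀, ?_, fun h ↦ ?_⟩⟩
  · by_cases hj : z j = 0
    · simpa [hj] using hx j
    · exact htcube j hj _ ⟨ht0 j₀ hj₀, hmin j (by simpa using hj)⟩
  · by_contra h
    rw [mem_fractional, hzx j h, mul_zero, add_zero] at hj
    exact h (mem_fractional.2 hj)
  · by_contra h
    exact hj₀ (hzx j₀ h)
  · exact htexit j₀ hj₀ ((mem_fractional (j := j₀)).1 h)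

theorem abs_sum_mul_sub_le {w : I → J → ℝ} (hw : ∀ i j, 0 ≤ w i j) {x y : J → ℝ}
    (hx : ∀ j, x j ∈ Set.Icc 0 1) (hy : ∀ j, y j ∈ Set.Icc 0 1) {F : Finset J}
    (hxy : ∀ j ∉ F, y j = x j) (i : I) :
    |∑ j, w i j * (x j - y j)| ≤ ∑ j ∈ F, w i j := by
  rw [← sum_subset (subset_univ F) fun j _ hj ↦ by rw [hxy j hj, sub_self, mul_zero]]
  refine (abs_sum_le_sum_abs _ _).trans (sum_le_sum fun j _ ↦ ?_)
  rw [abs_mul, abs_of_nonneg (hw i j)]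
  refine mul_le_of_le_one_right (hw i j) (abs_le.2 ?_)
  obtain ⟨⟨hx0, hx1⟩, hy0, hy1⟩ := And.intro (hx j) (hy j)
  constructor <;> linarith

theorem exists_beckFiala_rounding [Fintype I] {w : I → J → ℝ} {D : ℝ}
    (hw : ∀ i j, 0 ≤ w i j) (hD : 0 ≤ D) (hcol : ∀ j, ∑ i, w i j ≤ D) {x : J → ℝ}
    (hx : ∀ j, x j ∈ Set.Icc 0 1) :
    ∃ y : J → ℝ, (∀ j, y j = 0 ∨ y j = 1) ∧ (∀ j ∉ fractional x, y j = x j) ∧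
      ∀ i, |∑ j, w i j * (x j - y j)| ≤ D := by
  induction hF : fractional x using Finset.strongInduction generalizing x with
  | H F ih =>
    rcases F.eq_empty_or_nonempty with rfl | hFne
    · refine ⟨x, fun j ↦ ?_, fun _ _ ↦ rfl, fun i ↦ by simpa using hD⟩
      have hj : ¬ x j ∈ Set.Ioo 0 1 := fun h ↦ by simpa [hF] using mem_fractional.2 h
      by_contra! h
      exact hj ⟨(hx j).1.lt_of_ne' h.1, (hx j).2.lt_of_ne h.2⟩
    -- Rows whose fractional part weighs at most `D` can never go wrong, so only the
    -- heavy rows are kept balanced; there are fewer of them than fractional coordinates.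
    obtain ⟨z, hz, hzF, hzw⟩ :=
      exists_mulVec_eq_zero_of_card_lt w (card_row_sum_gt_lt hw hD hcol hFne)
    subst hF
    obtain ⟨s, hxs, hss⟩ := exists_fractional_add_mul_ssubset hx hz hzF
    obtain ⟨y, hy, hyx, hyw⟩ := ih _ hss hxs rfl
    have hyF (j) (hj : j ∉ fractional x) : y j = x j := by
      rw [hyx j fun h ↦ hj (hss.1 h), hzF j hj, mul_zero, add_zero]
    refine ⟨y, hy, hyF, fun i ↦ ?_⟩
    by_cases hi : D < ∑ j ∈ fractional x, w i j
    · have hmove : ∑ j, w i j * (x j + s * z j - y j) = ∑ j, w i j * (x j - y j) := by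
        calc ∑ j, w i j * (x j + s * z j - y j)
            = ∑ j, w i j * (x j - y j) + s * ∑ j, w i j * z j := by
              rw [mul_sum, ← sum_add_distrib]
              exact sum_congr rfl fun j _ ↦ by ring
          _ = _ := by rw [hzw i (by simpa using hi), mul_zero, add_zero]
      exact hmove ▸ hyw i
    · refine (abs_sum_mul_sub_le hw hx (fun j ↦ ?_) hyF i).trans (not_lt.1 hi)
      rcases hy j with h | h <;> simp [h]

theorem exists_colour_set_card_near [Fintype I] {P C : Type*} (E : I → Finset P) (col : P → C)
    {D ρ : ℝ} (hρ : ρ ∈ Set.Icc 0 1) (hD : 0 ≤ D)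
    (hcol : ∀ c, ∑ i, (#{p ∈ E i | col p = c} : ℝ) ≤ D) :
    ∃ R : Set C, ∀ i, |ρ * #(E i) - #{p ∈ E i | col p ∈ R}| ≤ D := by
  set T : Finset C := univ.biUnion fun i ↦ (E i).image col
  have hT (i) : ∀ p ∈ E i, col p ∈ T := fun p hp ↦
    mem_biUnion.2 ⟨i, mem_univ i, mem_image_of_mem col hp⟩
  obtain ⟨y, hy, -, hyw⟩ := exists_beckFiala_rounding
    (w := fun i (c : T) ↦ (#{p ∈ E i | col p = c} : ℝ)) (fun _ _ ↦ Nat.cast_nonneg _) hD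
    (fun c ↦ hcol c) (x := fun _ ↦ ρ) fun _ ↦ hρ
  refine ⟨{c | ∃ h : c ∈ T, y ⟨c, h⟩ = 1}, fun i ↦ ?_⟩
  convert hyw i using 2
  have hall : (#(E i) : ℝ) = ∑ c : T, (#{p ∈ E i | col p = c} : ℝ) := by
    rw [sum_coe_sort T fun c ↦ (#{p ∈ E i | col p = c} : ℝ)]
    exact_mod_cast card_eq_sum_card_fiberwise (hT i)
  have hred : (#{p ∈ E i | ∃ h : col p ∈ T, y ⟨col p, h⟩ = 1} : ℝ) =
      ∑ c : T, (#{p ∈ E i | col p = c} : ℝ) * y c := by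
    rw [card_eq_sum_card_fiberwise fun p hp ↦ hT i p (mem_filter.1 hp).1, ← sum_coe_sort T,
      Nat.cast_sum]
    refine sum_congr rfl fun c _ ↦ ?_
    rw [filter_filter]
    rcases hy c with h | h
    · rw [h, mul_zero, Nat.cast_eq_zero, card_eq_zero, filter_eq_empty_iff]
      rintro p - ⟨⟨hp, hyp⟩, hpc⟩
      simp [hpc, h] at hyp
    · rw [h, mul_one]
      congr 2
      refine filter_congr fun p _ ↦ ⟨And.right, fun hpc ↦ ⟨?_, hpc⟩⟩
      simp [hpc, h]
  simp only [Set.mem_ofPred_eq]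
  rw [hall, hred, mul_sum, ← sum_sub_distrib]
  exact sum_congr rfl fun c _ ↦ by ring

end BeckFiala

/-! ### Switching a bijection along a four-cycle -/

section Switching

variable {X Y : Type*}

/-- The bijection obtained from `σ` by switching along `a, x, y, z`: the images of these four
points are replaced by `σ x, σ y, σ z, σ a`. The triple is `p = (x, y, z)`. -/
noncomputable def switch (σ : X ≃ Y) (a : X) (p : X × X × X) : X ≃ Y :=
  [a, p.1, p.2.1, p.2.2].formPerm.trans σ

theorem switch_apply_cases (σ : X ≃ Y) {a x y z : X} (h : [a, x, y, z].Nodup) (w : X) :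
    (w = a ∧ switch σ a (x, y, z) w = σ x) ∨ (w = x ∧ switch σ a (x, y, z) w = σ y) ∨
      (w = y ∧ switch σ a (x, y, z) w = σ z) ∨ (w = z ∧ switch σ a (x, y, z) w = σ a) ∨
      (w ∉ [a, x, y, z] ∧ switch σ a (x, y, z) w = σ w) := by
  have hσ (v) : switch σ a (x, y, z) v = σ ([a, x, y, z].formPerm v) := rfl
  have hget (i : ℕ) (hi : i < 4) := List.formPerm_apply_getElem [a, x, y, z] h i hi
  have h0 := hget 0 (by norm_num)
  have h1 := hget 1 (by norm_num)
  have h2 := hget 2 (by norm_num)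
  have h3 := hget 3 (by norm_num)
  simp only [List.getElem_cons_zero, List.getElem_cons_succ, List.length_cons, List.length_nil,
    Nat.reduceAdd, Nat.reduceMod] at h0 h1 h2 h3
  by_cases hw : w ∈ [a, x, y, z]
  · simp only [List.mem_cons, List.not_mem_nil, or_false] at hw
    rcases hw with rfl | rfl | rfl | rfl <;>
      simp only [hσ, h0, h1, h2, h3, true_and, true_or, or_true]
  · exact .inr (.inr (.inr (.inr ⟨hw, by rw [hσ, List.formPerm_apply_of_notMem hw]⟩)))

theorem switch_apply_last (σ : X ≃ Y) {a x y z : X} (h : [a, x, y, z].Nodup) :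
    switch σ a (x, y, z) z = σ a := by
  have := switch_apply_cases σ h z
  simp only [List.nodup_cons, List.mem_cons] at h
  grind

theorem eq_of_switch_eq {σ τ : X ≃ Y} {a x y z z' : X} (hστ : σ a = τ a)
    (h : [a, x, y, z].Nodup) (h' : [a, x, y, z'].Nodup)
    (heq : switch σ a (x, y, z) = switch τ a (x, y, z')) : σ = τ ∧ z = z' := by
  have hz : z = z' := (switch σ a (x, y, z)).injective <| by
    rw [switch_apply_last σ h, heq, switch_apply_last τ h', hστ]
  subst hz
  refine ⟨Equiv.ext fun w ↦ ?_, rfl⟩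
  have := DFunLike.congr_fun heq ([a, x, y, z].formPerm.symm w)
  simpa [switch] using this

theorem card_filter_apply_eq_mul_le (P : Finset (X ≃ Y)) {a : X} {b : Y} {M : ℝ}
    (W : Finset X) (T : (X ≃ Y) → Finset (X × X × X))
    (hM : ∀ σ ∈ P, σ a = b → M ≤ #(T σ))
    (hT : ∀ σ ∈ P, σ a = b → ∀ p ∈ T σ, [a, p.1, p.2.1, p.2.2].Nodup ∧ p.1 ∈ W ∧ p.2.1 ∈ W ∧
      switch σ a p ∈ P) :
    (#{σ ∈ P | σ a = b} : ℝ) * M ≤ #P * (#W : ℝ) ^ 2 := by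
  have hinj : #(({σ ∈ P | σ a = b} : Finset (X ≃ Y)).sigma T) ≤ #(P ×ˢ W ×ˢ W) := by
    refine card_le_card_of_injOn (fun s ↦ (switch s.1 a s.2, s.2.1, s.2.2.1)) ?_ ?_
    · rintro ⟨σ, p⟩ hs
      simp only [coe_sigma, Set.mem_sigma_iff, mem_coe, mem_filter] at hs
      obtain ⟨⟨hσ, hab⟩, hp⟩ := hs
      obtain ⟨-, hx, hy, hP⟩ := hT σ hσ hab p hp
      simp [hP, hx, hy]
    · rintro ⟨σ, x, y, z⟩ hs ⟨τ, x', y', z'⟩ ht heq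
      simp only [coe_sigma, Set.mem_sigma_iff, mem_coe, mem_filter] at hs ht
      simp only [Prod.mk.injEq] at heq
      obtain ⟨heq, rfl, rfl⟩ := heq
      obtain ⟨rfl, rfl⟩ := eq_of_switch_eq (hs.1.2.trans ht.1.2.symm)
        (hT σ hs.1.1 hs.1.2 _ hs.2).1 (hT τ ht.1.1 ht.1.2 _ ht.2).1 heq
      rfl
  calc (#{σ ∈ P | σ a = b} : ℝ) * M
      = ∑ σ ∈ P with σ a = b, M := by simp
    _ ≤ ∑ σ ∈ P with σ a = b, (#(T σ) : ℝ) := sum_le_sum fun σ hσ ↦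
        hM σ (mem_filter.1 hσ).1 (mem_filter.1 hσ).2
    _ = #(({σ ∈ P | σ a = b} : Finset (X ≃ Y)).sigma T) := by rw [card_sigma, Nat.cast_sum]
    _ ≤ #(P ×ˢ W ×ˢ W) := mod_cast hinj
    _ = #P * (#W : ℝ) ^ 2 := by rw [card_product, card_product]; push_cast; ring

theorem card_coincident_triples_le (W O : Finset X) (hO : #O ≤ 1) (a : X) :
    #{p ∈ W ×ˢ W ×ˢ W | ¬ ([a, p.1, p.2.1, p.2.2].Nodup ∧ p.1 ∉ O ∧ p.2.1 ∉ O ∧ p.2.2 ∉ O)} ≤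
      9 * #W ^ 2 := by
  set O' := insert a O
  have hO' : #O' ≤ 2 := (card_insert_le a O).trans (by omega)
  have hsub : {p ∈ W ×ˢ W ×ˢ W |
      ¬ ([a, p.1, p.2.1, p.2.2].Nodup ∧ p.1 ∉ O ∧ p.2.1 ∉ O ∧ p.2.2 ∉ O)} ⊆
      O' ×ˢ W ×ˢ W ∪ W ×ˢ O' ×ˢ W ∪ W ×ˢ W ×ˢ O' ∪
        ((W ×ˢ W).image (fun q ↦ (q.1, q.1, q.2)) ∪ (W ×ˢ W).image (fun q ↦ (q.1, q.2, q.1)) ∪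
          (W ×ˢ W).image (fun q ↦ (q.1, q.2, q.2))) := by
    rintro ⟨x, y, z⟩ hp
    simp only [mem_filter, mem_product, List.nodup_cons, List.mem_cons, List.not_mem_nil,
      List.nodup_nil] at hp
    simp only [mem_union, mem_product, mem_image, Prod.exists, Prod.mk.injEq, O', mem_insert]
    grind
  have hone {s : Finset (X × X × X)} {f : X × X → X × X × X} (hs : s = (W ×ˢ W).image f) :
      #s ≤ #W ^ 2 := by
    rw [hs, sq, ← card_product]
    exact card_image_le
  calc _ ≤ _ := card_le_card hsub
    _ ≤ #(O' ×ˢ W ×ˢ W) + #(W ×ˢ O' ×ˢ W) + #(W ×ˢ W ×ˢ O') + (#W ^ 2 + #W ^ 2 + #W ^ 2) := by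
      refine (card_union_le _ _).trans (add_le_add ?_ ?_)
      · exact (card_union_le _ _).trans (Nat.add_le_add_right (card_union_le _ _) _)
      · exact (card_union_le _ _).trans (add_le_add ((card_union_le _ _).trans
          (add_le_add (hone rfl) (hone rfl))) (hone rfl))
    _ ≤ 9 * #W ^ 2 := by
      simp only [card_product]
      nlinarith [Nat.mul_le_mul_right (#W ^ 2) hO']

end Switching

theorem cast_card_le_mul_of_fibres_le {α β : Type*} [DecidableEq β] {s : Finset α}
    {t : Finset β} {f : α → β} {D : ℝ} (hf : ∀ a ∈ s, f a ∈ t)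
    (hD : ∀ b ∈ t, (#{a ∈ s | f a = b} : ℝ) ≤ D) : (#s : ℝ) ≤ #t * D := by
  rw [card_eq_sum_card_fiberwise hf, Nat.cast_sum, ← nsmul_eq_mul]
  exact sum_le_card_nsmul _ _ _ hD

section GoodTriples

variable {X Y C : Type*} {r : X → Y → Prop} {col : X → Y → C} {σ : X ≃ Y} {a : X}
  {W : Finset X} {K : ℝ}

theorem card_filter_colour_mem_le
    (hK : ∀ c, (#{q ∈ W ×ˢ W | r q.1 (σ q.2) ∧ col q.1 (σ q.2) = c} : ℝ) ≤ K) (U : Finset C) :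
    (#{q ∈ W ×ˢ W | r q.1 (σ q.2) ∧ col q.1 (σ q.2) ∈ U} : ℝ) ≤ #U * K := by
  refine cast_card_le_mul_of_fibres_le (f := fun q ↦ col q.1 (σ q.2))
    (fun q hq ↦ (mem_filter.1 hq).2.2) fun c _ ↦
      le_trans (mod_cast card_le_card fun q hq ↦ ?_) (hK c)
  simp only [mem_filter] at hq ⊢
  tauto

theorem card_same_colour_triples_le
    (hK : ∀ c, (#{q ∈ W ×ˢ W | r q.1 (σ q.2) ∧ col q.1 (σ q.2) = c} : ℝ) ≤ K) :
    (#{p ∈ W ×ˢ W ×ˢ W | r p.2.1 (σ p.2.2) ∧ col p.1 (σ p.2.1) = col p.2.1 (σ p.2.2)} : ℝ) ≤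
      (#W : ℝ) ^ 2 * K := by
  have hWW : (#(W ×ˢ W) : ℝ) = (#W : ℝ) ^ 2 := by rw [card_product]; push_cast; ring
  rw [← hWW]
  refine cast_card_le_mul_of_fibres_le (f := fun p ↦ (p.1, p.2.1)) (fun p hp ↦ ?_) fun q _ ↦
    le_trans (mod_cast card_le_card_of_injOn (fun p ↦ (p.2.1, p.2.2)) (fun p hp ↦ ?_) ?_)
      (hK (col q.1 (σ q.2)))
  · simp only [mem_filter, mem_product] at hp ⊢
    tauto
  · simp only [coe_filter, Set.mem_ofPred_eq, mem_filter, mem_product] at hp ⊢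
    grind
  · rintro ⟨x, y, z⟩ hp ⟨x', y', z'⟩ hp' heq
    simp only [coe_filter, Set.mem_ofPred_eq] at hp hp'
    grind

variable [Fintype X]

variable (r σ a) in
/-- The triples `(x, y, z)` for which switching `σ` along `a, x, y, z` only creates arcs of `r`. -/
noncomputable def switchTriples : Finset (X × X × X) :=
  {p | r a (σ p.1) ∧ r p.1 (σ p.2.1) ∧ r p.2.1 (σ p.2.2) ∧ r p.2.2 (σ a)}

/-- The colours of the arcs `(x, σ x)`. -/
noncomputable def usedColours (col : X → Y → C) (σ : X ≃ Y) : Finset C :=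
  univ.image fun x ↦ col x (σ x)

variable (r col σ a) in
/-- The switching triples that avoid the points of `O` and along which the two new arcs not
touching `(a, σ a)` receive distinct colours outside `U`. -/
noncomputable def goodTriples (O : Finset X) (U : Finset C) : Finset (X × X × X) :=
  {p ∈ switchTriples r σ a |
    ([a, p.1, p.2.1, p.2.2].Nodup ∧ p.1 ∉ O ∧ p.2.1 ∉ O ∧ p.2.2 ∉ O) ∧
    (col p.1 (σ p.2.1) ∉ U ∧ col p.2.1 (σ p.2.2) ∉ U ∧
      col p.1 (σ p.2.1) ≠ col p.2.1 (σ p.2.2))}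

theorem card_switchTriples_le (hW : switchTriples r σ a ⊆ W ×ˢ W ×ˢ W)
    (hK : ∀ c, (#{q ∈ W ×ˢ W | r q.1 (σ q.2) ∧ col q.1 (σ q.2) = c} : ℝ) ≤ K)
    {O : Finset X} (hO : #O ≤ 1) (U : Finset C) :
    (#(switchTriples r σ a) : ℝ) ≤
      #(goodTriples r col σ a O U) + 9 * (#W : ℝ) ^ 2 + 2 * (#U * K * #W) + (#W : ℝ) ^ 2 * K := by
  set B := {q ∈ W ×ˢ W | r q.1 (σ q.2) ∧ col q.1 (σ q.2) ∈ U}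
  set S₁ := {p ∈ W ×ˢ W ×ˢ W |
    ¬ ([a, p.1, p.2.1, p.2.2].Nodup ∧ p.1 ∉ O ∧ p.2.1 ∉ O ∧ p.2.2 ∉ O)}
  set S₂ := (B ×ˢ W).image fun q ↦ (q.1.1, q.1.2, q.2)
  set S₃ := (W ×ˢ B).image fun q ↦ (q.1, q.2.1, q.2.2)
  set S₄ := {p ∈ W ×ˢ W ×ˢ W | r p.2.1 (σ p.2.2) ∧ col p.1 (σ p.2.1) = col p.2.1 (σ p.2.2)}
  have hsub : switchTriples r σ a ⊆ goodTriples r col σ a O U ∪ S₁ ∪ (S₂ ∪ S₃) ∪ S₄ := by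
    rintro ⟨x, y, z⟩ hp
    have hpW := hW hp
    simp only [goodTriples, mem_union, mem_filter, mem_image, Prod.exists, mem_product, B, S₁, S₂,
      S₃, S₄] at hpW ⊢
    simp only [switchTriples, mem_filter] at hp ⊢
    grind
  have hcard : #(switchTriples r σ a) ≤
      #(goodTriples r col σ a O U) + #S₁ + (#S₂ + #S₃) + #S₄ := by
    refine (card_le_card hsub).trans ((card_union_le _ _).trans (Nat.add_le_add_right ?_ _))
    exact (card_union_le _ _).trans (add_le_add (card_union_le _ _) (card_union_le _ _))
  have h₁ : #S₁ ≤ 9 * #W ^ 2 := card_coincident_triples_le W O hO a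
  have hB : (#B : ℝ) ≤ #U * K := card_filter_colour_mem_le hK U
  have h₂ : #S₂ ≤ #B * #W := card_image_le.trans (card_product _ _).le
  have h₃ : #S₃ ≤ #W * #B := card_image_le.trans (card_product _ _).le
  have h₄ : (#S₄ : ℝ) ≤ (#W : ℝ) ^ 2 * K := card_same_colour_triples_le hK
  have hWB : (#B : ℝ) * #W ≤ #U * K * #W := by gcongr
  calc (#(switchTriples r σ a) : ℝ)
      ≤ #(goodTriples r col σ a O U) + #S₁ + (#S₂ + #S₃) + #S₄ := mod_cast hcard
    _ ≤ #(goodTriples r col σ a O U) + 9 * (#W : ℝ) ^ 2 + (#B * #W + #W * #B) + #S₄ := by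
        gcongr <;> exact_mod_cast ‹_›
    _ ≤ _ := by linarith

end GoodTriples

/-! ### Rainbow perfect matchings in layered graphs -/

section LayeredMatching

variable {X Y L C : Type*} [Fintype X]

/-- The bipartite relation `r` only joins points with the same layer (given by `ℓ` and `ℓ'`),
layers have at most `n` points, and every arc `(a, σ a)` of every layer-preserving bijection can
be switched away in at least `c n³` ways. -/
structure IsSwitchable (ℓ : X → L) (ℓ' : Y → L) (r : X → Y → Prop) (n c : ℝ) : Prop where
  layer_eq : ∀ {x y}, r x y → ℓ x = ℓ' y
  card_layer_le : ∀ l, (#{x | ℓ x = l} : ℝ) ≤ n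
  le_card_switchTriples : ∀ σ : X ≃ Y, (∀ x, ℓ' (σ x) = ℓ x) → ∀ a,
    c * n ^ 3 ≤ #(switchTriples r σ a)

variable {ℓ : X → L} {ℓ' : Y → L} {r : X → Y → Prop} {col : X → Y → C} {n c μ K : ℝ}

namespace IsSwitchable

variable (h : IsSwitchable ℓ ℓ' r n c)

include h

theorem switchTriples_subset {σ : X ≃ Y} (hσ : ∀ x, ℓ' (σ x) = ℓ x) (a : X) :
    switchTriples r σ a ⊆ ({x | ℓ x = ℓ a} : Finset X) ×ˢ
      ({x | ℓ x = ℓ a} : Finset X) ×ˢ ({x | ℓ x = ℓ a} : Finset X) := by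
  rintro ⟨x, y, z⟩ hp
  obtain ⟨hx, hy, hz, -⟩ := (mem_filter.1 hp).2
  have hx := (h.layer_eq hx).trans (hσ x)
  have hy := (h.layer_eq hy).trans (hσ y)
  have hz := (h.layer_eq hz).trans (hσ z)
  simp only [mem_product, mem_filter, mem_univ, true_and]
  exact ⟨hx.symm, (hx.trans hy).symm, (hx.trans (hy.trans hz)).symm⟩

theorem pos (a : X) : 0 < n :=
  (Nat.cast_pos.2 (card_pos.2 ⟨a, by simp⟩)).trans_le (h.card_layer_le (ℓ a))

theorem exists_nodup_switchTriple (hcn : 9 < c * n) {σ : X ≃ Y} (hσ : ∀ x, ℓ' (σ x) = ℓ x)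
    (a : X) : ∃ p ∈ switchTriples r σ a, [a, p.1, p.2.1, p.2.2].Nodup := by
  by_contra! hno
  set W : Finset X := {x | ℓ x = ℓ a}
  have hsub : switchTriples r σ a ⊆ {p ∈ W ×ˢ W ×ˢ W |
      ¬ ([a, p.1, p.2.1, p.2.2].Nodup ∧ p.1 ∉ (∅ : Finset X) ∧ p.2.1 ∉ (∅ : Finset X) ∧
        p.2.2 ∉ (∅ : Finset X))} := fun p hp ↦
    mem_filter.2 ⟨h.switchTriples_subset hσ a hp, fun hp' ↦ hno p hp hp'.1⟩
  have hcard : (#(switchTriples r σ a) : ℝ) ≤ 9 * (#W : ℝ) ^ 2 := mod_cast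
    (card_le_card hsub).trans (card_coincident_triples_le W ∅ (by simp) a)
  have hW : (#W : ℝ) ^ 2 ≤ n ^ 2 := by gcongr; exact h.card_layer_le _
  nlinarith [h.le_card_switchTriples σ hσ a, pow_pos (h.pos a) 2]

theorem exists_matching [Finite Y] (hcn : 9 < c * n)
    (hcard : ∀ l, Nat.card {x // ℓ x = l} = Nat.card {y // ℓ' y = l}) :
    ∃ σ : X ≃ Y, ∀ x, r x (σ x) := by
  cases nonempty_fintype Y
  let σ₀ : X ≃ Y := Equiv.ofFiberEquiv fun l ↦ (Finite.card_eq.1 (hcard l)).some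
  have hσ₀ (x) : ℓ' (σ₀ x) = ℓ x := Equiv.ofFiberEquiv_map _ x
  -- A layer-preserving bijection with the most arcs in `r` only has arcs in `r`,
  -- since a switching at a bad arc would gain at least one.
  obtain ⟨σ, hσ, hmax⟩ := exists_max_image ({σ | ∀ x, ℓ' (σ x) = ℓ x} : Finset (X ≃ Y))
    (fun σ ↦ #{x | r x (σ x)}) ⟨σ₀, by simpa using hσ₀⟩
  have hσ : ∀ x, ℓ' (σ x) = ℓ x := (mem_filter.1 hσ).2
  refine ⟨σ, ?_⟩
  by_contra! hbad
  obtain ⟨a, ha⟩ := hbad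
  obtain ⟨⟨x, y, z⟩, hp, hnodup⟩ := h.exists_nodup_switchTriple hcn hσ a
  obtain ⟨hax, hxy, hyz, hza⟩ := (mem_filter.1 hp).2
  have hcases := switch_apply_cases σ hnodup
  have hgain (w) : r w (switch σ a (x, y, z) w) ∨
      w ≠ a ∧ switch σ a (x, y, z) w = σ w := by
    have := hcases w
    simp only [List.mem_cons] at this
    grind
  have hmem : switch σ a (x, y, z) ∈ ({σ | ∀ x, ℓ' (σ x) = ℓ x} : Finset (X ≃ Y)) := by
    refine mem_filter.2 ⟨mem_univ _, fun w ↦ ?_⟩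
    rcases hgain w with hw | ⟨-, hw⟩
    · exact (h.layer_eq hw).symm
    · rw [hw, hσ]
  refine (hmax _ hmem).not_gt (card_lt_card ((ssubset_iff_of_subset fun w hw ↦ ?_).2 ⟨a, ?_, ?_⟩))
  · simp only [mem_filter, mem_univ, true_and] at hw ⊢
    rcases hgain w with hw' | ⟨-, hw'⟩
    · exact hw'
    · rwa [hw']
  · simpa using (hgain a).resolve_right fun h ↦ h.1 rfl
  · simpa using ha

end IsSwitchable

variable [Fintype L]

theorem card_colour_le [Fintype Y]
    (hK : ∀ l k, (#{e : X × Y | ℓ e.1 = l ∧ r e.1 e.2 ∧ col e.1 e.2 = k} : ℝ) ≤ K) (k : C) :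
    (#{e : X × Y | r e.1 e.2 ∧ col e.1 e.2 = k} : ℝ) ≤ Fintype.card L * K := by
  refine cast_card_le_mul_of_fibres_le (f := fun e ↦ ℓ e.1) (fun _ _ ↦ mem_univ _) fun l _ ↦
    le_trans (mod_cast card_le_card fun e he ↦ ?_) (hK l k)
  simp only [mem_filter, mem_univ, true_and] at he ⊢
  exact he.symm

theorem IsSwitchable.card_le (h : IsSwitchable ℓ ℓ' r n c) :
    (Fintype.card X : ℝ) ≤ Fintype.card L * n :=
  cast_card_le_mul_of_fibres_le (fun _ _ ↦ mem_univ _) fun l _ ↦ h.card_layer_le l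

theorem IsSwitchable.le_card_goodTriples [Fintype Y] (h : IsSwitchable ℓ ℓ' r n c)
    (hK : ∀ l k, (#{e : X × Y | ℓ e.1 = l ∧ r e.1 e.2 ∧ col e.1 e.2 = k} : ℝ) ≤ K)
    (hLK : Fintype.card L * K ≤ μ * n) (hμ : 12 * μ ≤ c) (hcn : 36 ≤ c * n)
    {σ : X ≃ Y} (hσ : ∀ x, ℓ' (σ x) = ℓ x) (a : X) {O : Finset X} (hO : #O ≤ 1) :
    c / 2 * n ^ 3 ≤ #(goodTriples r col σ a O (usedColours col σ)) := by
  set W : Finset X := {x | ℓ x = ℓ a}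
  set U := usedColours col σ
  have hKW (k) : (#{q ∈ W ×ˢ W | r q.1 (σ q.2) ∧ col q.1 (σ q.2) = k} : ℝ) ≤ K := by
    refine le_trans (mod_cast card_le_card_of_injOn (fun q ↦ (q.1, σ q.2)) (fun q hq ↦ ?_) ?_)
      (hK (ℓ a) k)
    · simp only [coe_filter, Set.mem_ofPred_eq, mem_product, mem_univ, true_and, W,
        mem_filter] at hq ⊢
      exact ⟨hq.1.1, hq.2⟩
    · rintro ⟨x, y⟩ - ⟨x', y'⟩ - hq
      simpa using hq
  have hK0 : 0 ≤ K := (Nat.cast_nonneg _).trans (hKW (col a (σ a)))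
  have hn := h.pos a
  have hKn : K ≤ μ * n := by
    have : (1 : ℝ) ≤ Fintype.card L := mod_cast Fintype.card_pos_iff.2 ⟨ℓ a⟩
    nlinarith
  have hUK : #U * K ≤ μ * n * n := by
    have hU : (#U : ℝ) ≤ Fintype.card L * n := le_trans (mod_cast card_image_le) h.card_le
    calc #U * K ≤ Fintype.card L * n * K := by gcongr
      _ = Fintype.card L * K * n := by ring
      _ ≤ μ * n * n := by gcongr
  have hμ0 : 0 ≤ μ * n := hK0.trans hKn
  have hW : (#W : ℝ) ≤ n := h.card_layer_le _
  have hUKW : #U * K * #W ≤ μ * n ^ 3 := by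
    calc #U * K * #W ≤ μ * n * n * n := by gcongr
      _ = μ * n ^ 3 := by ring
  have hWK : (#W : ℝ) ^ 2 * K ≤ μ * n ^ 3 := by
    calc (#W : ℝ) ^ 2 * K ≤ n ^ 2 * (μ * n) := by gcongr
      _ = μ * n ^ 3 := by ring
  have hW2 : (#W : ℝ) ^ 2 ≤ n ^ 2 := by gcongr
  have hμc : 12 * μ * n ^ 3 ≤ c * n ^ 3 := by gcongr
  have hcn3 : 36 * n ^ 2 ≤ c * n ^ 3 := by nlinarith [pow_pos hn 2]
  linarith [h.le_card_switchTriples σ hσ a,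
    card_switchTriples_le (h.switchTriples_subset hσ a) hKW hO U]

end LayeredMatching

section RainbowMatching

variable {X Y L C : Type*} [Fintype X] [Fintype Y]

/-- The perfect matchings of the bipartite relation `r`, as bijections. -/
noncomputable def matchings (r : X → Y → Prop) : Finset (X ≃ Y) :=
  {σ | ∀ x, r x (σ x)}

/-- The pairs of disjoint arcs of `r` of the same colour: a perfect matching of `r` is rainbow as
soon as it contains no conflict. -/
noncomputable def conflicts (r : X → Y → Prop) (col : X → Y → C) :
    Finset ((X × Y) × (X × Y)) :=
  {s | (r s.1.1 s.1.2 ∧ r s.2.1 s.2.2) ∧ (s.1.1 ≠ s.2.1 ∧ s.1.2 ≠ s.2.2) ∧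
    col s.1.1 s.1.2 = col s.2.1 s.2.2}

/-- The perfect matchings of `r` containing both arcs of `s`: the bad events of the local lemma. -/
noncomputable def matchingsThrough (r : X → Y → Prop) (s : (X × Y) × (X × Y)) : Finset (X ≃ Y) :=
  {σ ∈ matchings r | σ s.1.1 = s.1.2 ∧ σ s.2.1 = s.2.2}

/-- Two arcs sharing their source or their target. -/
def Touches (e f : X × Y) : Prop := e.1 = f.1 ∨ e.2 = f.2

/-- The conflicts with an arc touching the arc `e`. -/
noncomputable def conflictsTouching (r : X → Y → Prop) (col : X → Y → C) (e : X × Y) :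
    Finset ((X × Y) × (X × Y)) :=
  {t ∈ conflicts r col | Touches e t.1 ∨ Touches e t.2}

variable {ℓ : X → L} {ℓ' : Y → L} {r : X → Y → Prop} {col : X → Y → C} {n c μ K D : ℝ}

theorem switch_mem_of_mem_goodTriples {σ : X ≃ Y} {a : X} {O : Finset X}
    {S : Finset ((X × Y) × (X × Y))} (hS : S ⊆ conflicts r col)
    (hdisj : Disjoint S (conflictsTouching r col (a, σ a)))
    (hσ : σ ∈ matchings r \ S.biUnion (matchingsThrough r)) {p : X × X × X}
    (hp : p ∈ goodTriples r col σ a O (usedColours col σ)) :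
    switch σ a p ∈ matchings r \ S.biUnion (matchingsThrough r) := by
  obtain ⟨x, y, z⟩ := p
  obtain ⟨hsw, ⟨hnodup, -⟩, hxU, hyU, hxy⟩ := mem_filter.1 hp
  obtain ⟨hax, hxy', hyz, hza⟩ := (mem_filter.1 hsw).2
  obtain ⟨hσm, hσS⟩ := mem_sdiff.1 hσ
  have hr : ∀ w, r w (σ w) := (mem_filter.1 hσm).2
  have hU (w) : col w (σ w) ∈ usedColours col σ := mem_image_of_mem _ (mem_univ w)
  have hcases := switch_apply_cases σ hnodup
  refine mem_sdiff.2 ⟨mem_filter.2 ⟨mem_univ _, fun w ↦ ?_⟩, fun hmem ↦ ?_⟩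
  · have := hcases w
    have := hr w
    grind
  obtain ⟨⟨⟨u, b⟩, v, b'⟩, ht, htmem⟩ := mem_biUnion.1 hmem
  obtain ⟨-, (rfl : switch σ a (x, y, z) u = b), (rfl : switch σ a (x, y, z) v = b')⟩ :=
    mem_filter.1 htmem
  have htouch := disjoint_left.1 hdisj ht
  have harc (w) (hw : ¬ Touches (a, σ a) (w, switch σ a (x, y, z) w)) :
      switch σ a (x, y, z) w = σ w ∨ (w = x ∧ switch σ a (x, y, z) w = σ y) ∨
        (w = y ∧ switch σ a (x, y, z) w = σ z) := by
    have := hcases w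
    simp only [Touches] at hw
    grind
  simp only [conflictsTouching, mem_filter, hS ht, true_and, not_or] at htouch
  obtain ⟨-, ⟨huv, -⟩, hcol⟩ := (mem_filter.1 (hS ht)).2
  have hu := harc u htouch.1
  have hv := harc v htouch.2
  have hold : ¬ (switch σ a (x, y, z) u = σ u ∧ switch σ a (x, y, z) v = σ v) := fun hold ↦
    hσS (mem_biUnion.2 ⟨_, ht, mem_filter.2 ⟨hσm, hold.1.symm, hold.2.symm⟩⟩)
  have := hU u
  have := hU v
  grind

theorem IsSwitchable.card_filter_apply_eq_mul_le [Fintype L] (h : IsSwitchable ℓ ℓ' r n c)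
    (hK : ∀ l k, (#{e : X × Y | ℓ e.1 = l ∧ r e.1 e.2 ∧ col e.1 e.2 = k} : ℝ) ≤ K)
    (hLK : Fintype.card L * K ≤ μ * n) (hμ : 12 * μ ≤ c) (hcn : 36 ≤ c * n)
    {a : X} {b : Y} {O : Finset X} (hO : #O ≤ 1) {P : Finset (X ≃ Y)} (hP : P ⊆ matchings r)
    (hclosed : ∀ σ ∈ P, σ a = b → ∀ p ∈ goodTriples r col σ a O (usedColours col σ),
      switch σ a p ∈ P) :
    (#{σ ∈ P | σ a = b} : ℝ) * (c * n / 2) ≤ #P := by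
  have hlayer {σ} (hσ : σ ∈ P) (x) : ℓ' (σ x) = ℓ x :=
    (h.layer_eq ((mem_filter.1 (hP hσ)).2 x)).symm
  set W : Finset X := {x | ℓ x = ℓ a}
  have hcount := RainbowFactor.card_filter_apply_eq_mul_le P (a := a) (b := b) W
    (fun σ ↦ goodTriples r col σ a O (usedColours col σ))
    (fun σ hσ _ ↦ h.le_card_goodTriples hK hLK hμ hcn (hlayer hσ) a hO) fun σ hσ hab p hp ↦ by
      obtain ⟨hsw, ⟨hnodup, -⟩, -⟩ := mem_filter.1 hp
      have hW := mem_product.1 (h.switchTriples_subset (hlayer hσ) a hsw)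
      exact ⟨hnodup, hW.1, (mem_product.1 hW.2).1, hclosed σ hσ hab p hp⟩
  have hn2 : 0 < n ^ 2 := pow_pos (h.pos a) 2
  have hW : (#W : ℝ) ^ 2 ≤ n ^ 2 := by gcongr; exact h.card_layer_le _
  refine le_of_mul_le_mul_right ?_ hn2
  calc (#{σ ∈ P | σ a = b} : ℝ) * (c * n / 2) * n ^ 2
      = #{σ ∈ P | σ a = b} * (c / 2 * n ^ 3) := by ring
    _ ≤ #P * (#W : ℝ) ^ 2 := hcount
    _ ≤ #P * n ^ 2 := by gcongr

theorem IsSwitchable.card_matchingsThrough_mul_le [Fintype L] (h : IsSwitchable ℓ ℓ' r n c)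
    (hK : ∀ l k, (#{e : X × Y | ℓ e.1 = l ∧ r e.1 e.2 ∧ col e.1 e.2 = k} : ℝ) ≤ K)
    (hLK : Fintype.card L * K ≤ μ * n) (hμ : 12 * μ ≤ c) (hcn : 36 ≤ c * n)
    {s : (X × Y) × (X × Y)} (hs : s ∈ conflicts r col) {S : Finset ((X × Y) × (X × Y))}
    (hS : S ⊆ conflicts r col)
    (hdisj : Disjoint S (conflictsTouching r col s.1 ∪ conflictsTouching r col s.2)) :
    (#(matchingsThrough r s \ S.biUnion (matchingsThrough r)) : ℝ) * (c * n / 2) ^ 2 ≤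
      #(matchings r \ S.biUnion (matchingsThrough r)) := by
  obtain ⟨⟨u, v⟩, u', v'⟩ := s
  obtain ⟨hdisj₁, hdisj₂⟩ := disjoint_union_right.1 hdisj
  set P := matchings r \ S.biUnion (matchingsThrough r)
  have hP : P ⊆ matchings r := sdiff_subset
  have hsplit : matchingsThrough r ((u, v), u', v') \ S.biUnion (matchingsThrough r) =
      {σ ∈ {σ ∈ P | σ u' = v'} | σ u = v} := by
    ext σ
    simp only [P, mem_sdiff, mem_filter, matchingsThrough]
    tauto
  have huu' : u ≠ u' := (mem_filter.1 hs).2.2.1.1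
  have hstep₁ : (#{σ ∈ {σ ∈ P | σ u' = v'} | σ u = v} : ℝ) * (c * n / 2) ≤
      #{σ ∈ P | σ u' = v'} :=
    h.card_filter_apply_eq_mul_le hK hLK hμ hcn (card_singleton u').le
      ((filter_subset _ _).trans hP) fun σ hσ hσu p hp ↦ by
        obtain ⟨hσP, hσu'⟩ := mem_filter.1 hσ
        subst hσu
        refine mem_filter.2 ⟨switch_mem_of_mem_goodTriples hS hdisj₁ hσP hp, ?_⟩
        obtain ⟨-, ⟨hnodup, hO⟩, -⟩ := mem_filter.1 hp
        have := switch_apply_cases σ hnodup u'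
        simp only [mem_singleton] at hO
        grind
  have hstep₂ : (#{σ ∈ P | σ u' = v'} : ℝ) * (c * n / 2) ≤ #P :=
    h.card_filter_apply_eq_mul_le hK hLK hμ hcn (O := ∅) (by simp) hP fun σ hσ hσu' p hp ↦ by
      subst hσu'
      exact switch_mem_of_mem_goodTriples hS hdisj₂ hσ hp
  rw [hsplit]
  calc _ = #{σ ∈ {σ ∈ P | σ u' = v'} | σ u = v} * (c * n / 2) * (c * n / 2) := by ring
    _ ≤ #{σ ∈ P | σ u' = v'} * (c * n / 2) := by gcongr
    _ ≤ #P := hstep₂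

theorem IsSwitchable.card_touching_le (h : IsSwitchable ℓ ℓ' r n c)
    (hcard : ∀ l, Nat.card {x // ℓ x = l} = Nat.card {y // ℓ' y = l}) (e : X × Y) :
    (#{f : X × Y | r f.1 f.2 ∧ Touches e f} : ℝ) ≤ 2 * n := by
  have hX (l) : (#{x | ℓ x = l} : ℝ) ≤ n := h.card_layer_le l
  have hY (l) : (#{y | ℓ' y = l} : ℝ) ≤ n := by
    rw [← Fintype.card_subtype, ← Nat.card_eq_fintype_card, ← hcard l, Nat.card_eq_fintype_card,
      Fintype.card_subtype]
    exact hX l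
  have hsub : ({f | r f.1 f.2 ∧ Touches e f} : Finset (X × Y)) ⊆
      ({y | ℓ' y = ℓ e.1} : Finset Y).image (Prod.mk e.1) ∪
        ({x | ℓ x = ℓ' e.2} : Finset X).image (Prod.mk · e.2) := by
    rintro ⟨x, y⟩ hf
    obtain ⟨hr, hf⟩ := (mem_filter.1 hf).2
    have := h.layer_eq hr
    simp only [mem_union, mem_image, mem_filter, mem_univ, true_and, Prod.mk.injEq]
    rcases hf with rfl | rfl
    · exact .inl ⟨y, this.symm, rfl, rfl⟩
    · exact .inr ⟨x, this, rfl, rfl⟩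
  calc (#{f : X × Y | r f.1 f.2 ∧ Touches e f} : ℝ)
      ≤ #{y | ℓ' y = ℓ e.1} + #{x | ℓ x = ℓ' e.2} := mod_cast (card_le_card hsub).trans
        ((card_union_le _ _).trans (add_le_add card_image_le card_image_le))
    _ ≤ 2 * n := by linarith [hY (ℓ e.1), hX (ℓ' e.2)]

theorem card_conflictsTouching_le {e : X × Y} {d : ℝ} (hD₀ : 0 ≤ D)
    (hd : (#{f : X × Y | r f.1 f.2 ∧ Touches e f} : ℝ) ≤ d)
    (hD : ∀ k, (#{f : X × Y | r f.1 f.2 ∧ col f.1 f.2 = k} : ℝ) ≤ D) :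
    (#(conflictsTouching r col e) : ℝ) ≤ 2 * (d * D) := by
  set T : Finset (X × Y) := {f | r f.1 f.2 ∧ Touches e f}
  have hfst : (#{t ∈ conflicts r col | Touches e t.1} : ℝ) ≤ #T * D := by
    refine cast_card_le_mul_of_fibres_le (f := Prod.fst) (fun t ht ↦ ?_) fun f _ ↦ le_trans
      (mod_cast card_le_card_of_injOn Prod.snd (fun t ht ↦ ?_) fun t ht t' ht' heq ↦ ?_)
      (hD (col f.1 f.2))
    · simp only [conflicts, T, mem_filter, mem_univ, true_and] at ht ⊢
      tauto
    · simp only [conflicts, coe_filter, Set.mem_ofPred_eq, mem_filter, mem_univ, true_and] at ht ⊢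
      grind
    · exact Prod.ext ((mem_filter.1 ht).2.trans (mem_filter.1 ht').2.symm) heq
  have hswap : #{t ∈ conflicts r col | Touches e t.2} ≤ #{t ∈ conflicts r col | Touches e t.1} := by
    refine card_le_card_of_injOn Prod.swap (fun t ht ↦ ?_) Prod.swap_injective.injOn
    simp only [conflicts, coe_filter, Set.mem_ofPred_eq, mem_filter, mem_univ, true_and,
      Prod.fst_swap, Prod.snd_swap] at ht ⊢
    grind
  calc (#(conflictsTouching r col e) : ℝ)
      ≤ #{t ∈ conflicts r col | Touches e t.1} + #{t ∈ conflicts r col | Touches e t.2} := by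
        rw [conflictsTouching, filter_or]
        exact mod_cast card_union_le _ _
    _ ≤ #T * D + #T * D := add_le_add hfst (le_trans (mod_cast hswap) hfst)
    _ ≤ 2 * (d * D) := by nlinarith

theorem IsSwitchable.exists_rainbow_matching [Fintype L] (h : IsSwitchable ℓ ℓ' r n c)
    (hcard : ∀ l, Nat.card {x // ℓ x = l} = Nat.card {y // ℓ' y = l})
    (hK : ∀ l k, (#{e : X × Y | ℓ e.1 = l ∧ r e.1 e.2 ∧ col e.1 e.2 = k} : ℝ) ≤ K)
    (hLK : Fintype.card L * K ≤ μ * n) (hμ : 0 ≤ μ) (hμc : 12 * μ ≤ c) (hμc2 : 128 * μ ≤ c ^ 2)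
    (hcn : 36 ≤ c * n) :
    ∃ σ : X ≃ Y, (∀ x, r x (σ x)) ∧ Injective fun x ↦ col x (σ x) := by
  obtain ⟨σ₀, hσ₀⟩ := h.exists_matching (by linarith) hcard
  have hn : 0 ≤ n := by
    by_contra! hn
    nlinarith
  have hnb (e : X × Y) : (#(conflictsTouching r col e) : ℝ) ≤ 2 * (2 * n * (μ * n)) :=
    card_conflictsTouching_le (by positivity) (h.card_touching_le hcard e)
      fun k ↦ (card_colour_le hK k).trans hLK
  obtain ⟨σ, hσ, hσrainbow⟩ := exists_forall_notMem_of_lopsided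
    (I := {s // s ∈ conflicts r col}) (Ω₀ := matchings r) (A := fun s ↦ matchingsThrough r s)
    (nb := fun s ↦ (conflictsTouching r col s.1.1 ∪ conflictsTouching r col s.1.2).subtype _)
    (q := (c * n / 2) ^ 2) ⟨σ₀, mem_filter.2 ⟨mem_univ _, hσ₀⟩⟩ (by nlinarith) (fun s ↦ by
      have hcn2 : 128 * μ * n ^ 2 ≤ c ^ 2 * n ^ 2 := by gcongr
      have hsum : (#((conflictsTouching r col s.1.1 ∪ conflictsTouching r col s.1.2).subtype
          (· ∈ conflicts r col)) : ℝ) ≤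
          #(conflictsTouching r col s.1.1) + #(conflictsTouching r col s.1.2) := mod_cast
        (card_subtype _ _).trans_le ((card_filter_le _ _).trans (card_union_le _ _))
      linarith [hnb s.1.1, hnb s.1.2]) fun s S hS ↦ by
      have hmap : S.biUnion (fun s ↦ matchingsThrough r s) =
          (S.map (Embedding.subtype _)).biUnion (matchingsThrough r) := by
        rw [map_eq_image, image_biUnion]
        rfl
      rw [hmap]
      refine h.card_matchingsThrough_mul_le hK hLK hμc hcn s.2
        (fun t ht ↦ property_of_mem_map_subtype S ht) (disjoint_left.2 fun t ht hts ↦ ?_)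
      obtain ⟨t, htS, rfl⟩ := mem_map.1 ht
      exact disjoint_left.1 hS htS (mem_subtype.2 hts)
  have hσ : ∀ x, r x (σ x) := (mem_filter.1 hσ).2
  refine ⟨σ, hσ, fun x y hxy ↦ by_contra fun hne ↦ ?_⟩
  exact hσrainbow ⟨((x, σ x), y, σ y), mem_filter.2 ⟨mem_univ _, ⟨hσ x, hσ y⟩,
    ⟨hne, σ.injective.ne hne⟩, hxy⟩⟩ (mem_filter.2 ⟨mem_filter.2 ⟨mem_univ _, hσ⟩, rfl, rfl⟩)

end RainbowMatching

/-! ### Degrees and arc counts -/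

section Arcs

variable {α β γ δ : Type*} {r : α → β → Prop} {X X' : Finset α} {Y Z : Finset β} {a : α} {D : ℝ}

/-- The number of out-neighbours of `a` in `Y`. In-degrees are out-degrees for `flip r`. -/
noncomputable def deg (r : α → β → Prop) (Y : Finset β) (a : α) : ℝ := #{y ∈ Y | r a y}

/-- The number of arcs of `r` from `X` to `Y`. -/
noncomputable def arcs (r : α → β → Prop) (X : Finset α) (Y : Finset β) : ℝ := ∑ x ∈ X, deg r Y x

theorem cast_card_compl [Fintype α] (X : Finset α) :
    (#Xᶜ : ℝ) = Fintype.card α - #X := by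
  rw [card_compl, Nat.cast_sub (card_le_univ X)]

theorem deg_nonneg : 0 ≤ deg r Y a := Nat.cast_nonneg _

theorem deg_le_card : deg r Y a ≤ #Y := Nat.cast_le.2 (card_filter_le _ _)

theorem deg_le_add_card_sdiff : deg r Y a ≤ deg r Z a + #(Y \ Z) := by
  have hsub : {y ∈ Y | r a y} ⊆ {y ∈ Z | r a y} ∪ Y \ Z := fun y ↦ by
    simp only [mem_union, mem_filter, mem_sdiff]
    tauto
  unfold deg
  exact mod_cast (card_le_card hsub).trans (card_union_le _ _)

theorem deg_mono {s : α → β → Prop} (hrs : ∀ a b, r a b → s a b) (hYZ : Y ⊆ Z) :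
    deg r Y a ≤ deg s Z a :=
  Nat.cast_le.2 <| card_le_card fun _ hy ↦
    mem_filter.2 ⟨hYZ (mem_filter.1 hy).1, hrs _ _ (mem_filter.1 hy).2⟩

theorem deg_add_deg_compl : deg r Y a + deg rᶜ Y a = #Y := by
  rw [← card_filter_add_card_filter_not (r a), Nat.cast_add, deg, deg]
  congr

theorem deg_add_deg_compl_set [Fintype β] : deg r Y a + deg r Yᶜ a = deg r univ a := by
  rw [deg, deg, deg, ← union_compl Y, filter_union, card_union_of_disjoint
    (disjoint_filter_filter disjoint_compl_right), Nat.cast_add]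

theorem deg_map (f : γ ↪ β) (Y : Finset γ) : deg r (Y.map f) a = deg (fun a y ↦ r a (f y)) Y a := by
  rw [deg, filter_map, card_map]
  rfl

theorem deg_subtype (r : α → β → Prop) (Y : Finset β) (a : α) :
    deg (fun a (y : Y) ↦ r a y) univ a = deg r Y a := by
  conv_rhs => rw [← Y.attach_map_val]
  exact (deg_map (.subtype _) univ).symm

theorem deg_comp_equiv [Fintype β] [Fintype γ] (e : γ ≃ β) :
    deg (fun a y ↦ r a (e y)) univ a = deg r univ a := by
  rw [← map_univ_equiv e, deg_map]
  rfl

theorem arcs_mono {s : α → β → Prop} (hrs : ∀ a b, r a b → s a b) (hX : X ⊆ X') (hY : Y ⊆ Z) :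
    arcs r X Y ≤ arcs s X' Z :=
  (sum_le_sum fun _ _ ↦ deg_mono hrs hY).trans
    (sum_le_sum_of_subset_of_nonneg hX fun _ _ _ ↦ deg_nonneg)

theorem card_mul_le_arcs (h : ∀ x ∈ X, D ≤ deg r Y x) : #X * D ≤ arcs r X Y := by
  simpa [arcs] using card_nsmul_le_sum X _ D h

theorem arcs_le_card_mul (h : ∀ x ∈ X, deg r Y x ≤ D) : arcs r X Y ≤ #X * D := by
  simpa [arcs] using sum_le_card_nsmul X _ D h

theorem arcs_flip : arcs (flip r) Y X = arcs r X Y := by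
  unfold arcs deg
  exact mod_cast (sum_card_bipartiteAbove_eq_sum_card_bipartiteBelow r).symm

theorem arcs_map (f : γ ↪ α) (g : δ ↪ β) (X : Finset γ) (Y : Finset δ) :
    arcs r (X.map f) (Y.map g) = arcs (fun x y ↦ r (f x) (g y)) X Y := by
  rw [arcs, sum_map]
  exact sum_congr rfl fun x _ ↦ deg_map g Y

theorem arcs_eq_card : arcs r X Y = #{p ∈ X ×ˢ Y | r p.1 p.2} := by
  rw [arcs, card_filter, sum_product]
  push_cast
  exact sum_congr rfl fun x _ ↦ by rw [deg, card_filter]; push_cast; rfl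

theorem card_filter_deg_lt_mul_le (r : α → β → Prop) (X : Finset α) (Y : Finset β) (d : ℝ) :
    #{a ∈ X | deg r Y a < d} * (#Y - d) ≤ arcs rᶜ X Y := by
  refine (card_mul_le_arcs fun a ha ↦ ?_).trans
    (arcs_mono (fun _ _ h ↦ h) (filter_subset _ X) subset_rfl)
  linarith [(mem_filter.1 ha).2, deg_add_deg_compl (r := r) (Y := Y) (a := a)]

end Arcs

section TripleCount

variable {α β : Type*} [Fintype α] [Fintype β] {r : α → β → Prop} {d e : ℝ}

theorem card_mul_le_card_switchTriples (σ : α ≃ β) {a : α} {M : ℝ} {Z : Finset α}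
    (hZ : ∀ z ∈ Z, r z (σ a))
    (hM : ∀ z ∈ Z, M ≤ arcs r {x | r a (σ x)} {y | r (σ.symm y) (σ z)}) :
    #Z * M ≤ #(switchTriples r σ a) := by
  set E : α → Finset (α × β) := fun z ↦
    {p ∈ ({x | r a (σ x)} : Finset α) ×ˢ ({y | r (σ.symm y) (σ z)} : Finset β) | r p.1 p.2}
  have hinj : #(Z.sigma E) ≤ #(switchTriples r σ a) := by
    refine card_le_card_of_injOn (fun s ↦ (s.2.1, σ.symm s.2.2, s.1)) ?_ ?_
    · rintro ⟨z, x, y⟩ hs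
      simp only [E, coe_sigma, Set.mem_sigma_iff, mem_coe, mem_filter, mem_product, mem_univ,
        true_and] at hs
      simp [switchTriples, hs, hZ z hs.1]
    · rintro ⟨z, x, y⟩ - ⟨z', x', y'⟩ - heq
      simp_all
  calc #Z * M ≤ ∑ z ∈ Z, (#(E z) : ℝ) := by
        rw [← nsmul_eq_mul]
        exact card_nsmul_le_sum _ _ _ fun z hz ↦ (hM z hz).trans_eq arcs_eq_card
    _ = #(Z.sigma E) := by rw [card_sigma, Nat.cast_sum]
    _ ≤ #(switchTriples r σ a) := mod_cast hinj

theorem card_out_comp (σ : α ≃ β) (a : α) : (#{x | r a (σ x)} : ℝ) = deg r univ a :=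
  deg_comp_equiv σ

theorem card_in_comp (σ : α ≃ β) (b : β) : (#{y | r (σ.symm y) b} : ℝ) = deg (flip r) univ b :=
  deg_comp_equiv (r := flip r) σ.symm

theorem mul_le_card_switchTriples (σ : α ≃ β) (a : α) (he : 0 ≤ e)
    (hout : ∀ x, d ≤ deg r univ x) (hin : ∀ y, d ≤ deg (flip r) univ y)
    (harcs : ∀ X Y, d ≤ #X → d ≤ #Y → e ≤ arcs r X Y) : d * e ≤ #(switchTriples r σ a) := by
  refine le_trans (mul_le_mul_of_nonneg_right (hin (σ a)) he) <|
    card_mul_le_card_switchTriples σ (Z := {z | r z (σ a)}) (fun z hz ↦ (mem_filter.1 hz).2)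
      fun z _ ↦ harcs _ _ ?_ ?_
  · exact (hout a).trans_eq (card_out_comp σ a).symm
  · exact (hin (σ z)).trans_eq (card_in_comp σ _).symm

theorem le_card_filter_of_few_low {X : Finset α} {p : α → Prop} {D : ℝ} (hX : D ≤ #X)
    (hp : (#{x | ¬ p x} : ℝ) ≤ D / 2) : D / 2 ≤ #{x ∈ X | p x} := by
  have hsplit : (#{x ∈ X | p x} : ℝ) + #{x ∈ X | ¬ p x} = #X :=
    mod_cast card_filter_add_card_filter_not p
  have hle : (#{x ∈ X | ¬ p x} : ℝ) ≤ #{x | ¬ p x} :=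
    mod_cast card_le_card (filter_subset_filter _ (subset_univ X))
  linarith

theorem mul_le_card_switchTriples_of_few_low {D : ℝ} (hD : 0 ≤ D) (σ : α ≃ β) (a : α)
    (hout : ∀ x, D ≤ deg r univ x) (hin : ∀ y, D ≤ deg (flip r) univ y)
    (hfew_out : (#{x | ¬ 3 / 4 * (Fintype.card β : ℝ) ≤ deg r univ x} : ℝ) ≤ D / 2)
    (hfew_in : (#{y | ¬ 3 / 4 * (Fintype.card β : ℝ) ≤ deg (flip r) univ y} : ℝ) ≤ D / 2) :
    D / 2 * (D / 2 * (Fintype.card β / 2)) ≤ #(switchTriples r σ a) := by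
  set m : ℝ := (Fintype.card β : ℝ)
  set Z : Finset α := {z ∈ {z | r z (σ a)} | 3 / 4 * m ≤ deg (flip r) univ (σ z)}
  have hZ : D / 2 ≤ #Z := by
    refine le_card_filter_of_few_low (hin (σ a)) (le_trans (le_of_eq ?_) hfew_in)
    rw [← map_univ_equiv σ, filter_map, card_map]
    rfl
  refine (mul_le_mul_of_nonneg_right hZ (by positivity)).trans <|
    card_mul_le_card_switchTriples σ (fun z hz ↦ (mem_filter.1 (mem_filter.1 hz).1).2) fun z hz ↦ ?_
  set Y : Finset β := {y | r (σ.symm y) (σ z)}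
  have hY : 3 / 4 * m ≤ #Y := (mem_filter.1 hz).2.trans_eq (card_in_comp σ _).symm
  set X : Finset α := {x ∈ {x | r a (σ x)} | 3 / 4 * m ≤ deg r univ x}
  have hX : D / 2 ≤ #X := le_card_filter_of_few_low
    ((hout a).trans_eq (card_out_comp σ a).symm) hfew_out
  have hdeg (x) (hx : x ∈ X) : m / 2 ≤ deg r Y x := by
    have hdiff := deg_le_add_card_sdiff (r := r) (Y := univ) (Z := Y) (a := x)
    rw [← compl_eq_univ_sdiff, cast_card_compl] at hdiff
    linarith [(mem_filter.1 hx).2]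
  calc D / 2 * (m / 2) ≤ #X * (m / 2) := by gcongr
    _ ≤ arcs r X Y := card_mul_le_arcs hdeg
    _ ≤ _ := arcs_mono (fun _ _ h ↦ h) (filter_subset _ _) subset_rfl

end TripleCount

section LayerMatchings

variable {L V W C : Type*}

theorem exists_layer_equiv {α β : L → Type*} {σ : (Σ l, α l) ≃ Σ l, β l}
    (hσ : ∀ x, (σ x).1 = x.1) (l : L) : ∃ τ : α l ≃ β l, ∀ a, σ ⟨l, a⟩ = ⟨l, τ a⟩ := by
  have hex (a : α l) : ∃ b : β l, σ ⟨l, a⟩ = ⟨l, b⟩ := by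
    rcases hx : σ ⟨l, a⟩ with ⟨l', b⟩
    obtain rfl : l' = l := by simpa [hx] using hσ ⟨l, a⟩
    exact ⟨b, rfl⟩
  choose f hf using hex
  have hinj : Injective f := fun a a' h ↦ by
    have := σ.injective ((hf a).trans (h ▸ (hf a').symm))
    simpa using this
  have hsurj : Surjective f := fun b ↦ by
    rcases hx : σ.symm ⟨l, b⟩ with ⟨l', a⟩
    have hσx : σ ⟨l', a⟩ = ⟨l, b⟩ := by rw [← hx, σ.apply_symm_apply]
    obtain rfl : l = l' := by simpa [hσx] using hσ ⟨l', a⟩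
    exact ⟨a, by simpa [hf] using hσx⟩
  exact ⟨.ofBijective f ⟨hinj, hsurj⟩, hf⟩

/-- The disjoint union of the restrictions of `r` to the pairs `A l`, `B l`. -/
def LayeredRel (r : V → W → Prop) (A : L → Finset V) (B : L → Finset W) (x : Σ l, A l)
    (y : Σ l, B l) : Prop := x.1 = y.1 ∧ r x.2 y.2

variable {A : L → Finset V} {B : L → Finset W} {r : V → W → Prop} {col : V → W → C} {n c μ K : ℝ}

theorem isSwitchable_layeredRel [Fintype L] (hn : ∀ l, (#(A l) : ℝ) ≤ n)
    (htriples : ∀ l (τ : A l ≃ B l) (a : A l),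
      c * n ^ 3 ≤ #(switchTriples (fun (x : A l) (y : B l) ↦ r x y) τ a)) :
    IsSwitchable Sigma.fst Sigma.fst (LayeredRel r A B) n c := by
  refine ⟨And.left, fun l ↦ ?_, fun σ hσ ↦ ?_⟩
  · rw [← Fintype.card_subtype, Fintype.card_congr (.sigmaSubtype l), Fintype.card_coe]
    exact hn l
  · rintro ⟨l, a⟩
    obtain ⟨τ, hτ⟩ := exists_layer_equiv hσ l
    have hr (x y) : LayeredRel r A B ⟨l, x⟩ (σ ⟨l, y⟩) ↔ r x (τ y) := by
      rw [hτ]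
      simp [LayeredRel]
    refine (htriples l τ a).trans (mod_cast card_le_card_of_injOn
      (fun p ↦ (⟨l, p.1⟩, ⟨l, p.2.1⟩, ⟨l, p.2.2⟩)) (fun p hp ↦ ?_) ?_)
    · simpa [switchTriples, hr] using hp
    · rintro ⟨x, y, z⟩ - ⟨x', y', z'⟩ - heq
      simpa using heq

theorem card_layeredRel_colour_le [Fintype L] [Fintype V] [Fintype W] (l : L) (k : C) :
    #{e : (Σ l, A l) × Σ l, B l |
        e.1.1 = l ∧ LayeredRel r A B e.1 e.2 ∧ col e.1.2 e.2.2 = k} ≤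
      #{e : V × W | r e.1 e.2 ∧ col e.1 e.2 = k} := by
  refine card_le_card_of_injOn (fun e ↦ (e.1.2, e.2.2)) (fun e he ↦ ?_) ?_
  · have he := (mem_filter.1 he).2
    exact mem_filter.2 ⟨mem_univ _, he.2.1.2, he.2.2⟩
  · rintro ⟨⟨l₁, x⟩, l₂, y⟩ he ⟨⟨l₃, x'⟩, l₄, y'⟩ he' heq
    obtain ⟨rfl, ⟨h, -⟩, -⟩ := (mem_filter.1 he).2
    obtain ⟨h₁, ⟨h', -⟩, -⟩ := (mem_filter.1 he').2
    dsimp only at h h' h₁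
    subst h h₁ h'
    simp only [Prod.mk.injEq, ← Subtype.ext_iff] at heq
    rw [heq.1, heq.2]

theorem exists_rainbow_layer_matchings [Fintype L] [Fintype V] [Fintype W]
    (hcard : ∀ l, #(A l) = #(B l)) (hn : ∀ l, (#(A l) : ℝ) ≤ n)
    (htriples : ∀ l (τ : A l ≃ B l) (a : A l),
      c * n ^ 3 ≤ #(switchTriples (fun (x : A l) (y : B l) ↦ r x y) τ a))
    (hK : ∀ k, (#{e : V × W | r e.1 e.2 ∧ col e.1 e.2 = k} : ℝ) ≤ K)
    (hLK : Fintype.card L * K ≤ μ * n) (hμ : 0 ≤ μ) (hμc : 12 * μ ≤ c) (hμc2 : 128 * μ ≤ c ^ 2)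
    (hcn : 36 ≤ c * n) :
    ∃ τ : ∀ l, A l ≃ B l, (∀ l (a : A l), r a (τ l a)) ∧
      Injective fun x : Σ l, A l ↦ col x.2 (τ x.1 x.2) := by
  have hfibres (l) :
      Nat.card {x : Σ l, A l // x.1 = l} = Nat.card {y : Σ l, B l // y.1 = l} := by
    rw [Nat.card_congr (.sigmaSubtype l), Nat.card_congr (.sigmaSubtype l)]
    simp [hcard]
  have hcolour (l) (k : C) := (Nat.cast_le (α := ℝ).2
    (card_layeredRel_colour_le (A := A) (B := B) l k)).trans (hK k)
  obtain ⟨σ, hσ, hrainbow⟩ := (isSwitchable_layeredRel hn htriples).exists_rainbow_matching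
    (col := fun x y ↦ col x.2 y.2) hfibres (fun l k ↦ by convert hcolour l k) hLK hμ hμc hμc2 hcn
  choose τ hτ using exists_layer_equiv fun x ↦ (hσ x).1.symm
  have hval (x : Σ l, A l) : ((σ x).2 : W) = τ x.1 x.2 := by rw [hτ x.1 x.2]
  exact ⟨τ, fun l a ↦ hval ⟨l, a⟩ ▸ (hσ ⟨l, a⟩).2, by simpa only [hval] using hrainbow⟩

end LayerMatchings

/-! ### The extremal structure of a Dirac digraph -/

theorem cast_card_sdiff_sub_cast_card_sdiff {V : Type*} (A B : Finset V) :
    (#(A \ B) : ℝ) - #(B \ A) = #A - #B := by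
  have hA : (#(A \ B) : ℝ) + #(A ∩ B) = #A := mod_cast card_sdiff_add_card_inter A B
  have hB : (#(B \ A) : ℝ) + #(B ∩ A) = #B := mod_cast card_sdiff_add_card_inter B A
  rw [inter_comm] at hB
  linarith

theorem exists_balanced_between {V : Type*} {A₀ B₀ S T : Finset V} (hle : #B₀ ≤ #A₀)
    (hS : S ⊆ A₀) (hT : B₀ ⊆ T) :
    ∃ A B, S ⊆ A ∧ A ⊆ A₀ ∧ B₀ ⊆ B ∧ B ⊆ T ∧ #B₀ ≤ #A ∧ #B ≤ #A₀ ∧ #B ≤ #A ∧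
      (#B = #A ∨ A = S ∧ B = T) := by
  rcases le_total #S #B₀ with hSB | hBS
  · obtain ⟨A, hSA, hAA, hA⟩ := exists_subsuperset_card_eq hS hSB hle
    exact ⟨A, B₀, hSA, hAA, subset_rfl, hT, hA.ge, hle, hA.ge, .inl hA.symm⟩
  · rcases le_total #S #T with hST | hTS
    · obtain ⟨B, hBB, hBT, hB⟩ := exists_subsuperset_card_eq hT hBS hST
      exact ⟨S, B, subset_rfl, hS, hBB, hBT, hBS, hB ▸ card_le_card hS, hB.le, .inl hB⟩
    · exact ⟨S, T, subset_rfl, hS, hT, subset_rfl, hBS, hTS.trans (card_le_card hS), hTS,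
        .inr ⟨rfl, rfl⟩⟩

section Extremal

variable {V : Type*} [Fintype V] {r : V → V → Prop} {X Y Z A B A₀ B₀ : Finset V} {ε : ℝ}

local notation "N" => (Fintype.card V : ℝ)

/-- A digraph all of whose in- and out-degrees are at least half the number of vertices. -/
structure IsDirac (r : V → V → Prop) : Prop where
  half_le_deg : ∀ v, N / 2 ≤ deg r univ v
  half_le_deg_flip : ∀ v, N / 2 ≤ deg (flip r) univ v

/-- A pair of sets between which almost all arcs are present and no in- or out-degree is tiny. -/
structure IsCluster (r : V → V → Prop) (A B : Finset V) : Prop where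
  le_deg : ∀ a ∈ A, N / 2000 ≤ deg r B a
  le_deg_flip : ∀ b ∈ B, N / 2000 ≤ deg (flip r) A b
  arcs_compl_le : arcs rᶜ A B ≤ 6 / 10 ^ 8 * N ^ 2

/-- The extremal structure: `r` is essentially the disjoint union of the clusters `A → B` and
`Aᶜ → Bᶜ`. If the clusters are unbalanced, then the degrees from `A` to `Bᶜ` are small, so that
arcs from `A` to `Bᶜ` can be chosen greedily to balance them. -/
structure IsExtremalPair (r : V → V → Prop) (A B : Finset V) : Prop where
  card_le : #B ≤ #A
  card_left : |#A - N / 2| ≤ 2 / 10 ^ 8 * N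
  card_right : |#B - N / 2| ≤ 2 / 10 ^ 8 * N
  isCluster : IsCluster r A B
  isCluster_compl : IsCluster r Aᶜ Bᶜ
  cross : #B = #A ∨
    (∀ a ∈ A, deg r Bᶜ a ≤ N / 500) ∧ ∀ b ∈ Bᶜ, deg (flip r) A b ≤ N / 500

/-- A first approximation to the extremal structure, without control of individual degrees. -/
structure IsNearSplit (r : V → V → Prop) (X Y : Finset V) : Prop where
  card_left : |#X - N / 2| ≤ 2 / 10 ^ 9 * N
  card_right : |#Y - N / 2| ≤ 2 / 10 ^ 9 * N
  arcs_compl_le : arcs rᶜ X Y ≤ N ^ 2 / 10 ^ 9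
  arcs_compl_compl_le : arcs rᶜ Xᶜ Yᶜ ≤ N ^ 2 / 10 ^ 9

/-- `A` is close to `X`, and it sorts the vertices according to where they have out-neighbours:
those in `A` send arcs to `Y`, the others to `Yᶜ`. -/
structure IsSorting (r : V → V → Prop) (X Y : Finset V) (ε : ℝ) (A : Finset V) : Prop where
  le_deg : ∀ a ∈ A, N / 1000 ≤ deg r Y a
  le_deg_compl : ∀ a ∉ A, N / 1000 ≤ deg r Yᶜ a
  card_sdiff_le : #(A \ X) ≤ ε * N
  card_sdiff_le' : #(X \ A) ≤ ε * N

theorem arcs_le_add_card_sdiff (A B X Y : Finset V) :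
    arcs r A B ≤ arcs r X Y + (#(A \ X) + #(B \ Y)) * N := by
  have hmeet : ∑ x ∈ A ∩ X, deg r B x ≤ arcs r X Y + N * #(B \ Y) := by
    calc ∑ x ∈ A ∩ X, deg r B x ≤ ∑ x ∈ A ∩ X, (deg r Y x + #(B \ Y)) :=
          sum_le_sum fun _ _ ↦ deg_le_add_card_sdiff
      _ ≤ ∑ x ∈ X, deg r Y x + N * #(B \ Y) := by
          rw [sum_add_distrib, sum_const, nsmul_eq_mul]
          have hle : (#(A ∩ X) : ℝ) ≤ N := Nat.cast_le.2 (card_le_univ (A ∩ X))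
          gcongr
          exacts [fun _ _ _ ↦ deg_nonneg, inter_subset_right]
  have hdiff : arcs r (A \ X) B ≤ #(A \ X) * N :=
    arcs_le_card_mul fun _ _ ↦ deg_le_card.trans (Nat.cast_le.2 (card_le_univ B))
  rw [arcs] at hdiff
  rw [arcs, ← sum_inter_add_sum_sdiff A X]
  linarith

namespace IsDirac

theorem flip (h : IsDirac r) : IsDirac (flip r) := ⟨h.half_le_deg_flip, h.half_le_deg⟩

theorem le_card_compl (h : IsDirac r) (hX : N / 2 ≤ #X) (hXZ : arcs r X Z ≤ N ^ 2 / 10 ^ 9) :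
    N / 2 - 2 / 10 ^ 9 * N ≤ #Zᶜ := by
  have hmul : #X * (N / 2 - #Zᶜ) ≤ arcs r X Z := card_mul_le_arcs fun x _ ↦ by
    linarith [h.half_le_deg x, deg_add_deg_compl_set (r := r) (Y := Z) (a := x),
      deg_le_card (r := r) (Y := Zᶜ) (a := x)]
  by_contra! hlt
  have hpos : 0 < N := by linarith [(Nat.cast_nonneg _ : (0 : ℝ) ≤ #Zᶜ)]
  nlinarith [hpos]

theorem arcs_compl_le (h : IsDirac r) (hZ : N / 2 ≤ #Z) : arcs rᶜ X Zᶜ ≤ arcs r X Z :=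
  sum_le_sum fun x _ ↦ by
    linarith [h.half_le_deg x, deg_add_deg_compl_set (r := r) (Y := Z) (a := x),
      deg_add_deg_compl (r := r) (Y := Zᶜ) (a := x), cast_card_compl Z]

theorem isNearSplit (h : IsDirac r) (hX : N / 2 ≤ #X) (hZ : N / 2 ≤ #Z)
    (hXZ : arcs r X Z ≤ N ^ 2 / 10 ^ 9) : IsNearSplit r X Zᶜ := by
  have hZX : arcs (_root_.flip r) Z X ≤ N ^ 2 / 10 ^ 9 := arcs_flip.trans_le hXZ
  have hX' := h.flip.le_card_compl hZ hZX
  have hZ' := h.le_card_compl hX hXZ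
  have hN : (0 : ℝ) ≤ N := Nat.cast_nonneg _
  rw [cast_card_compl] at hX' hZ'
  refine ⟨?_, ?_, (h.arcs_compl_le hZ).trans hXZ, ?_⟩
  · rw [abs_le]
    constructor <;> linarith
  · rw [cast_card_compl, abs_le]
    constructor <;> linarith
  · rw [compl_compl, ← arcs_flip]
    exact (h.flip.arcs_compl_le hX).trans hZX

end IsDirac

namespace IsNearSplit

theorem compl (h : IsNearSplit r X Y) : IsNearSplit r Xᶜ Yᶜ := by
  refine ⟨?_, ?_, h.arcs_compl_compl_le, by simpa only [compl_compl] using h.arcs_compl_le⟩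
  · rw [cast_card_compl, abs_sub_comm]
    convert h.card_left using 2
    ring
  · rw [cast_card_compl, abs_sub_comm]
    convert h.card_right using 2
    ring

theorem flip (h : IsNearSplit r X Y) : IsNearSplit (flip r) Y X :=
  ⟨h.card_right, h.card_left, arcs_flip.trans_le h.arcs_compl_le,
    arcs_flip.trans_le h.arcs_compl_compl_le⟩

theorem card_filter_deg_lt_le [Nonempty V] (h : IsNearSplit r X Y) :
    (#{a ∈ X | deg r Y a < N / 1000} : ℝ) ≤ 4 / 10 ^ 9 * N := by
  have hN : 0 < N := Nat.cast_pos.2 Fintype.card_pos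
  have hY : N / 4 ≤ #Y - N / 1000 := by linarith [(abs_le.1 h.card_right).1]
  refine le_of_mul_le_mul_right ?_ (by positivity : 0 < N / 4)
  calc #{a ∈ X | deg r Y a < N / 1000} * (N / 4)
      ≤ #{a ∈ X | deg r Y a < N / 1000} * (#Y - N / 1000) := by gcongr
    _ ≤ N ^ 2 / 10 ^ 9 := (card_filter_deg_lt_mul_le r X Y _).trans h.arcs_compl_le
    _ = 4 / 10 ^ 9 * N * (N / 4) := by ring

theorem exists_isSorting [Nonempty V] (h : IsNearSplit r X Y) (hr : IsDirac r) :
    ∃ A, IsSorting r X Y (4 / 10 ^ 9) A := by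
  refine ⟨({a | a ∈ X ∧ N / 1000 ≤ deg r Y a ∨ deg r Yᶜ a < N / 1000} : Finset V), ?_, ?_, ?_, ?_⟩
  · intro a ha
    rcases (mem_filter.1 ha).2 with ha | ha
    · exact ha.2
    · linarith [hr.half_le_deg a, deg_add_deg_compl_set (r := r) (Y := Y) (a := a),
        (Nat.cast_nonneg _ : 0 ≤ N)]
  · intro a ha
    simp only [mem_filter_univ, not_or, not_lt] at ha
    exact ha.2
  · refine le_trans (mod_cast card_le_card fun a ha ↦ ?_) h.compl.card_filter_deg_lt_le
    simp only [mem_sdiff, mem_filter, mem_univ, true_and, mem_compl] at ha ⊢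
    tauto
  · refine le_trans (mod_cast card_le_card fun a ha ↦ ?_) h.card_filter_deg_lt_le
    simp only [mem_sdiff, mem_filter, mem_univ, true_and, ← not_le] at ha ⊢
    tauto

end IsNearSplit

theorem IsSorting.compl (h : IsSorting r X Y ε A) : IsSorting r Xᶜ Yᶜ ε Aᶜ := by
  refine ⟨fun a ha ↦ h.le_deg_compl a (mem_compl.1 ha), fun a ha ↦ ?_, ?_, ?_⟩
  · rw [compl_compl]
    exact h.le_deg a (by simpa using ha)
  · rw [compl_sdiff_compl]
    exact h.card_sdiff_le'
  · rw [compl_sdiff_compl]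
    exact h.card_sdiff_le

theorem IsSorting.of_card_sdiff_le {δ : ℝ} (h : IsSorting r X Y ε A₀)
    (hA : ∀ a ∈ A, N / 1000 ≤ deg r Y a) (hA' : ∀ a ∉ A, N / 1000 ≤ deg r Yᶜ a)
    (hsdiff : #(A \ A₀) ≤ δ * N) (hsdiff' : #(A₀ \ A) ≤ δ * N) : IsSorting r X Y (ε + δ) A := by
  have htri (P Q R : Finset V) : (#(P \ R) : ℝ) ≤ #(P \ Q) + #(Q \ R) :=
    mod_cast (card_le_card (sdiff_triangle P Q R)).trans (card_union_le _ _)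
  exact ⟨hA, hA', by linarith [htri A A₀ X, h.card_sdiff_le],
    by linarith [htri X A₀ A, h.card_sdiff_le']⟩

theorem IsSorting.abs_card_sub_le (h : IsSorting r X Y ε A) : |(#A - #X : ℝ)| ≤ ε * N := by
  rw [← cast_card_sdiff_sub_cast_card_sdiff, abs_sub_le_iff]
  constructor <;> linarith [h.card_sdiff_le, h.card_sdiff_le',
    (Nat.cast_nonneg _ : (0 : ℝ) ≤ #(A \ X)), (Nat.cast_nonneg _ : (0 : ℝ) ≤ #(X \ A))]

theorem IsNearSplit.exists_isSorting_balanced (h : IsNearSplit r X Y)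
    (hA : IsSorting r X Y (4 / 10 ^ 9) A₀) (hB : IsSorting (_root_.flip r) Y X (4 / 10 ^ 9) B₀)
    (hle : #B₀ ≤ #A₀) :
    ∃ A B, IsSorting r X Y (16 / 10 ^ 9) A ∧ IsSorting (_root_.flip r) Y X (16 / 10 ^ 9) B ∧
      #B ≤ #A ∧ (#B = #A ∨ (∀ a ∈ A, deg r Yᶜ a < N / 1000) ∧
        ∀ b ∉ B, deg (_root_.flip r) X b < N / 1000) := by
  obtain ⟨A, B, hSA, hAA, hBB, hBT, hBA, hBA', hcard, hor⟩ := exists_balanced_between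
    (S := {a | deg r Yᶜ a < N / 1000}) (T := {b | N / 1000 ≤ deg (_root_.flip r) X b}) hle
    (fun a ha ↦ by_contra fun h ↦ (mem_filter.1 ha).2.not_ge (hA.le_deg_compl a h))
    (fun b hb ↦ mem_filter.2 ⟨mem_univ b, hB.le_deg b hb⟩)
  have hA₀X := abs_le.1 hA.abs_card_sub_le
  have hB₀Y := abs_le.1 hB.abs_card_sub_le
  have hX := abs_le.1 h.card_left
  have hY := abs_le.1 h.card_right
  have := (Nat.cast_nonneg _ : 0 ≤ N)
  have hAsub : (#(A \ A₀) : ℝ) = 0 := by simp [hAA]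
  have hBsub : (#(B₀ \ B) : ℝ) = 0 := by simp [hBB]
  have hAdiff : #(A₀ \ A) ≤ 12 / 10 ^ 9 * N := by
    have : (#B₀ : ℝ) ≤ #A := mod_cast hBA
    linarith [cast_card_sdiff_sub_cast_card_sdiff A₀ A]
  have hBdiff : #(B \ B₀) ≤ 12 / 10 ^ 9 * N := by
    have : (#B : ℝ) ≤ #A₀ := mod_cast hBA'
    linarith [cast_card_sdiff_sub_cast_card_sdiff B B₀]
  refine ⟨A, B, ?_, ?_, hcard, hor.imp_right ?_⟩
  · convert hA.of_card_sdiff_le (δ := 12 / 10 ^ 9) (fun a ha ↦ hA.le_deg a (hAA ha))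
      (fun a ha ↦ ?_) (by rw [hAsub]; positivity) hAdiff using 1
    · norm_num
    · exact not_lt.1 fun h ↦ ha (hSA (mem_filter.2 ⟨mem_univ a, h⟩))
  · convert hB.of_card_sdiff_le (δ := 12 / 10 ^ 9) (fun b hb ↦ (mem_filter.1 (hBT hb)).2)
      (fun b hb ↦ hB.le_deg_compl b fun h ↦ hb (hBB h)) hBdiff (by rw [hBsub]; positivity) using 1
    norm_num
  · rintro ⟨rfl, rfl⟩
    simp

theorem IsSorting.isCluster (hA : IsSorting r X Y (16 / 10 ^ 9) A)
    (hB : IsSorting (flip r) Y X (16 / 10 ^ 9) B) (hXY : arcs rᶜ X Y ≤ N ^ 2 / 10 ^ 9) :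
    IsCluster r A B where
  le_deg a ha := by
    linarith [hA.le_deg a ha, hB.card_sdiff_le', (Nat.cast_nonneg _ : 0 ≤ N),
      deg_le_add_card_sdiff (r := r) (Y := Y) (Z := B) (a := a)]
  le_deg_flip b hb := by
    linarith [hB.le_deg b hb, hA.card_sdiff_le', (Nat.cast_nonneg _ : 0 ≤ N),
      deg_le_add_card_sdiff (r := flip r) (Y := X) (Z := A) (a := b)]
  arcs_compl_le :=
    calc arcs rᶜ A B ≤ arcs rᶜ X Y + (#(A \ X) + #(B \ Y)) * N := arcs_le_add_card_sdiff A B X Y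
      _ ≤ N ^ 2 / 10 ^ 9 + (16 / 10 ^ 9 * N + 16 / 10 ^ 9 * N) * N := by
          gcongr
          exacts [hA.card_sdiff_le, hB.card_sdiff_le]
      _ ≤ 6 / 10 ^ 8 * N ^ 2 := by linarith [sq_nonneg N]

theorem IsNearSplit.exists_isExtremalPair (h : IsNearSplit r X Y)
    (hA₀ : IsSorting r X Y (4 / 10 ^ 9) A₀) (hB₀ : IsSorting (_root_.flip r) Y X (4 / 10 ^ 9) B₀)
    (hle : #B₀ ≤ #A₀) : ∃ A B, IsExtremalPair r A B := by
  obtain ⟨A, B, hA, hB, hcard, hcross⟩ := h.exists_isSorting_balanced hA₀ hB₀ hle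
  have hAX := abs_le.1 hA.abs_card_sub_le
  have hBY := abs_le.1 hB.abs_card_sub_le
  have hX := abs_le.1 h.card_left
  have hY := abs_le.1 h.card_right
  have := (Nat.cast_nonneg _ : 0 ≤ N)
  refine ⟨A, B, hcard, abs_le.2 ⟨by linarith, by linarith⟩, abs_le.2 ⟨by linarith, by linarith⟩,
    hA.isCluster hB h.arcs_compl_le, hA.compl.isCluster hB.compl h.arcs_compl_compl_le,
    hcross.imp_right fun ⟨hAlow, hBlow⟩ ↦ ⟨fun a ha ↦ ?_, fun b hb ↦ ?_⟩⟩
  · have hdeg := deg_le_add_card_sdiff (r := r) (Y := Bᶜ) (Z := Yᶜ) (a := a)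
    rw [compl_sdiff_compl] at hdeg
    linarith [hAlow a ha, hB.card_sdiff_le']
  · linarith [hBlow b (mem_compl.1 hb), hA.card_sdiff_le,
      deg_le_add_card_sdiff (r := _root_.flip r) (Y := A) (Z := X) (a := b)]

theorem IsDirac.exists_isExtremalPair [Nonempty V] (h : IsDirac r) (hX : N / 2 ≤ #X)
    (hZ : N / 2 ≤ #Z) (hXZ : arcs r X Z ≤ N ^ 2 / 10 ^ 9) : ∃ A B, IsExtremalPair r A B := by
  have hsplit := h.isNearSplit hX hZ hXZ
  obtain ⟨A, hA⟩ := hsplit.exists_isSorting h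
  obtain ⟨B, hB⟩ := hsplit.flip.exists_isSorting h.flip
  rcases le_total #B #A with hle | hle
  · exact hsplit.exists_isExtremalPair hA hB hle
  · refine hsplit.compl.exists_isExtremalPair hA.compl hB.compl ?_
    rw [card_compl, card_compl]
    lia

end Extremal

/-! ### Switching triples in a Dirac digraph and in thinned clusters -/

section DiracTriples

variable {V : Type*} [Fintype V] {r s : V → V → Prop} {A B A' B' : Finset V}

local notation "N" => (Fintype.card V : ℝ)

theorem IsDirac.le_card_switchTriples_of_le_arcs (h : IsDirac r)
    (harcs : ∀ X Y : Finset V, N / 2 ≤ #X → N / 2 ≤ #Y → N ^ 2 / 10 ^ 9 ≤ arcs r X Y)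
    (τ : (univ : Finset V) ≃ (univ : Finset V)) (a : (univ : Finset V)) :
    1 / 10 ^ 10 * N ^ 3 ≤
      #(switchTriples (fun x y : (univ : Finset V) ↦ r x y) τ a) := by
  have hpow : 0 ≤ N ^ 3 := by positivity
  refine le_trans (by linarith) <| mul_le_card_switchTriples (d := N / 2) (e := N ^ 2 / 10 ^ 9) τ a
    (by positivity) (fun x ↦ ?_) (fun y ↦ ?_) fun X Y hX hY ↦ ?_
  · exact (h.half_le_deg x).trans_eq (deg_subtype r univ x).symm
  · exact (h.half_le_deg_flip y).trans_eq (deg_subtype (_root_.flip r) univ y).symm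
  · refine le_of_le_of_eq ?_ (arcs_map (.subtype _) (.subtype _) X Y)
    exact harcs _ _ (by rwa [card_map]) (by rwa [card_map])

/-- `s` keeps almost a `15/16` proportion of the out-neighbours in `B` and of the in-neighbours
in `A` of every vertex. -/
structure IsThinning (r s : V → V → Prop) (A B : Finset V) : Prop where
  le_deg : ∀ v, 15 / 16 * deg r B v - N / 10 ^ 20 ≤ deg s B v
  le_deg_flip : ∀ v, 15 / 16 * deg (flip r) A v - N / 10 ^ 20 ≤ deg (flip s) A v

theorem IsThinning.flip (h : IsThinning r s A B) : IsThinning (flip r) (flip s) B A :=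
  ⟨h.le_deg_flip, h.le_deg⟩

namespace IsCluster

theorem flip (h : IsCluster r A B) : IsCluster (flip r) B A :=
  ⟨h.le_deg_flip, h.le_deg, arcs_flip.trans_le h.arcs_compl_le⟩

theorem le_deg_thinning (h : IsCluster r A B) (hs : IsThinning r s A B)
    (hB : #(B \ B') ≤ N / 10 ^ 7) {a : V} (ha : a ∈ A) : N / 4000 ≤ deg s B' a := by
  linarith [h.le_deg a ha, hs.le_deg a, (Nat.cast_nonneg _ : 0 ≤ N),
    deg_le_add_card_sdiff (r := s) (Y := B) (Z := B') (a := a)]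

theorem card_filter_deg_lt_le [Nonempty V] (h : IsCluster r A B) (hs : IsThinning r s A B)
    (hBB : B' ⊆ B) (hB : #(B \ B') ≤ N / 10 ^ 7) (hB' : 45 / 100 * N ≤ #B') :
    (#{a ∈ A | deg s B' a < 3 / 4 * #B'} : ℝ) ≤ N / 8000 := by
  have hN : 0 < N := Nat.cast_pos.2 Fintype.card_pos
  have hle : (#B' : ℝ) ≤ #B := mod_cast card_le_card hBB
  have hsub : #{a ∈ A | deg s B' a < 3 / 4 * #B'} ≤ #{a ∈ A | deg r B a < 7 / 8 * #B} := by
    refine card_le_card (monotone_filter_right A fun a _ ha ↦ ?_)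
    linarith [hs.le_deg a, deg_le_add_card_sdiff (r := s) (Y := B) (Z := B') (a := a)]
  refine le_of_mul_le_mul_right ?_ (by positivity : 0 < 5 / 100 * N)
  calc #{a ∈ A | deg s B' a < 3 / 4 * #B'} * (5 / 100 * N)
      ≤ #{a ∈ A | deg r B a < 7 / 8 * #B} * (#B - 7 / 8 * #B) := by
        gcongr
        linarith
    _ ≤ 6 / 10 ^ 8 * N ^ 2 := (card_filter_deg_lt_mul_le r A B _).trans h.arcs_compl_le
    _ ≤ N / 8000 * (5 / 100 * N) := by linarith [sq_nonneg N]

theorem card_not_le_deg_subtype_le [Nonempty V] (h : IsCluster r A B) (hs : IsThinning r s A B)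
    (hAA : A' ⊆ A) (hBB : B' ⊆ B) (hB : #(B \ B') ≤ N / 10 ^ 7) (hB' : 45 / 100 * N ≤ #B') :
    (#{a : A' | ¬ 3 / 4 * (#B' : ℝ) ≤ deg (fun (x : A') (y : B') ↦ s x y) univ a} : ℝ) ≤
      N / 8000 := by
  refine le_trans (Nat.cast_le.2 ?_) (h.card_filter_deg_lt_le hs hBB hB hB')
  refine card_le_card_of_injOn Subtype.val (fun a ha ↦ ?_) Subtype.val_injective.injOn
  exact mem_filter.2 ⟨hAA a.2, (not_le.1 (mem_filter.1 ha).2).trans_eq' (deg_subtype s B' a)⟩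

theorem le_card_switchTriples [Nonempty V] (h : IsCluster r A B) (hs : IsThinning r s A B)
    (hAA : A' ⊆ A) (hBB : B' ⊆ B) (hA : #(A \ A') ≤ N / 10 ^ 7) (hB : #(B \ B') ≤ N / 10 ^ 7)
    (hB' : 45 / 100 * N ≤ #B') (τ : A' ≃ B') (a : A') :
    1 / 10 ^ 10 * N ^ 3 ≤ #(switchTriples (fun (x : A') (y : B') ↦ s x y) τ a) := by
  have hcard : #A' = #B' := by simpa using Fintype.card_congr τ
  have hA' : 45 / 100 * N ≤ #A' := by rwa [hcard]
  have hpow : 0 ≤ N ^ 3 := by positivity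
  calc 1 / 10 ^ 10 * N ^ 3 ≤ N / 8000 * (N / 8000 * (45 / 100 * N / 2)) := by linarith
    _ ≤ N / 4000 / 2 * (N / 4000 / 2 * (Fintype.card B' / 2)) := by
        rw [Fintype.card_coe, div_div]
        norm_num only
        gcongr
        linarith
    _ ≤ #(switchTriples (fun (x : A') (y : B') ↦ s x y) τ a) := by
        refine mul_le_card_switchTriples_of_few_low (by positivity) τ a (fun x ↦ ?_) (fun y ↦ ?_)
          ?_ ?_
        · exact (h.le_deg_thinning hs hB (hAA x.2)).trans_eq (deg_subtype s B' x).symm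
        · exact (h.flip.le_deg_thinning hs.flip hA (hBB y.2)).trans_eq
            (deg_subtype (_root_.flip s) A' y).symm
        · rw [Fintype.card_coe]
          refine (h.card_not_le_deg_subtype_le hs hAA hBB hB hB').trans_eq ?_
          ring
        · rw [Fintype.card_coe, ← hcard]
          refine (h.flip.card_not_le_deg_subtype_le hs.flip hBB hAA hA hA').trans_eq ?_
          ring

end IsCluster

end DiracTriples

/-! ### Greedy choice of rainbow arcs -/

theorem exists_conflict_free_choice {J P : Type*} [Fintype J] {E : Finset P} (hE : E.Nonempty)
    {conflict : J → J → P → P → Prop} {w : J → J → ℝ}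
    (hsymm : ∀ i j p q, conflict i j p q → conflict j i q p)
    (hw : ∀ i j q, (#{p ∈ E | conflict i j p q} : ℝ) ≤ w i j) (hlt : ∀ i, ∑ j, w i j < #E) :
    ∃ T : J → P, (∀ i, T i ∈ E) ∧ ∀ i j, i ≠ j → ¬ conflict i j (T i) (T j) := by
  suffices h : ∀ S : Finset J, ∃ T : J → P, (∀ i, T i ∈ E) ∧
      ∀ i ∈ S, ∀ j ∈ S, i ≠ j → ¬ conflict i j (T i) (T j) by
    simpa only [mem_univ, forall_const] using h univ
  intro S
  induction S using Finset.induction_on with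
  | empty => exact ⟨fun _ ↦ hE.choose, fun _ ↦ hE.choose_spec, by simp⟩
  | insert i₀ S hi₀ ih =>
    obtain ⟨T, hTE, hT⟩ := ih
    obtain ⟨p, hpE, hp⟩ : ∃ p ∈ E, p ∉ univ.biUnion fun j ↦ {p ∈ E | conflict i₀ j p (T j)} := by
      refine exists_mem_notMem_of_card_lt_card ?_
      have hcard : (#(univ.biUnion fun j ↦ {p ∈ E | conflict i₀ j p (T j)}) : ℝ) ≤
          ∑ j, (#{p ∈ E | conflict i₀ j p (T j)} : ℝ) := mod_cast card_biUnion_le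
      exact mod_cast hcard.trans_lt ((sum_le_sum fun j _ ↦ hw i₀ j _).trans_lt (hlt i₀))
    simp only [mem_biUnion, mem_univ, true_and, mem_filter, hpE, not_exists] at hp
    have hne : ∀ i ∈ S, i ≠ i₀ := fun i hi h ↦ hi₀ (h ▸ hi)
    refine ⟨update T i₀ p, fun i ↦ ?_, fun i hi j hj hij ↦ ?_⟩
    · rcases eq_or_ne i i₀ with rfl | hi
      · rwa [update_self]
      · rw [update_of_ne hi]
        exact hTE i
    · rcases mem_insert.1 hi with rfl | hi <;> rcases mem_insert.1 hj with rfl | hj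
      · exact absurd rfl hij
      · rw [update_self, update_of_ne hij.symm]
        exact hp j
      · rw [update_self, update_of_ne hij]
        exact fun hc ↦ hp i (hsymm _ _ _ _ hc)
      · rw [update_of_ne (hne i hi), update_of_ne (hne j hj)]
        exact hT i hi j hj hij

section LayerArcs

variable {ι κ α β C : Type*} {r : α → β → Prop} {col : α → β → C}
  {A : Finset α} {B : Finset β} {K D : ℝ}

theorem card_filter_arcs_fst_eq_le (hD : 0 ≤ D) (hdeg : ∀ a ∈ A, deg r B a ≤ D) (a : α) :
    (#{p ∈ A ×ˢ B | r p.1 p.2 ∧ p.1 = a} : ℝ) ≤ D := by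
  by_cases ha : a ∈ A
  · refine (Nat.cast_le.2 (card_le_card_of_injOn Prod.snd ?_ ?_)).trans (hdeg a ha)
    · rintro ⟨x, y⟩ h
      obtain ⟨hxy, hr, rfl⟩ := mem_filter.1 h
      exact mem_filter.2 ⟨(mem_product.1 hxy).2, hr⟩
    · rintro ⟨x, y⟩ h ⟨x', y'⟩ h' (rfl : y = y')
      obtain ⟨-, -, rfl : x = a⟩ := mem_filter.1 h
      obtain ⟨-, -, rfl : x' = x⟩ := mem_filter.1 h'
      rfl
  · rw [filter_eq_empty_iff.2, card_empty, Nat.cast_zero]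
    · exact hD
    · rintro ⟨x, y⟩ h ⟨-, rfl⟩
      exact ha (mem_product.1 h).1

theorem card_filter_arcs_snd_eq_le (hD : 0 ≤ D) (hdeg : ∀ b ∈ B, deg (flip r) A b ≤ D) (b : β) :
    (#{p ∈ A ×ˢ B | r p.1 p.2 ∧ p.2 = b} : ℝ) ≤ D := by
  refine (Nat.cast_le.2 (card_le_card_of_injOn Prod.swap ?_ Prod.swap_injective.injOn)).trans
    (card_filter_arcs_fst_eq_le hD hdeg b)
  rintro ⟨x, y⟩ h
  obtain ⟨hxy, hr, hb⟩ := mem_filter.1 h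
  exact mem_filter.2 ⟨mem_product.2 (mem_product.1 hxy).symm, hr, hb⟩

/-- Choosing the arcs `p` and `q` for the (layer, position) indices `x` and `y` is forbidden: they
have the same colour, or they share an end in one layer. -/
def LayerConflict (col : α → β → C) (x y : ι × κ) (p q : α × β) : Prop :=
  col p.1 p.2 = col q.1 q.2 ∨ (x.1 = y.1 ∧ (p.1 = q.1 ∨ p.2 = q.2))

theorem LayerConflict.symm {x y : ι × κ} {p q : α × β} :
    LayerConflict col x y p q → LayerConflict col y x q p :=
  Or.imp Eq.symm fun h ↦ ⟨h.1.symm, h.2.imp Eq.symm Eq.symm⟩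

theorem card_filter_layerConflict_le (hD : 0 ≤ D)
    (hK : ∀ c, (#{p ∈ A ×ˢ B | r p.1 p.2 ∧ col p.1 p.2 = c} : ℝ) ≤ K)
    (hdeg : ∀ a ∈ A, deg r B a ≤ D) (hdeg_flip : ∀ b ∈ B, deg (flip r) A b ≤ D)
    (x y : ι × κ) (q : α × β) :
    (#{p ∈ {p ∈ A ×ˢ B | r p.1 p.2} | LayerConflict col x y p q} : ℝ) ≤
      K + if x.1 = y.1 then 2 * D else 0 := by
  set E := {p ∈ A ×ˢ B | r p.1 p.2}
  have hcol := hK (col q.1 q.2)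
  have hfst := card_filter_arcs_fst_eq_le hD hdeg q.1
  have hsnd := card_filter_arcs_snd_eq_le hD hdeg_flip q.2
  rw [← filter_filter] at hcol hfst hsnd
  split_ifs with hxy
  · simp only [LayerConflict, hxy, true_and, filter_or]
    have hunion : (_ : ℝ) ≤ _ := Nat.cast_le.2 <|
      (card_union_le {p ∈ E | col p.1 p.2 = col q.1 q.2} _).trans
        (Nat.add_le_add_left (card_union_le {p ∈ E | p.1 = q.1} {p ∈ E | p.2 = q.2}) _)
    push_cast at hunion
    linarith
  · simpa only [LayerConflict, hxy, false_and, or_false, add_zero] using hcol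

theorem exists_rainbow_layer_arcs [Fintype ι] [Fintype κ] (hK₀ : 0 ≤ K) (hD₀ : 0 ≤ D)
    (hK : ∀ c, (#{p ∈ A ×ˢ B | r p.1 p.2 ∧ col p.1 p.2 = c} : ℝ) ≤ K)
    (hdeg : ∀ a ∈ A, deg r B a ≤ D) (hdeg_flip : ∀ b ∈ B, deg (flip r) A b ≤ D)
    (hlt : Fintype.card κ * (Fintype.card ι * K + 2 * D) < arcs r A B) :
    ∃ (f : ι → κ → α) (g : ι → κ → β),
      (∀ i k, f i k ∈ A ∧ g i k ∈ B ∧ r (f i k) (g i k)) ∧ (∀ i, Injective (f i)) ∧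
        (∀ i, Injective (g i)) ∧ Injective fun x : ι × κ ↦ col (f x.1 x.2) (g x.1 x.2) := by
  set E := {p ∈ A ×ˢ B | r p.1 p.2}
  have hE : arcs r A B = #E := arcs_eq_card
  have hne : E.Nonempty := by
    rw [← card_pos, ← Nat.cast_pos (α := ℝ), ← hE]
    exact lt_of_le_of_lt (by positivity) hlt
  have hsum (x : ι × κ) : ∑ y : ι × κ, (K + if x.1 = y.1 then 2 * D else 0) < #E := by
    refine lt_of_eq_of_lt ?_ (hE ▸ hlt)
    rw [Fintype.sum_prod_type]
    change ∑ i, ∑ _ : κ, (K + if x.1 = i then 2 * D else 0) = _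
    simp only [sum_add_distrib, sum_const, card_univ, nsmul_eq_mul, ← mul_sum, sum_ite_eq,
      mem_univ, if_true]
    ring
  obtain ⟨T, hTE, hT⟩ := exists_conflict_free_choice hne
    (fun _ _ _ _ ↦ LayerConflict.symm)
    (fun x y q ↦ by convert card_filter_layerConflict_le hD₀ hK hdeg hdeg_flip x y q) hsum
  have hT' : ∀ i k k', k ≠ k' → ¬ LayerConflict col (i, k) (i, k') (T (i, k)) (T (i, k')) :=
    fun i k k' hk ↦ hT _ _ fun h ↦ hk (Prod.ext_iff.1 h).2
  exact ⟨fun i k ↦ (T (i, k)).1, fun i k ↦ (T (i, k)).2,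
    fun i k ↦ by simpa only [E, mem_filter, mem_product, and_assoc] using hTE (i, k),
    fun i k k' h ↦ not_ne_iff.1 fun hk ↦ hT' i k k' hk (.inr ⟨rfl, .inl h⟩),
    fun i k k' h ↦ not_ne_iff.1 fun hk ↦ hT' i k k' hk (.inr ⟨rfl, .inr h⟩),
    fun x y h ↦ not_ne_iff.1 fun hxy ↦ hT x y hxy (.inl h)⟩

end LayerArcs

/-! ### Splitting off a set of balancing colours -/

theorem exists_colour_set_card_fibre_near {M I P C : Type*} [Fintype M] [Finite I] {E : Finset P}
    (key : M → P → I) (col : P → C) {K ρ : ℝ} (hρ : ρ ∈ Set.Icc 0 1) (hK₀ : 0 ≤ K)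
    (hK : ∀ c, (#{p ∈ E | col p = c} : ℝ) ≤ K) :
    ∃ R : Set C, ∀ m i, |ρ * #{p ∈ E | key m p = i} - #{p ∈ E | key m p = i ∧ col p ∈ R}| ≤
      Fintype.card M * K := by
  cases nonempty_fintype I
  have hfibres (m : M) (c : C) : ∑ i, (#{p ∈ {p ∈ E | key m p = i} | col p = c} : ℝ) ≤ K := by
    refine le_trans (le_of_eq ?_) (hK c)
    rw [card_eq_sum_card_fiberwise (f := key m) (t := univ) fun _ _ ↦ mem_coe.2 (mem_univ _)]
    simp only [Nat.cast_sum, filter_filter, and_comm]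
  have hsum (c : C) :
      ∑ x : M × I, (#{p ∈ {p ∈ E | key x.1 p = x.2} | col p = c} : ℝ) ≤ Fintype.card M * K := by
    simpa [Fintype.sum_prod_type] using sum_le_sum fun m (_ : m ∈ univ) ↦ hfibres m c
  obtain ⟨R, hR⟩ := exists_colour_set_card_near _ col hρ (by positivity) hsum
  exact ⟨R, fun m i ↦ by simpa only [filter_filter] using hR (m, i)⟩

section Thinning

variable {V C : Type*} {r : V → V → Prop} {col : V → V → C} {A B : Finset V} {K : ℝ}

/-- The digraph formed by the arcs of `r` whose colour lies in `R`. -/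
def withColours (r : V → V → Prop) (col : V → V → C) (R : Set C) (v w : V) : Prop :=
  r v w ∧ col v w ∈ R

theorem deg_withColours_add_deg_withColours_compl (R : Set C) (v : V) :
    deg (withColours r col R) B v + deg (withColours r col Rᶜ) B v = deg r B v := by
  rw [deg, deg, deg, ← Nat.cast_add, Nat.cast_inj,
    ← card_filter_add_card_filter_not (s := {y ∈ B | r v y}) fun y ↦ col v y ∈ R, filter_filter,
    filter_filter]
  congr

variable [Fintype V]

theorem deg_eq_card (v : V) : deg r B v = #{p : V × V | r p.1 p.2 ∧ p.1 = v ∧ p.2 ∈ B} := by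
  rw [deg, Nat.cast_inj, ← card_map (.sectR v V)]
  congr 1
  ext ⟨x, y⟩
  simp only [mem_map, mem_filter, Embedding.sectR_apply, Prod.mk.injEq, mem_univ, true_and]
  aesop

theorem deg_flip_eq_card (v : V) :
    deg (flip r) A v = #{p : V × V | r p.1 p.2 ∧ p.2 = v ∧ p.1 ∈ A} := by
  rw [deg, Nat.cast_inj, ← card_map (.sectL V v)]
  congr 1
  ext ⟨x, y⟩
  simp only [mem_map, mem_filter, Embedding.sectL_apply, Prod.mk.injEq, mem_univ, true_and]
  aesop

theorem arcs_eq_card_univ :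
    arcs r A B = #{p : V × V | r p.1 p.2 ∧ p.1 ∈ A ∧ p.2 ∈ B} := by
  rw [arcs_eq_card]
  congr 2
  ext p
  simp [and_comm]

theorem exists_colour_set_deg_near (A B : Finset V) {ρ : ℝ} (hρ : ρ ∈ Set.Icc 0 1) (hK₀ : 0 ≤ K)
    (hK : ∀ c, (#{e : V × V | r e.1 e.2 ∧ col e.1 e.2 = c} : ℝ) ≤ K) :
    ∃ R : Set C,
      (∀ v, |ρ * deg r B v - deg (withColours r col R) B v| ≤ 3 * K) ∧
      (∀ v, |ρ * deg r Bᶜ v - deg (withColours r col R) Bᶜ v| ≤ 3 * K) ∧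
      (∀ v, |ρ * deg (flip r) A v - deg (flip (withColours r col R)) A v| ≤ 3 * K) ∧
      (∀ v, |ρ * deg (flip r) Aᶜ v - deg (flip (withColours r col R)) Aᶜ v| ≤ 3 * K) ∧
      |ρ * arcs r A Bᶜ - arcs (withColours r col R) A Bᶜ| ≤ 3 * K := by
  obtain ⟨R, hR⟩ := exists_colour_set_card_fibre_near
    (E := {p : V × V | r p.1 p.2}) (M := Fin 3) (I := Option V × Prop)
    ![fun p ↦ (some p.1, p.2 ∈ B), fun p ↦ (some p.2, p.1 ∈ A), fun p ↦ (none, p.1 ∈ A ∧ p.2 ∉ B)]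
    (fun p ↦ col p.1 p.2) hρ hK₀ (by simpa only [filter_filter] using hK)
  refine ⟨R, fun v ↦ ?_, fun v ↦ ?_, fun v ↦ ?_, fun v ↦ ?_, ?_⟩
  · simpa [filter_filter, deg_eq_card, withColours, and_assoc, and_left_comm, and_comm]
      using hR 0 (some v, True)
  · simpa [filter_filter, deg_eq_card, withColours, and_assoc, and_left_comm, and_comm]
      using hR 0 (some v, False)
  · simpa [filter_filter, deg_flip_eq_card, withColours, and_assoc, and_left_comm, and_comm]
      using hR 1 (some v, True)
  · simpa [filter_filter, deg_flip_eq_card, withColours, and_assoc, and_left_comm, and_comm]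
      using hR 1 (some v, False)
  · simpa [filter_filter, arcs_eq_card_univ, withColours, and_assoc, and_left_comm, and_comm]
      using hR 2 (none, True)

local notation "N" => (Fintype.card V : ℝ)

theorem isThinning_withColours_compl {R : Set C}
    (hdeg : ∀ v, |1 / 16 * deg r B v - deg (withColours r col R) B v| ≤ N / 10 ^ 20)
    (hdeg_flip : ∀ v, |1 / 16 * deg (flip r) A v - deg (flip (withColours r col R)) A v| ≤
      N / 10 ^ 20) :
    IsThinning r (withColours r col Rᶜ) A B where
  le_deg v := by
    have := deg_withColours_add_deg_withColours_compl (r := r) (col := col) (B := B) R v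
    linarith [abs_sub_le_iff.1 (hdeg v)]
  le_deg_flip v := by
    have : deg (flip (withColours r col R)) A v + deg (flip (withColours r col Rᶜ)) A v =
        deg (flip r) A v :=
      deg_withColours_add_deg_withColours_compl (r := flip r) (col := flip col) R v
    linarith [(abs_sub_le_iff.1 (hdeg_flip v)).2]

theorem exists_balancing_colours (A B : Finset V) (hK₀ : 0 ≤ K)
    (hK : ∀ c, (#{e : V × V | r e.1 e.2 ∧ col e.1 e.2 = c} : ℝ) ≤ K) (hKN : 3 * K ≤ N / 10 ^ 20) :
    ∃ R : Set C, IsThinning r (withColours r col Rᶜ) A B ∧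
      IsThinning r (withColours r col Rᶜ) Aᶜ Bᶜ ∧
      1 / 16 * arcs r A Bᶜ - 3 * K ≤ arcs (withColours r col R) A Bᶜ := by
  obtain ⟨R, hB, hB', hA, hA', hcross⟩ :=
    exists_colour_set_deg_near A B (ρ := 1 / 16) ⟨by norm_num, by norm_num⟩ hK₀ hK
  exact ⟨R, isThinning_withColours_compl (fun v ↦ (hB v).trans hKN) fun v ↦ (hA v).trans hKN,
    isThinning_withColours_compl (fun v ↦ (hB' v).trans hKN) fun v ↦ (hA' v).trans hKN,
    by linarith [abs_sub_le_iff.1 hcross]⟩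

end Thinning

/-! ### Assembling rainbow permutations -/

section Permutations

variable {ι κ V C : Type*} {r : V → V → Prop} {col : V → V → C} {A B : Finset V} {K : ℝ}

/-- There is a family of permutations of `V`, indexed by `ι`, all of whose arcs `v → π i v` belong
to `r` and have distinct colours, also across the family. Their union is the rainbow factor sought,
as each permutation contributes one out-neighbour and one in-neighbour to every vertex. -/
def HasRainbowPermutations (r : V → V → Prop) (col : V → V → C) (ι : Type*) : Prop :=
  ∃ π : ι → Equiv.Perm V, (∀ i v, r v (π i v)) ∧ Injective fun x : ι × V ↦ col x.2 (π x.1 x.2)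

theorem HasRainbowPermutations.of_bijective {J : ι → Type*} (φ ψ : ∀ i, J i → V)
    (hφ : ∀ i, Bijective (φ i)) (hψ : ∀ i, Bijective (ψ i)) (hr : ∀ i j, r (φ i j) (ψ i j))
    (hcol : Injective fun x : Σ i, J i ↦ col (φ x.1 x.2) (ψ x.1 x.2)) :
    HasRainbowPermutations r col ι := by
  let e i := Equiv.ofBijective (φ i) (hφ i)
  have he (i v) : φ i ((e i).symm v) = v := (e i).apply_symm_apply v
  refine ⟨fun i ↦ (e i).symm.trans (.ofBijective (ψ i) (hψ i)), fun i v ↦ ?_, fun x y hxy ↦ ?_⟩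
  · have := hr i ((e i).symm v)
    rwa [he] at this
  · have hJ : (⟨x.1, (e x.1).symm x.2⟩ : Σ i, J i) = ⟨y.1, (e y.1).symm y.2⟩ :=
      hcol (by simp only [he]; exact hxy)
    have hV := congrArg (fun z : Σ i, J i ↦ (z.1, φ z.1 z.2)) hJ
    simpa only [he] using hV

theorem HasRainbowPermutations.of_layers {Λ : Type*} [Fintype V] [Fintype κ] [Fintype Λ]
    {f g : ι → κ → V} {A' B' : ι → Λ → Finset V} {R : Set C}
    (τ : ∀ x : ι × Λ, A' x.1 x.2 ≃ B' x.1 x.2)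
    (hcover : ∀ i v, (∃ k, f i k = v) ∨ ∃ l, v ∈ A' i l)
    (hcover' : ∀ i v, (∃ k, g i k = v) ∨ ∃ l, v ∈ B' i l)
    (hcard : ∀ i, Fintype.card κ + ∑ l, #(A' i l) = Fintype.card V)
    (hred : ∀ i k, withColours r col R (f i k) (g i k))
    (hblue : ∀ x (a : A' x.1 x.2), withColours r col Rᶜ a (τ x a))
    (hred_inj : Injective fun x : ι × κ ↦ col (f x.1 x.2) (g x.1 x.2))
    (hblue_inj : Injective fun x : Σ x : ι × Λ, A' x.1 x.2 ↦ col x.2 (τ x.1 x.2)) :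
    HasRainbowPermutations r col ι := by
  let J i := κ ⊕ Σ l, A' i l
  let φ (i) : J i → V := Sum.elim (f i) fun x ↦ x.2
  let ψ (i) : J i → V := Sum.elim (g i) fun x ↦ τ (i, x.1) x.2
  have hJ (i) : Fintype.card (J i) = Fintype.card V := by
    rw [← hcard i, Fintype.card_sum, Fintype.card_sigma]
    simp only [Fintype.card_coe]
  refine .of_bijective φ ψ
    (fun i ↦ (Fintype.bijective_iff_surjective_and_card _).2 ⟨fun v ↦ ?_, hJ i⟩)
    (fun i ↦ (Fintype.bijective_iff_surjective_and_card _).2 ⟨fun v ↦ ?_, hJ i⟩) ?_ ?_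
  · obtain ⟨k, hk⟩ | ⟨l, hv⟩ := hcover i v
    · exact ⟨.inl k, hk⟩
    · exact ⟨.inr ⟨l, v, hv⟩, rfl⟩
  · obtain ⟨k, hk⟩ | ⟨l, hv⟩ := hcover' i v
    · exact ⟨.inl k, hk⟩
    · exact ⟨.inr ⟨l, (τ (i, l)).symm ⟨v, hv⟩⟩, by simp [ψ]⟩
  · rintro i (k | ⟨l, a⟩)
    · exact (hred i k).1
    · exact (hblue (i, l) a).1
  · rintro ⟨i, k | ⟨l, a⟩⟩ ⟨i', k' | ⟨l', a'⟩⟩ h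
    · obtain ⟨rfl, rfl⟩ := Prod.mk.inj (hred_inj (a₁ := (i, k)) (a₂ := (i', k')) h)
      rfl
    · exact absurd ((congrArg (· ∈ R) h).mp (hred i k).2) (hblue (i', l') a').2
    · exact absurd ((congrArg (· ∈ R) h).mpr (hred i' k').2) (hblue (i, l) a).2
    · cases hblue_inj (a₁ := ⟨(i, l), a⟩) (a₂ := ⟨(i', l'), a'⟩) h
      rfl

end Permutations

section DiracPermutations

variable {ι V C : Type*} [Fintype V] [Fintype ι] {r : V → V → Prop}
  {col : V → V → C} {A B : Finset V} {K : ℝ}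

local notation "N" => (Fintype.card V : ℝ)

theorem IsDirac.hasRainbowPermutations_of_le_arcs (hr : IsDirac r)
    (hK : ∀ c, (#{e : V × V | r e.1 e.2 ∧ col e.1 e.2 = c} : ℝ) ≤ K)
    (hιK : Fintype.card ι * K ≤ N / 10 ^ 24) (hN : 10 ^ 12 ≤ N)
    (harcs : ∀ X Y : Finset V, N / 2 ≤ #X → N / 2 ≤ #Y → N ^ 2 / 10 ^ 9 ≤ arcs r X Y) :
    HasRainbowPermutations r col ι := by
  obtain ⟨τ, hτr, hτcol⟩ := exists_rainbow_layer_matchings (L := ι) (r := r) (col := col)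
    (A := fun _ ↦ univ) (B := fun _ ↦ univ) (c := 1 / 10 ^ 10) (μ := 1 / 10 ^ 23)
    (fun _ ↦ rfl) (fun _ ↦ le_rfl) (fun _ ↦ hr.le_card_switchTriples_of_le_arcs harcs) hK
    (by rw [card_univ]; linarith) (by norm_num) (by norm_num) (by norm_num)
    (by rw [card_univ]; linarith)
  refine .of_bijective (fun _ (v : (univ : Finset V)) ↦ (v : V)) (fun i v ↦ (τ i v : V))
    (fun _ ↦ ⟨Subtype.val_injective, fun v ↦ ⟨⟨v, mem_univ v⟩, rfl⟩⟩) (fun i ↦ ?_) hτr hτcol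
  exact Bijective.comp ⟨Subtype.val_injective, fun v ↦ ⟨⟨v, mem_univ v⟩, rfl⟩⟩ (τ i).bijective

end DiracPermutations

section ExtremalPermutations

variable {ι V C : Type*} [Fintype V] {r s : V → V → Prop} {col : V → V → C}
  {A B P Q : Finset V} {K : ℝ}

local notation "N" => (Fintype.card V : ℝ)

namespace IsExtremalPair

theorem le_arcs_cross (h : IsExtremalPair r A B) (hr : IsDirac r) :
    (#A - #B) * N / 5 ≤ arcs r A Bᶜ := by
  have hle : (#B : ℝ) ≤ #A := mod_cast h.card_le
  have hA := abs_sub_le_iff.1 h.card_left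
  have := abs_sub_le_iff.1 h.card_right
  have hBc := cast_card_compl B
  have hAc := cast_card_compl A
  have : 0 ≤ N := Nat.cast_nonneg _
  have hmul {X : Finset V} (hX : 2 / 5 * N ≤ #X) :
      (#A - #B) * N / 5 ≤ #X * ((#A - #B : ℝ) / 2) := by
    linarith [mul_le_mul_of_nonneg_right hX (by linarith : 0 ≤ (#A - #B : ℝ) / 2)]
  rcases le_total ((#A - #B : ℝ) / 2) (N / 2 - #B) with hc | hc
  · refine (hmul (by linarith)).trans (card_mul_le_arcs fun a _ ↦ ?_)
    linarith [hr.half_le_deg a, deg_add_deg_compl_set (r := r) (Y := B) (a := a),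
      deg_le_card (r := r) (Y := B) (a := a)]
  · rw [← arcs_flip]
    refine (hmul (by linarith)).trans (card_mul_le_arcs fun b _ ↦ ?_)
    linarith [hr.half_le_deg_flip b, deg_add_deg_compl_set (r := _root_.flip r) (Y := A) (a := b),
      deg_le_card (r := _root_.flip r) (Y := Aᶜ) (a := b)]

theorem exists_balancing_arcs [Fintype ι] [Nonempty ι] {R : Set C} (h : IsExtremalPair r A B)
    (hr : IsDirac r) (hK₀ : 0 ≤ K)
    (hK : ∀ c, (#{e : V × V | r e.1 e.2 ∧ col e.1 e.2 = c} : ℝ) ≤ K)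
    (hιK : Fintype.card ι * K ≤ N / 10 ^ 24)
    (hR : 1 / 16 * arcs r A Bᶜ - 3 * K ≤ arcs (withColours r col R) A Bᶜ) :
    ∃ (f : ι → Fin (#A - #B) → V) (g : ι → Fin (#A - #B) → V),
      (∀ i k, f i k ∈ A ∧ g i k ∈ Bᶜ ∧ withColours r col R (f i k) (g i k)) ∧
        (∀ i, Injective (f i)) ∧ (∀ i, Injective (g i)) ∧
          Injective fun x : ι × Fin (#A - #B) ↦ col (f x.1 x.2) (g x.1 x.2) := by
  rcases h.card_le.eq_or_lt with hBA | hBA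
  · have : IsEmpty (Fin (#A - #B)) := by rw [hBA, Nat.sub_self]; infer_instance
    exact ⟨fun _ ↦ isEmptyElim, fun _ ↦ isEmptyElim, fun _ ↦ isEmptyElim,
      fun _ ↦ injective_of_subsingleton _, fun _ ↦ injective_of_subsingleton _,
      injective_of_subsingleton _⟩
  obtain ⟨hdeg, hdeg_flip⟩ := h.cross.resolve_left hBA.ne
  have hsub : ∀ v w, withColours r col R v w → r v w := fun _ _ ↦ And.left
  refine exists_rainbow_layer_arcs (D := N / 500) hK₀ (by positivity)
    (fun c ↦ le_trans (Nat.cast_le.2 <| card_le_card fun e he ↦ ?_) (hK c))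
    (fun a ha ↦ (deg_mono hsub subset_rfl).trans (hdeg a ha))
    (fun b hb ↦ (deg_mono (fun v w ↦ hsub w v) subset_rfl).trans (hdeg_flip b hb)) ?_
  · exact mem_filter.2 ⟨mem_univ e, (mem_filter.1 he).2.imp_left And.left⟩
  · rw [Fintype.card_fin, Nat.cast_sub hBA.le]
    have ht : (1 : ℝ) ≤ #A - #B := by
      rw [← Nat.cast_sub hBA.le, Nat.one_le_cast]
      omega
    have hKι : K ≤ Fintype.card ι * K :=
      le_mul_of_one_le_left hK₀ (Nat.one_le_cast.2 Fintype.card_pos)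
    have : Nonempty V := (card_pos.1 (Nat.zero_lt_of_lt hBA)).to_type
    have hN : 0 < N := Nat.cast_pos.2 Fintype.card_pos
    have htN : N ≤ (#A - #B) * N := le_mul_of_one_le_left hN.le ht
    calc (#A - #B : ℝ) * (Fintype.card ι * K + 2 * (N / 500))
        ≤ (#A - #B) * (N / 100) := by
          gcongr
          linarith
      _ < 1 / 16 * ((#A - #B) * N / 5) - 3 * K := by linarith
      _ ≤ arcs (withColours r col R) A Bᶜ := by linarith [h.le_arcs_cross hr]

/-- The sources of the two clusters once a set `P ⊆ A` of sources of balancing arcs is removed. -/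
noncomputable def sources (A P : Finset V) (b : Bool) : Finset V := bif b then A \ P else Aᶜ

/-- The targets of the two clusters once a set `Q ⊆ Bᶜ` of targets of balancing arcs is removed. -/
noncomputable def targets (B Q : Finset V) (b : Bool) : Finset V := bif b then B else Bᶜ \ Q

theorem card_sources_eq_card_targets (h : IsExtremalPair r A B) (hP : P ⊆ A) (hQ : Q ⊆ Bᶜ)
    (hPcard : #P = #A - #B) (hQcard : #Q = #A - #B) (b : Bool) :
    #(sources A P b) = #(targets B Q b) := by
  have hle := h.card_le
  have hA := card_le_univ A
  cases b
  · simp only [sources, targets, cond_false, card_sdiff_of_subset hQ, card_compl]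
    omega
  · simp only [sources, targets, cond_true, card_sdiff_of_subset hP]
    omega

theorem le_card_switchTriples [Nonempty V] (h : IsExtremalPair r A B) (hs : IsThinning r s A B)
    (hs' : IsThinning r s Aᶜ Bᶜ) (hP : P ⊆ A) (hQ : Q ⊆ Bᶜ) (hPcard : #P = #A - #B)
    (hQcard : #Q = #A - #B) (b : Bool) (τ : sources A P b ≃ targets B Q b) (a : sources A P b) :
    1 / 10 ^ 10 * N ^ 3 ≤
      #(switchTriples (fun (x : sources A P b) (y : targets B Q b) ↦ s x y) τ a) := by
  have hA := abs_sub_le_iff.1 h.card_left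
  have hB := abs_sub_le_iff.1 h.card_right
  have : 0 ≤ N := Nat.cast_nonneg _
  have hQ' : (#Q : ℝ) = #A - #B := by rw [hQcard, Nat.cast_sub h.card_le]
  have hP' : (#P : ℝ) = #A - #B := by rw [hPcard, Nat.cast_sub h.card_le]
  have hBc := cast_card_compl B
  have hBQ : (#(Bᶜ \ Q) : ℝ) = #Bᶜ - #Q := by
    rw [card_sdiff_of_subset hQ, Nat.cast_sub (card_le_card hQ)]
  cases b
  · refine h.isCluster_compl.le_card_switchTriples hs' subset_rfl sdiff_subset ?_ ?_ ?_ τ a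
    · rw [Finset.sdiff_self, card_empty, Nat.cast_zero]
      positivity
    · rw [Finset.sdiff_sdiff_eq_self hQ]
      linarith
    · linarith
  · refine h.isCluster.le_card_switchTriples hs sdiff_subset subset_rfl ?_ ?_ ?_ τ a
    · rw [Finset.sdiff_sdiff_eq_self hP]
      linarith
    · rw [Finset.sdiff_self, card_empty, Nat.cast_zero]
      positivity
    · linarith

theorem exists_rainbow_cluster_matchings [Fintype ι] [Nonempty V] {R : Set C} {P Q : ι → Finset V}
    (h : IsExtremalPair r A B) (hs : IsThinning r (withColours r col Rᶜ) A B)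
    (hs' : IsThinning r (withColours r col Rᶜ) Aᶜ Bᶜ) (hP : ∀ i, P i ⊆ A) (hQ : ∀ i, Q i ⊆ Bᶜ)
    (hPcard : ∀ i, #(P i) = #A - #B) (hQcard : ∀ i, #(Q i) = #A - #B)
    (hK : ∀ c, (#{e : V × V | r e.1 e.2 ∧ col e.1 e.2 = c} : ℝ) ≤ K)
    (hιK : Fintype.card ι * K ≤ N / 10 ^ 24) (hN : 10 ^ 12 ≤ N) :
    ∃ τ : ∀ x : ι × Bool, sources A (P x.1) x.2 ≃ targets B (Q x.1) x.2,
      (∀ x (a : sources A (P x.1) x.2), withColours r col Rᶜ a (τ x a)) ∧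
        Injective fun x : Σ x : ι × Bool, sources A (P x.1) x.2 ↦ col x.2 (τ x.1 x.2) := by
  refine exists_rainbow_layer_matchings (n := N) (c := 1 / 10 ^ 10) (μ := 1 / 10 ^ 23)
    (fun x ↦ h.card_sources_eq_card_targets (hP x.1) (hQ x.1) (hPcard x.1) (hQcard x.1) x.2)
    (fun x ↦ Nat.cast_le.2 (card_le_univ _))
    (fun x ↦ h.le_card_switchTriples hs hs' (hP x.1) (hQ x.1) (hPcard x.1) (hQcard x.1) x.2)
    (fun c ↦ le_trans (Nat.cast_le.2 <| card_le_card fun e he ↦ ?_) (hK c)) ?_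
    (by norm_num) (by norm_num) (by norm_num) (by linarith)
  · exact mem_filter.2 ⟨mem_univ e, (mem_filter.1 he).2.imp_left And.left⟩
  · rw [Fintype.card_prod, Fintype.card_bool]
    push_cast
    linarith

theorem hasRainbowPermutations [Fintype ι] [Nonempty ι] (h : IsExtremalPair r A B)
    (hr : IsDirac r) (hK₀ : 0 ≤ K)
    (hK : ∀ c, (#{e : V × V | r e.1 e.2 ∧ col e.1 e.2 = c} : ℝ) ≤ K)
    (hιK : Fintype.card ι * K ≤ N / 10 ^ 24) (hN : 10 ^ 12 ≤ N) :
    HasRainbowPermutations r col ι := by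
  have : Nonempty V := Fintype.card_pos_iff.1 (Nat.cast_pos.1 (by linarith : 0 < N))
  have hKι : K ≤ Fintype.card ι * K :=
    le_mul_of_one_le_left hK₀ (Nat.one_le_cast.2 Fintype.card_pos)
  obtain ⟨R, hs, hs', hR⟩ := exists_balancing_colours A B hK₀ hK (by linarith)
  obtain ⟨f, g, hfg, hf, hg, hred⟩ := h.exists_balancing_arcs hr hK₀ hK hιK hR
  have hP (i) : univ.image (f i) ⊆ A := image_subset_iff.2 fun k _ ↦ (hfg i k).1
  have hQ (i) : univ.image (g i) ⊆ Bᶜ := image_subset_iff.2 fun k _ ↦ (hfg i k).2.1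
  have hPcard (i) : #(univ.image (f i)) = #A - #B := by
    rw [card_image_of_injective _ (hf i), card_univ, Fintype.card_fin]
  have hQcard (i) : #(univ.image (g i)) = #A - #B := by
    rw [card_image_of_injective _ (hg i), card_univ, Fintype.card_fin]
  obtain ⟨τ, hτ, hblue⟩ :=
    h.exists_rainbow_cluster_matchings hs hs' hP hQ hPcard hQcard hK hιK hN
  refine .of_layers (A' := fun i ↦ sources A (univ.image (f i)))
    (B' := fun i ↦ targets B (univ.image (g i))) τ (fun i v ↦ ?_) (fun i v ↦ ?_)
    (fun i ↦ ?_) (fun i k ↦ (hfg i k).2.2) hτ hred hblue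
  · simp only [Bool.exists_bool, sources, cond_true, cond_false, mem_compl, mem_sdiff, mem_image,
      mem_univ, true_and]
    tauto
  · simp only [Bool.exists_bool, targets, cond_true, cond_false, mem_compl, mem_sdiff, mem_image,
      mem_univ, true_and]
    tauto
  · have := h.card_le
    have := card_le_univ A
    simp only [Fintype.card_fin, Fintype.sum_bool, sources, cond_true, cond_false, card_compl,
      card_sdiff_of_subset (hP i), hPcard]
    omega

end IsExtremalPair

theorem IsDirac.hasRainbowPermutations [Fintype ι] [Nonempty ι] (hr : IsDirac r) (hK₀ : 0 ≤ K)
    (hK : ∀ c, (#{e : V × V | r e.1 e.2 ∧ col e.1 e.2 = c} : ℝ) ≤ K)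
    (hιK : Fintype.card ι * K ≤ N / 10 ^ 24) (hN : 10 ^ 12 ≤ N) :
    HasRainbowPermutations r col ι := by
  by_cases harcs : ∀ X Y : Finset V, N / 2 ≤ #X → N / 2 ≤ #Y → N ^ 2 / 10 ^ 9 ≤ arcs r X Y
  · exact hr.hasRainbowPermutations_of_le_arcs hK hιK hN harcs
  · push Not at harcs
    obtain ⟨X, Y, hX, hY, hXY⟩ := harcs
    have : Nonempty V := Fintype.card_pos_iff.1 (Nat.cast_pos.1 (by linarith : 0 < N))
    obtain ⟨A, B, hAB⟩ := hr.exists_isExtremalPair hX hY hXY.le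
    exact hAB.hasRainbowPermutations hr hK₀ hK hιK hN

end ExtremalPermutations

/-! ### Regular subgraphs from permutations -/

section Factor

variable {ι V C : Type*} {G : SimpleGraph V} {χ : Sym2 V → C} {π : ι → Equiv.Perm V}

/-- The spanning subgraph of `G` formed by the edges `s(v, π i v)` of a family of permutations. -/
def permSubgraph (hπ : ∀ i v, G.Adj v (π i v)) : G.Subgraph where
  verts := Set.univ
  Adj u v := ∃ i, π i u = v ∨ π i v = u
  adj_sub := by
    rintro u v ⟨i, rfl | rfl⟩
    exacts [hπ i u, (hπ i v).symm]
  edge_vert _ := Set.mem_univ _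
  symm := ⟨fun _ _ ⟨i, h⟩ ↦ ⟨i, h.symm⟩⟩

theorem neighborSet_permSubgraph (hπ : ∀ i v, G.Adj v (π i v)) (v : V) :
    (permSubgraph hπ).neighborSet v =
      Set.range (Sum.elim (fun i ↦ π i v) fun i ↦ (π i).symm v) := by
  ext w
  simp only [Set.Sum.elim_range, Set.mem_union, Set.mem_range, ← exists_or, Equiv.symm_apply_eq,
    eq_comm (a := v)]
  rfl

theorem exists_eq_of_mem_edgeSet_permSubgraph (hπ : ∀ i v, G.Adj v (π i v)) {e : Sym2 V}
    (he : e ∈ (permSubgraph hπ).edgeSet) : ∃ i v, s(v, π i v) = e := by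
  induction e with
  | _ u v =>
    obtain ⟨i, h⟩ : ∃ i, π i u = v ∨ π i v = u := he
    obtain rfl | rfl := h
    exacts [⟨i, u, rfl⟩, ⟨i, v, Sym2.eq_swap⟩]

theorem ncard_neighborSet_permSubgraph [Fintype ι] (hπ : ∀ i v, G.Adj v (π i v))
    (hinj : Injective fun x : ι × V ↦ s(x.2, π x.1 x.2)) (v : V) :
    ((permSubgraph hπ).neighborSet v).ncard = Fintype.card ι + Fintype.card ι := by
  have hinj' {i j u w} (h : s(u, π i u) = s(w, π j w)) : i = j ∧ u = w :=
    Prod.mk.inj (hinj (a₁ := (i, u)) (a₂ := (j, w)) h)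
  have hindex : Injective (Sum.elim (fun i ↦ π i v) fun i ↦ (π i).symm v) := by
    refine .sumElim (fun i j h ↦ ?_) (fun i j h ↦ ?_) fun i j h ↦ ?_
    · exact (hinj' (congrArg (s(v, ·)) h)).1
    · refine (hinj' (i := i) (j := j) (u := (π i).symm v) (w := (π j).symm v) ?_).1
      simpa only [Equiv.apply_symm_apply] using congrArg (s(·, v)) h
    · refine (hπ i v).ne (hinj' (i := i) (j := j) ?_).2
      rw [h, Equiv.apply_symm_apply, Sym2.eq_swap]
  rw [neighborSet_permSubgraph, Set.ncard_range_of_injective hindex, Nat.card_eq_fintype_card,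
    Fintype.card_sum]

theorem HasRainbowPermutations.exists_rainbow_factor [Fintype ι]
    (h : HasRainbowPermutations G.Adj (fun u v ↦ χ s(u, v)) ι) :
    ∃ H : G.Subgraph, H.IsSpanning ∧
      (∀ v, (H.neighborSet v).ncard = Fintype.card ι + Fintype.card ι) ∧
        ∀ e ∈ H.edgeSet, ∀ f ∈ H.edgeSet, χ e = χ f → e = f := by
  obtain ⟨π, hπ, hcol⟩ := h
  refine ⟨permSubgraph hπ, fun v ↦ Set.mem_univ v,
    ncard_neighborSet_permSubgraph hπ (Injective.of_comp (f := χ) hcol), fun e he f hf hef ↦ ?_⟩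
  obtain ⟨i, v, rfl⟩ := exists_eq_of_mem_edgeSet_permSubgraph hπ he
  obtain ⟨j, w, rfl⟩ := exists_eq_of_mem_edgeSet_permSubgraph hπ hf
  obtain ⟨rfl, rfl⟩ := Prod.mk.inj (hcol (a₁ := (i, v)) (a₂ := (j, w)) hef)
  rfl

variable [Fintype V]

theorem card_arcs_colour_le (G : SimpleGraph V) (χ : Sym2 V → C) (c : C) :
    #{e : V × V | G.Adj e.1 e.2 ∧ χ s(e.1, e.2) = c} ≤ 2 * {e ∈ G.edgeSet | χ e = c}.ncard := by
  rw [Set.ncard_eq_toFinset_card']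
  refine card_le_mul_card_image_of_maps_to (f := fun e : V × V ↦ s(e.1, e.2))
    (t := {e ∈ G.edgeSet | χ e = c}.toFinset)
    (fun e he ↦ Set.mem_toFinset.2 (mem_filter.1 he).2) 2 fun e _ ↦ ?_
  induction e with
  | _ u v =>
    refine (card_le_card (t := {(u, v), (v, u)}) fun e he ↦ ?_).trans card_le_two
    simpa only [mem_insert, mem_singleton, Prod.ext_iff, Sym2.eq_iff] using (mem_filter.1 he).2

theorem isDirac_adj (hdeg : ∀ v, (Fintype.card V : ℝ) / 2 ≤ (G.neighborSet v).ncard) :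
    IsDirac G.Adj := by
  have hflip : flip G.Adj = G.Adj := by
    ext u v
    exact G.adj_comm v u
  have hdeg' (v) : (Fintype.card V : ℝ) / 2 ≤ deg G.Adj univ v := by
    refine (hdeg v).trans_eq ?_
    rw [deg, Set.ncard_eq_toFinset_card']
    congr
    ext w
    simp
  exact ⟨hdeg', by rwa [hflip]⟩

end Factor

end RainbowFactor

open Finset RainbowFactor in
open scoped Classical in
theorem rainbow_factor_in_Dirac_general {V C : Type*} [Fintype V] (G : SimpleGraph V)
    (χ : Sym2 V → C) {Δ : ℕ} (hΔ : Even Δ) (hΔ₁ : 1 ≤ Δ) (hV : 10 ^ 12 ≤ Fintype.card V)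
    (hdeg : ∀ v, (Fintype.card V : ℝ) / 2 ≤ (G.neighborSet v).ncard)
    (hχ : ∀ c, ({e : Sym2 V | e ∈ G.edgeSet ∧ χ e = c}.ncard : ℝ) ≤
      1 / 10 ^ 24 * Fintype.card V / Δ) :
    ∃ H : G.Subgraph, H.IsSpanning ∧ (∀ v, (H.neighborSet v).ncard = Δ) ∧
      ∀ e ∈ H.edgeSet, ∀ f ∈ H.edgeSet, χ e = χ f → e = f := by
  obtain ⟨k, rfl⟩ := hΔ
  have hk : 0 < k := by lia
  have : (0 : ℝ) < k := Nat.cast_pos.2 hk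
  have : Nonempty (Fin k) := ⟨⟨0, hk⟩⟩
  have hcolour (c : C) : (#{e : V × V | G.Adj e.1 e.2 ∧ χ s(e.1, e.2) = c} : ℝ) ≤
      1 / 10 ^ 24 * Fintype.card V / k :=
    calc (#{e : V × V | G.Adj e.1 e.2 ∧ χ s(e.1, e.2) = c} : ℝ)
        ≤ 2 * {e ∈ G.edgeSet | χ e = c}.ncard := mod_cast card_arcs_colour_le G χ c
      _ ≤ 2 * (1 / 10 ^ 24 * Fintype.card V / (k + k : ℕ)) := by gcongr; exact hχ c
      _ = 1 / 10 ^ 24 * Fintype.card V / k := by push_cast; field_simp; norm_num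
  simpa only [Fintype.card_fin] using ((isDirac_adj hdeg).hasRainbowPermutations (ι := Fin k)
    (col := fun u v ↦ χ s(u, v)) (by positivity) hcolour (by rw [Fintype.card_fin]; field_simp; rfl)
    (mod_cast hV)).exists_rainbow_factor

/-- There exist μ > 0 and n₀ such that for every n ≥ n₀ and every even Δ
with 1 ≤ Δ ≤ μn: if G is a graph on n vertices with minimum degree at least n/2, then
every (μn/Δ)-bounded edge colouring χ of G admits a spanning Δ-regular subgraph of G
that is rainbow with respect to χ. -/
theorem rainbow_factor_in_Dirac :
    ∃ μ : ℝ, 0 < μ ∧ ∃ n₀ : ℕ, ∀ n : ℕ, n₀ ≤ n →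
      ∀ Δ : ℕ, Even Δ → 1 ≤ Δ → (Δ : ℝ) ≤ μ * n →
      ∀ (V : Type) [Fintype V] (G : SimpleGraph V),
        Fintype.card V = n →
        (∀ v : V, (n : ℝ) / 2 ≤ ((G.neighborSet v).ncard : ℝ)) →
        ∀ χ : Sym2 V → ℕ,
          (∀ c : ℕ, (({e : Sym2 V | e ∈ G.edgeSet ∧ χ e = c}).ncard : ℝ) ≤ μ * n / Δ) →
          ∃ H : G.Subgraph, H.IsSpanning ∧ (∀ v : V, (H.neighborSet v).ncard = Δ) ∧
            ∀ e ∈ H.edgeSet, ∀ f ∈ H.edgeSet, χ e = χ f → e = f := by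
  refine ⟨1 / 10 ^ 24, by norm_num, 10 ^ 12, ?_⟩
  rintro _ hn Δ hΔ hΔ₁ - V _ G rfl hdeg χ hχ
  exact rainbow_factor_in_Dirac_general G χ hΔ hΔ₁ (mod_cast hn) hdeg hχ
end

section
/- For every τ ∈ (0,1) there exists ε₀ ∈ (0,1) such that for every ε ∈ (0, ε₀] there exists ν₀ ∈ (0,1) such that for every ν ∈ (0, ν₀] there exists n₀ ∈ ℕ such that for every n ≥ n₀ the following holds: if G = (A ∪ B, E) is a Dirac bipartite graph on 2n vertices, then G is a bipartite robust (ν,τ)-expander or G is an ε-extremal graph. -/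
/-- The `ν`-robust neighbourhood of `X`: vertices with at least `ν n` neighbours in `X`. -/
def robustNbhd {V : Type*} (G : SimpleGraph V) (n : ℕ) (ν : ℝ) (X : Set V) : Set V :=
  {v : V | ν * n ≤ ((G.neighborSet v ∩ X).ncard : ℝ)}

/-- A balanced bipartite graph with parts `A`, `B` of size `n` is a bipartite robust
`(ν,τ)`-expander if every `X ⊆ A` or `X ⊆ B` with `τn ≤ |X| ≤ (1−τ)n` satisfies
`|RN_ν(X)| ≥ |X| + νn`. -/
def BipRobustExpander {V : Type*} (G : SimpleGraph V) (A B : Set V) (n : ℕ)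
    (ν τ : ℝ) : Prop :=
  ∀ X : Set V, (X ⊆ A ∨ X ⊆ B) → τ * n ≤ (X.ncard : ℝ) → (X.ncard : ℝ) ≤ (1 - τ) * n →
    (X.ncard : ℝ) + ν * n ≤ ((robustNbhd G n ν X).ncard : ℝ)

/-- A balanced bipartite graph with parts `A`, `B` of size `n` is `ε`-extremal if there are
partitions `A = A₁ ∪ A₂`, `B = B₁ ∪ B₂` with `||A₁| − |A₂|| ≤ εn`, `||B₁| − |B₂|| ≤ εn`
and `e(A₁, B₂) ≤ εn²`. -/
def EpsExtremal {V : Type*} (G : SimpleGraph V) (A B : Set V) (n : ℕ) (ε : ℝ) : Prop :=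
  ∃ A₁ A₂ B₁ B₂ : Set V,
    A₁ ∪ A₂ = A ∧ Disjoint A₁ A₂ ∧ B₁ ∪ B₂ = B ∧ Disjoint B₁ B₂ ∧
    |(A₁.ncard : ℝ) - (A₂.ncard : ℝ)| ≤ ε * n ∧
    |(B₁.ncard : ℝ) - (B₂.ncard : ℝ)| ≤ ε * n ∧
    (({p : V × V | p.1 ∈ A₁ ∧ p.2 ∈ B₂ ∧ G.Adj p.1 p.2}).ncard : ℝ) ≤ ε * n ^ 2

/-!
Suppose `X ⊆ A` does not expand, and let `R` be its robust neighbourhood, so `|R| < |X| + νn`.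
A vertex of `B` has at least `n/2 - |A \ X|` neighbours in `X`; hence `|X| < n/2 + νn`, as otherwise
`R` would be all of `B`. By the definition of `R` there are at most `νn²` edges between `X` and
`B \ R`, while each of the at least `τn` vertices of `X` sends at least `n/2 - |R|` edges there;
hence `|R| ≥ n/2 - (ν/τ)n`. With `|R| < |X| + νn` this puts both `|X|` and `|R|` within `2(ν/τ)n` of
`n/2`, so for `ν ≤ ετ/4` the partitions `A = X ∪ (A \ X)`, `B = R ∪ (B \ R)` witness extremality.
-/

/-- The edges of `G` between `S` and `T`, as ordered pairs; an edge inside `S ∩ T` is counted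
twice. The cardinality is the `e(S, T)` of the definition of an `ε`-extremal graph. -/
def edgesBetween {V : Type*} (G : SimpleGraph V) (S T : Set V) : Set (V × V) :=
  {p | p.1 ∈ S ∧ p.2 ∈ T ∧ G.Adj p.1 p.2}

/-- A Dirac bipartite graph: all edges run between the disjoint sets `A` and `B` of size `n`, and
every vertex of `A ∪ B` has degree at least `n / 2`. The vertex type may contain further vertices;
they are isolated. -/
structure IsDiracBipartite {V : Type*} (G : SimpleGraph V) (A B : Set V) (n : ℕ) : Prop where
  isBipartiteWith : G.IsBipartiteWith A B
  ncard_left : A.ncard = n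
  ncard_right : B.ncard = n
  half_le_degree : ∀ v ∈ A ∪ B, (n : ℝ) / 2 ≤ ((G.neighborSet v).ncard : ℝ)

section EdgesBetween

variable {V : Type*} (G : SimpleGraph V) (S T : Set V)

lemma image_swap_edgesBetween : Prod.swap '' edgesBetween G S T = edgesBetween G T S := by
  ext ⟨u, v⟩
  simp only [edgesBetween, Set.image_swap_eq_preimage_swap, Set.mem_preimage, Set.mem_ofPred_eq,
    Prod.fst_swap, Prod.snd_swap, G.adj_comm v u]
  tauto

lemma ncard_edgesBetween_comm : (edgesBetween G S T).ncard = (edgesBetween G T S).ncard := by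
  rw [← image_swap_edgesBetween G S T, Set.ncard_image_of_injective _ Prod.swap_injective]

open Classical in
lemma ncard_edgesBetween_eq_sum [Fintype V] :
    (edgesBetween G S T).ncard = ∑ u ∈ S.toFinset, (G.neighborSet u ∩ T).ncard := by
  have hsigma : (edgesBetween G S T).toFinset =
      (S.toFinset.sigma fun u => (G.neighborSet u ∩ T).toFinset).map
        (Equiv.sigmaEquivProd V V).toEmbedding := by
    ext ⟨u, v⟩
    rw [Set.mem_toFinset]
    simp [edgesBetween, and_comm]
  simp only [Set.ncard_eq_toFinset_card', hsigma, Finset.card_map, Finset.card_sigma]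

variable {G S T} [Finite V] {c : ℝ}

lemma ncard_mul_le_ncard_edgesBetween (h : ∀ u ∈ S, c ≤ (G.neighborSet u ∩ T).ncard) :
    S.ncard * c ≤ (edgesBetween G S T).ncard := by
  classical
  have := Fintype.ofFinite V
  rw [ncard_edgesBetween_eq_sum, Set.ncard_eq_toFinset_card', ← nsmul_eq_mul, Nat.cast_sum]
  exact Finset.card_nsmul_le_sum _ _ _ fun u hu => h u (Set.mem_toFinset.1 hu)

lemma ncard_edgesBetween_le_ncard_mul (h : ∀ v ∈ T, (G.neighborSet v ∩ S).ncard ≤ c) :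
    (edgesBetween G S T).ncard ≤ T.ncard * c := by
  classical
  have := Fintype.ofFinite V
  rw [ncard_edgesBetween_comm, ncard_edgesBetween_eq_sum, Set.ncard_eq_toFinset_card',
    ← nsmul_eq_mul, Nat.cast_sum]
  exact Finset.sum_le_card_nsmul _ _ _ fun v hv => h v (Set.mem_toFinset.1 hv)

end EdgesBetween

section RobustNbhd

variable {V : Type*} {G : SimpleGraph V} {A B X T : Set V} {n : ℕ} {ν : ℝ}

lemma robustNbhd_subset_right (hG : G.IsBipartiteWith A B) (hXA : X ⊆ A) (hνn : 0 < ν * n) :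
    robustNbhd G n ν X ⊆ B := by
  intro v hv
  have hpos : 0 < (G.neighborSet v ∩ X).ncard := by exact_mod_cast hνn.trans_le hv
  obtain ⟨u, huv, huX⟩ := Set.nonempty_of_ncard_ne_zero hpos.ne'
  exact hG.mem_of_mem_adj (hXA huX) huv.symm

lemma ncard_edgesBetween_le_of_disjoint_robustNbhd [Finite V]
    (hT : Disjoint T (robustNbhd G n ν X)) :
    (edgesBetween G X T).ncard ≤ T.ncard * (ν * n) :=
  ncard_edgesBetween_le_ncard_mul fun _ hv => (not_le.1 (Set.disjoint_left.1 hT hv)).le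

end RobustNbhd

namespace EpsExtremal

variable {V : Type*} {G : SimpleGraph V} {A B X Y : Set V} {n : ℕ} {ε : ℝ}

protected lemma symm (h : EpsExtremal G A B n ε) : EpsExtremal G B A n ε := by
  obtain ⟨A₁, A₂, B₁, B₂, hA, hdA, hB, hdB, hcA, hcB, hedges⟩ := h
  refine ⟨B₂, B₁, A₂, A₁, by rwa [Set.union_comm], hdB.symm, by rwa [Set.union_comm], hdA.symm,
    by rwa [abs_sub_comm], by rwa [abs_sub_comm], ?_⟩
  change ((edgesBetween G B₂ A₁).ncard : ℝ) ≤ ε * n ^ 2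
  rwa [ncard_edgesBetween_comm]

lemma of_subsets [Finite V] (hA : A.ncard = n) (hB : B.ncard = n) (hXA : X ⊆ A) (hYB : Y ⊆ B)
    (hX : |(X.ncard : ℝ) - n / 2| ≤ ε / 2 * n) (hY : |(Y.ncard : ℝ) - n / 2| ≤ ε / 2 * n)
    (hedges : (edgesBetween G X (B \ Y)).ncard ≤ ε * n ^ 2) : EpsExtremal G A B n ε := by
  have balanced {C Z : Set V} (hC : C.ncard = n) (hZC : Z ⊆ C)
      (hZ : |(Z.ncard : ℝ) - n / 2| ≤ ε / 2 * n) :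
      |(Z.ncard : ℝ) - (C \ Z).ncard| ≤ ε * n := by
    rw [Set.cast_ncard_sdiff hZC C.toFinite, hC]
    rw [abs_le] at hZ ⊢
    constructor <;> linarith
  exact ⟨X, A \ X, Y, B \ Y, Set.union_sdiff_cancel hXA, Set.disjoint_sdiff_right,
    Set.union_sdiff_cancel hYB, Set.disjoint_sdiff_right, balanced hA hXA hX, balanced hB hYB hY,
    hedges⟩

end EpsExtremal

namespace IsDiracBipartite

variable {V : Type*} {G : SimpleGraph V} {A B X : Set V} {n : ℕ} {ν τ ε : ℝ}

protected lemma symm (hG : IsDiracBipartite G A B n) : IsDiracBipartite G B A n where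
  isBipartiteWith := hG.isBipartiteWith.symm
  ncard_left := hG.ncard_right
  ncard_right := hG.ncard_left
  half_le_degree := Set.union_comm A B ▸ hG.half_le_degree

variable [Finite V]

lemma half_sub_ncard_le_ncard_neighborSet_inter_sdiff (hG : IsDiracBipartite G A B n) {u : V}
    (hu : u ∈ A) (S : Set V) :
    (n : ℝ) / 2 - S.ncard ≤ (G.neighborSet u ∩ (B \ S)).ncard := by
  have hcover : G.neighborSet u ⊆ S ∪ G.neighborSet u ∩ (B \ S) := fun v hv =>
    or_iff_not_imp_left.2 fun hvS =>
      ⟨hv, SimpleGraph.isBipartiteWith_neighborSet_subset hG.isBipartiteWith hu hv, hvS⟩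
  have hcard : ((G.neighborSet u).ncard : ℝ) ≤ S.ncard + (G.neighborSet u ∩ (B \ S)).ncard := by
    exact_mod_cast (Set.ncard_le_ncard hcover).trans (Set.ncard_union_le _ _)
  linarith [hG.half_le_degree u (.inl hu)]

lemma right_subset_robustNbhd (hG : IsDiracBipartite G A B n) (hXA : X ⊆ A)
    (hX : n / 2 + ν * n ≤ X.ncard) : B ⊆ robustNbhd G n ν X := by
  intro v hv
  have hdeg := hG.symm.half_sub_ncard_le_ncard_neighborSet_inter_sdiff hv (A \ X)
  rw [Set.sdiff_sdiff_cancel_left hXA, Set.cast_ncard_sdiff hXA A.toFinite, hG.ncard_left] at hdeg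
  change ν * n ≤ ((G.neighborSet v ∩ X).ncard : ℝ)
  linarith

lemma ncard_lt_of_ncard_robustNbhd_lt (hG : IsDiracBipartite G A B n) (hXA : X ⊆ A)
    (hR : (robustNbhd G n ν X).ncard < (n : ℝ)) : X.ncard < n / 2 + ν * n := by
  by_contra! hX
  have hBR := Set.ncard_le_ncard (hG.right_subset_robustNbhd hXA hX)
  rw [hG.ncard_right] at hBR
  exact hR.not_ge (mod_cast hBR)

lemma ncard_edgesBetween_sdiff_robustNbhd_le (hG : IsDiracBipartite G A B n) (hν : 0 ≤ ν) :
    (edgesBetween G X (B \ robustNbhd G n ν X)).ncard ≤ ν * n ^ 2 := by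
  have hcard : ((B \ robustNbhd G n ν X).ncard : ℝ) ≤ n :=
    mod_cast hG.ncard_right ▸ Set.ncard_le_ncard Set.sdiff_subset
  calc ((edgesBetween G X (B \ robustNbhd G n ν X)).ncard : ℝ)
      ≤ (B \ robustNbhd G n ν X).ncard * (ν * n) :=
        ncard_edgesBetween_le_of_disjoint_robustNbhd Set.disjoint_sdiff_left
    _ ≤ n * (ν * n) := by gcongr
    _ = ν * n ^ 2 := by ring

lemma half_sub_le_ncard_robustNbhd (hG : IsDiracBipartite G A B n) (hν : 0 ≤ ν) (hτ : 0 < τ)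
    (hXA : X ⊆ A) (hX : τ * n ≤ X.ncard) :
    n / 2 - ν / τ * n ≤ (robustNbhd G n ν X).ncard := by
  set R := robustNbhd G n ν X
  by_contra! hR
  have hn : 0 < (n : ℝ) := by
    have : 0 ≤ ν / τ * n := by positivity
    linarith [Nat.cast_nonneg (α := ℝ) R.ncard]
  have hgap : ν / τ * n < n / 2 - R.ncard := by linarith
  have hlt : ν * n ^ 2 < ν * n ^ 2 := by
    calc ν * n ^ 2 = τ * n * (ν / τ * n) := by field_simp
      _ < τ * n * (n / 2 - R.ncard) := by gcongr
      _ ≤ X.ncard * (n / 2 - R.ncard) := by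
        gcongr
        exact (by positivity : (0 : ℝ) ≤ ν / τ * n).trans hgap.le
      _ ≤ (edgesBetween G X (B \ R)).ncard := ncard_mul_le_ncard_edgesBetween fun u hu =>
        hG.half_sub_ncard_le_ncard_neighborSet_inter_sdiff (hXA hu) R
      _ ≤ ν * n ^ 2 := hG.ncard_edgesBetween_sdiff_robustNbhd_le hν
  exact hlt.false

lemma epsExtremal_of_ncard_robustNbhd_lt (hG : IsDiracBipartite G A B n) (hν : 0 < ν)
    (hντ : ν ≤ τ) (hνε : ν ≤ ε * τ / 4) (hXA : X ⊆ A) (hlower : τ * n ≤ X.ncard)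
    (hupper : X.ncard ≤ (1 - τ) * n)
    (hR : (robustNbhd G n ν X).ncard < X.ncard + ν * n) : EpsExtremal G A B n ε := by
  have hτ : 0 < τ := hν.trans_le hντ
  have hn : 0 < (n : ℝ) := by
    rcases n.eq_zero_or_pos with rfl | hn
    · simp only [Nat.cast_zero, mul_zero, add_zero] at hupper hR
      linarith [Nat.cast_nonneg (α := ℝ) (robustNbhd G 0 ν X).ncard]
    · exact_mod_cast hn
  have hτ_le_one : τ ≤ 1 := by nlinarith
  have hντn : ν * n ≤ τ * n := by gcongr
  have hν_le_div : ν ≤ ν / τ := le_div_self hν.le hτ hτ_le_one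
  have hdiv_le : ν / τ ≤ ε / 4 := (div_le_iff₀ hτ).2 (hνε.trans_eq (by ring))
  have hνn_le : ν * n ≤ ε / 4 * n := by gcongr; exact hν_le_div.trans hdiv_le
  have hdivn_le : ν / τ * n ≤ ε / 4 * n := by gcongr
  have hRB : robustNbhd G n ν X ⊆ B :=
    robustNbhd_subset_right hG.isBipartiteWith hXA (by positivity)
  have hX_lt : X.ncard < n / 2 + ν * n := hG.ncard_lt_of_ncard_robustNbhd_lt hXA (by linarith)
  have hR_ge : n / 2 - ν / τ * n ≤ (robustNbhd G n ν X).ncard :=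
    hG.half_sub_le_ncard_robustNbhd hν.le hτ hXA hlower
  refine .of_subsets hG.ncard_left hG.ncard_right hXA hRB
    (abs_le.2 ⟨by linarith, by linarith⟩) (abs_le.2 ⟨by linarith, by linarith⟩) ?_
  refine (hG.ncard_edgesBetween_sdiff_robustNbhd_le hν.le).trans ?_
  gcongr
  linarith

end IsDiracBipartite

theorem dirac_bipartite_dichotomy_general {V : Type*} [Finite V] {G : SimpleGraph V} {A B : Set V}
    {n : ℕ} {ν τ ε : ℝ} (hG : IsDiracBipartite G A B n) (hν : 0 < ν) (hντ : ν ≤ τ)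
    (hνε : ν ≤ ε * τ / 4) : BipRobustExpander G A B n ν τ ∨ EpsExtremal G A B n ε := by
  refine or_iff_not_imp_left.2 fun hnot => ?_
  simp only [BipRobustExpander, not_forall, not_le] at hnot
  obtain ⟨X, hXA | hXB, hlower, hupper, hR⟩ := hnot
  · exact hG.epsExtremal_of_ncard_robustNbhd_lt hν hντ hνε hXA hlower hupper hR
  · exact (hG.symm.epsExtremal_of_ncard_robustNbhd_lt hν hντ hνε hXB hlower hupper hR).symm

/-- dichotomy for Dirac bipartite graphs: every Dirac bipartite graph on
2n vertices is a bipartite robust (ν,τ)-expander or an ε-extremal graph. -/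
theorem dirac_bipartite_dichotomy :
    ∀ τ : ℝ, τ ∈ Set.Ioo (0 : ℝ) 1 →
    ∃ ε₀ ∈ Set.Ioo (0 : ℝ) 1, ∀ ε ∈ Set.Ioc (0 : ℝ) ε₀,
    ∃ ν₀ ∈ Set.Ioo (0 : ℝ) 1, ∀ ν ∈ Set.Ioc (0 : ℝ) ν₀,
    ∃ n₀ : ℕ, ∀ n : ℕ, n₀ ≤ n →
      ∀ (V : Type) [Fintype V] (G : SimpleGraph V) (A B : Set V),
        A ∪ B = Set.univ → Disjoint A B → A.ncard = n → B.ncard = n →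
        (∀ u v : V, G.Adj u v → (u ∈ A ∧ v ∈ B) ∨ (u ∈ B ∧ v ∈ A)) →
        (∀ v : V, (n : ℝ) / 2 ≤ ((G.neighborSet v).ncard : ℝ)) →
        BipRobustExpander G A B n ν τ ∨ EpsExtremal G A B n ε := by
  rintro τ ⟨hτ, hτ_lt_one⟩
  refine ⟨1 / 2, by norm_num, fun ε ⟨hε, hε_le⟩ => ⟨ε * τ / 4, ⟨by positivity, by nlinarith⟩, ?_⟩⟩
  refine fun ν ⟨hν, hνε⟩ => ⟨0, fun n _ V _ G A B _ hdisj hA hB hbip hdeg => ?_⟩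
  exact dirac_bipartite_dichotomy_general ⟨⟨hdisj, hbip⟩, hA, hB, fun v _ => hdeg v⟩ hν
    (hνε.trans (by nlinarith)) hνε
end

section
/- For every γ ∈ (0,1] there exists μ₀ > 0 such that for every μ ∈ (0, μ₀] there exists n₀ ∈ ℕ such that for every n ≥ n₀ the following holds: let G = (A ∪ B, E) be a balanced bipartite graph on 2n vertices that has at least one perfect matching, and suppose that for every perfect matching M of G and every edge x = a₁b₁ ∈ M there are at least γn² edges of G that are (x,M)-switchable. Then for every μn-bounded system of conflicts F for E(G), the number of F-conflict-free perfect matchings of G is at least e^{−μ^{1/2} n} times the total number of perfect matchings of G (equivalently, a uniformly random perfect matching of G is F-conflict-free with probability at least e^{−μ^{1/2} n}). -/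
/-- For a perfect matching `M` of `G` containing the edge `x = a₁b₁` (with `a₁ ∈ A`,
`b₁ ∈ B`), an edge `y = ab` of `G` is `(x,M)`-switchable if `y ∉ M` and the 6-cycle
`a₁ b₁ a₂ b a b₂` is a subgraph of `G`, where `a₂b, ab₂ ∈ M`. -/
def Switchable {V : Type*} (G : SimpleGraph V) (M : G.Subgraph) (a₁ b₁ a b : V) : Prop :=
  G.Adj a b ∧ ¬ M.Adj a b ∧
    ∃ a₂ b₂ : V, M.Adj a₂ b ∧ M.Adj a b₂ ∧ G.Adj b₁ a₂ ∧ G.Adj b₂ a₁ ∧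
      List.Pairwise (· ≠ ·) [a₁, b₁, a₂, b, a, b₂]

/-- The set of `(x,M)`-switchable edges of `G`, for `x = a₁b₁` with `a₁ ∈ A`, `b₁ ∈ B`. -/
def switchableEdges {V : Type*} (G : SimpleGraph V) (M : G.Subgraph) (A B : Set V)
    (a₁ b₁ : V) : Set (Sym2 V) :=
  {y : Sym2 V | ∃ a ∈ A, ∃ b ∈ B, y = s(a, b) ∧ Switchable G M a₁ b₁ a b}

/-!
Choose a perfect matching uniformly at random. A conflict between two edges is a bad event when both
edges are chosen, and the lopsided Lovász local lemma bounds from below the probability that no bad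
event occurs. Its conditional probabilities are estimated by switching. A matching that contains a
given edge `e` and avoids some conflicts not meeting `e` can be switched along a 6-cycle through
`e`. Of the at least `γn²` cycles available, at most `μn² + 2n` create a new conflict or destroy the
other edge of the pair, while each resulting matching arises at most `n` times. Hence `e` has
conditional probability `O(1 / (γn))`, and a conflicting pair has `O(1 / (γn)²)`. A conflict shares
a vertex with `O(μn²)` others and there are at most `μn³` in total, so the local lemma applies when
`μ` is small against `γ²`, with bound `exp (-O(μn / γ²)) ≥ exp (-√μ n)` once `μ ≤ γ⁴ / 256`.
-/

section LocalLemma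

open MeasureTheory

variable {Ω ι : Type*} {A : ι → Set Ω} {S T : Finset ι}

/-- The event that none of the bad events `A i`, `i ∈ S`, occurs. -/
def avoiding (A : ι → Set Ω) (S : Finset ι) : Set Ω := ⋂ i ∈ S, (A i)ᶜ

lemma mem_avoiding {ω : Ω} : ω ∈ avoiding A S ↔ ∀ i ∈ S, ω ∉ A i := by
  simp [avoiding]

lemma avoiding_anti (h : S ⊆ T) : avoiding A T ⊆ avoiding A S :=
  Set.biInter_subset_biInter_left h

lemma avoiding_sdiff_subset [DecidableEq ι] (A : ι → Set Ω) (S T : Finset ι) :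
    avoiding A (S \ T) ⊆ avoiding A S ∪ ⋃ i ∈ S ∩ T, A i ∩ avoiding A (S \ T) := by
  intro ω hω
  by_cases h : ω ∈ avoiding A S
  · exact Or.inl h
  · obtain ⟨i, hiS, hi⟩ : ∃ i ∈ S, ω ∈ A i := by simpa [mem_avoiding] using h
    have hiT : i ∈ T := by
      by_contra hiT
      exact mem_avoiding.1 hω i (Finset.mem_sdiff.2 ⟨hiS, hiT⟩) hi
    exact Or.inr (Set.mem_biUnion (Finset.mem_inter.2 ⟨hiS, hiT⟩) ⟨hi, hω⟩)

variable [MeasurableSpace Ω] {P : Measure Ω} [IsFiniteMeasure P]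
  {I : Finset ι} {N : ι → Finset ι} {p : ι → ℝ}

lemma measureReal_avoiding_sdiff_le [DecidableEq ι] {q : ι → ℝ} (hq : ∀ i, 0 ≤ q i)
    (hA : ∀ i ∈ S ∩ T, P.real (A i ∩ avoiding A (S \ T)) ≤ q i * P.real (avoiding A (S \ T)))
    (hT : ∑ i ∈ T, q i ≤ 1 / 2) :
    P.real (avoiding A (S \ T)) ≤ 2 * P.real (avoiding A S) := by
  have hsum : ∑ i ∈ S ∩ T, q i ≤ 1 / 2 :=
    (Finset.sum_le_sum_of_subset_of_nonneg Finset.inter_subset_right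
      fun i _ _ => hq i).trans hT
  have hunion : P.real (⋃ i ∈ S ∩ T, A i ∩ avoiding A (S \ T)) ≤
      1 / 2 * P.real (avoiding A (S \ T)) := calc
    _ ≤ ∑ i ∈ S ∩ T, P.real (A i ∩ avoiding A (S \ T)) := measureReal_biUnion_finset_le _ _
    _ ≤ ∑ i ∈ S ∩ T, q i * P.real (avoiding A (S \ T)) := Finset.sum_le_sum hA
    _ ≤ 1 / 2 * P.real (avoiding A (S \ T)) := by
      rw [← Finset.sum_mul]
      exact mul_le_mul_of_nonneg_right hsum measureReal_nonneg
  have hcover := (measureReal_mono (μ := P) (avoiding_sdiff_subset A S T)).trans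
    (measureReal_union_le _ _)
  linarith

lemma measureReal_inter_avoiding_le (hp : ∀ i, 0 ≤ p i)
    (hA : ∀ i ∈ I, ∀ S ⊆ I, Disjoint S (N i) →
      P.real (A i ∩ avoiding A S) ≤ p i * P.real (avoiding A S))
    (hN : ∀ i ∈ I, ∑ j ∈ N i, p j ≤ 1 / 4) (hS : S ⊆ I) {i : ι} (hi : i ∈ I) :
    P.real (A i ∩ avoiding A S) ≤ 2 * p i * P.real (avoiding A S) := by
  classical
  induction S using Finset.strongInduction generalizing i with
  | H S ih =>
  have hfarI : S \ N i ⊆ I := Finset.sdiff_subset.trans hS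
  have hfar : P.real (avoiding A (S \ N i)) ≤ 2 * P.real (avoiding A S) := by
    by_cases hSN : S \ N i = S
    · rw [hSN]
      linarith [measureReal_nonneg (μ := P) (s := avoiding A S)]
    · have hlt : S \ N i ⊂ S := Finset.sdiff_subset.ssubset_of_ne hSN
      refine measureReal_avoiding_sdiff_le (q := fun j => 2 * p j)
        (fun j => by linarith [hp j])
        (fun j hj => ih _ hlt hfarI (hS (Finset.mem_inter.1 hj).1)) ?_
      rw [← Finset.mul_sum]
      linarith [hN i hi]
  calc P.real (A i ∩ avoiding A S)
      ≤ P.real (A i ∩ avoiding A (S \ N i)) :=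
        measureReal_mono (Set.inter_subset_inter_right _ (avoiding_anti Finset.sdiff_subset))
    _ ≤ p i * P.real (avoiding A (S \ N i)) := hA i hi _ hfarI Finset.sdiff_disjoint
    _ ≤ p i * (2 * P.real (avoiding A S)) := mul_le_mul_of_nonneg_left hfar (hp i)
    _ = 2 * p i * P.real (avoiding A S) := by ring

theorem prod_one_sub_mul_le_measureReal_avoiding (hp : ∀ i, 0 ≤ p i)
    (hp' : ∀ i ∈ I, p i ≤ 1 / 2)
    (hA : ∀ i ∈ I, ∀ S ⊆ I, Disjoint S (N i) →
      P.real (A i ∩ avoiding A S) ≤ p i * P.real (avoiding A S))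
    (hN : ∀ i ∈ I, ∑ j ∈ N i, p j ≤ 1 / 4) :
    (∏ i ∈ I, (1 - 2 * p i)) * P.real Set.univ ≤ P.real (avoiding A I) := by
  classical
  suffices ∀ S ⊆ I, (∏ i ∈ S, (1 - 2 * p i)) * P.real Set.univ ≤ P.real (avoiding A S) from
    this I subset_rfl
  intro S
  induction S using Finset.induction_on with
  | empty => simp [avoiding]
  | insert i S hiS ih =>
    intro hS
    obtain ⟨hi, hSI⟩ := Finset.insert_subset_iff.1 hS
    have hsplit : P.real (avoiding A S) ≤
        P.real (A i ∩ avoiding A S) + P.real (avoiding A (insert i S)) := by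
      refine (measureReal_mono fun ω hω => ?_).trans (measureReal_union_le _ _)
      by_cases h : ω ∈ A i
      · exact Or.inl ⟨h, hω⟩
      · exact Or.inr (by simpa [mem_avoiding, h] using mem_avoiding.1 hω)
    have hcond := measureReal_inter_avoiding_le hp hA hN hSI hi
    have hfactor : 0 ≤ 1 - 2 * p i := by linarith [hp' i hi]
    calc (∏ j ∈ insert i S, (1 - 2 * p j)) * P.real Set.univ
        = (1 - 2 * p i) * ((∏ j ∈ S, (1 - 2 * p j)) * P.real Set.univ) := by
          rw [Finset.prod_insert hiS, mul_assoc]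
      _ ≤ (1 - 2 * p i) * P.real (avoiding A S) :=
          mul_le_mul_of_nonneg_left (ih hSI) hfactor
      _ ≤ P.real (avoiding A (insert i S)) := by linarith

lemma exp_neg_two_mul_le_one_sub {x : ℝ} (h₀ : 0 ≤ x) (h₁ : x ≤ 1 / 2) :
    Real.exp (-(2 * x)) ≤ 1 - x := by
  rw [Real.exp_neg, inv_le_iff_one_le_mul₀ (Real.exp_pos _)]
  calc 1 ≤ (1 - x) * (2 * x + 1) := by nlinarith
    _ ≤ (1 - x) * Real.exp (2 * x) :=
      mul_le_mul_of_nonneg_left (Real.add_one_le_exp _) (by linarith)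

theorem exp_neg_sum_mul_le_measureReal_avoiding (hp : ∀ i, 0 ≤ p i)
    (hp' : ∀ i ∈ I, p i ≤ 1 / 4)
    (hA : ∀ i ∈ I, ∀ S ⊆ I, Disjoint S (N i) →
      P.real (A i ∩ avoiding A S) ≤ p i * P.real (avoiding A S))
    (hN : ∀ i ∈ I, ∑ j ∈ N i, p j ≤ 1 / 4) :
    Real.exp (-(4 * ∑ i ∈ I, p i)) * P.real Set.univ ≤ P.real (avoiding A I) := by
  refine le_trans (mul_le_mul_of_nonneg_right ?_ measureReal_nonneg)
    (prod_one_sub_mul_le_measureReal_avoiding hp (fun i hi => by linarith [hp' i hi]) hA hN)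
  rw [Finset.mul_sum, ← Finset.sum_neg_distrib, Real.exp_sum]
  refine Finset.prod_le_prod (fun _ _ => (Real.exp_pos _).le) fun i hi => ?_
  have := exp_neg_two_mul_le_one_sub (x := 2 * p i) (by linarith [hp i]) (by linarith [hp' i hi])
  rwa [← mul_assoc, show (2 : ℝ) * 2 = 4 by norm_num] at this

lemma measureReal_count_restrict [Finite Ω] [DiscreteMeasurableSpace Ω] (X Y : Set Ω) :
    (Measure.count.restrict X).real Y = ((X ∩ Y).ncard : ℝ) := by
  rw [measureReal_restrict_apply (MeasurableSet.of_discrete), Measure.real,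
    Measure.count_apply MeasurableSet.of_discrete, Set.inter_comm, Set.ncard]
  cases (X ∩ Y).encard <;> simp

end LocalLemma

section Counting

lemma ncard_biUnion_le_mul {ι γ : Type*} {T : Set ι} (hT : T.Finite) {s : ι → Set γ} {k : ℝ}
    (hs : ∀ i ∈ T, ((s i).ncard : ℝ) ≤ k) : ((⋃ i ∈ T, s i).ncard : ℝ) ≤ T.ncard * k := by
  lift T to Finset ι using hT
  calc ((⋃ i ∈ T, s i).ncard : ℝ) ≤ ∑ i ∈ T, ((s i).ncard : ℝ) := by
        exact_mod_cast T.set_ncard_biUnion_le s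
    _ ≤ (T : Set ι).ncard * k := by
        rw [Set.ncard_coe_finset, ← nsmul_eq_mul]
        exact Finset.sum_le_card_nsmul T _ k hs

variable {V : Type*} [Finite V] {G : SimpleGraph V} {k : ℝ}

instance finite_dart : Finite G.Dart := Finite.of_injective _ SimpleGraph.Dart.toProd_injective

lemma ncard_dart_fst_mem_le (hk : ∀ v, ((G.neighborSet v).ncard : ℝ) ≤ k) (W : Set V) :
    ({d : G.Dart | d.fst ∈ W}.ncard : ℝ) ≤ W.ncard * k := by
  have hcover : {d : G.Dart | d.fst ∈ W} = ⋃ v ∈ W, {d : G.Dart | d.fst = v} := by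
    ext d
    simp
  rw [hcover]
  refine ncard_biUnion_le_mul W.toFinite fun v _ => (Nat.cast_le.2 ?_).trans (hk v)
  refine Set.ncard_le_ncard_of_injOn (fun d => d.snd) (fun d hd => hd ▸ d.adj) ?_
  intro d hd d' hd' h
  exact SimpleGraph.Dart.toProd_injective (Prod.ext (hd.trans hd'.symm) h)

lemma ncard_dart_fst_or_snd_mem_le (hk : ∀ v, ((G.neighborSet v).ncard : ℝ) ≤ k) (W : Set V) :
    ({d : G.Dart | d.fst ∈ W ∨ d.snd ∈ W}.ncard : ℝ) ≤ 2 * (W.ncard * k) := by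
  have hsnd : {d : G.Dart | d.snd ∈ W}.ncard = {d : G.Dart | d.fst ∈ W}.ncard :=
    Set.ncard_congr (fun d _ => d.symm) (fun _ hd => hd)
      (fun _ _ _ _ h => SimpleGraph.Dart.symm_involutive.injective h)
      fun d hd => ⟨d.symm, hd, d.symm_symm⟩
  have hunion := Set.ncard_union_le {d : G.Dart | d.fst ∈ W} {d : G.Dart | d.snd ∈ W}
  calc ({d : G.Dart | d.fst ∈ W ∨ d.snd ∈ W}.ncard : ℝ)
      ≤ {d : G.Dart | d.fst ∈ W}.ncard + {d : G.Dart | d.snd ∈ W}.ncard := by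
        exact_mod_cast hunion
    _ ≤ 2 * (W.ncard * k) := by
        rw [hsnd]
        linarith [ncard_dart_fst_mem_le hk W]

end Counting

section Switching

variable {α β : Type*}

/-- The bijections `α ≃ β` all of whose pairs satisfy `adj`: the perfect matchings of the bipartite
graph with parts `α`, `β` and edge relation `adj`. An edge is encoded as a pair in `α × β`. -/
def perfectMatchings (adj : α → β → Prop) : Set (α ≃ β) := {σ | ∀ a, adj a (σ a)}

/-- `Switchable` for matchings encoded as bijections: `y` is switchable with the edge of `σ`
at `x`. -/
structure IsSwitchable (adj : α → β → Prop) (σ : α ≃ β) (x : α) (y : α × β) : Prop where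
  adj_edge : adj y.1 y.2
  adj_left : adj x (σ y.1)
  adj_right : adj (σ.symm y.2) (σ x)
  apply_fst_ne : σ y.1 ≠ y.2
  ne_fst : x ≠ y.1
  apply_ne_snd : σ x ≠ y.2

section Switch

variable [DecidableEq α]

/-- The matching obtained from `σ` by switching along the 6-cycle through the edge of `σ` at `x`
and the edge `y`, namely replacing the edges at `x`, `y.1` and `σ.symm y.2` by `(x, σ y.1)`,
`y` and `(σ.symm y.2, σ x)`. -/
def switch (σ : α ≃ β) (x : α) (y : α × β) : α ≃ β :=
  (Equiv.swap x y.1 * Equiv.swap y.1 (σ.symm y.2)).trans σ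

variable {adj : α → β → Prop} {σ : α ≃ β} {x : α} {y : α × β}

lemma switch_apply_symm_snd : switch σ x y (σ.symm y.2) = σ x := by
  simp [switch]

lemma switch_apply_fst (hy : σ y.1 ≠ y.2) (hx : σ x ≠ y.2) : switch σ x y y.1 = y.2 := by
  have h₁ : σ.symm y.2 ≠ y.1 := fun h => hy (by simp [← h])
  have h₂ : σ.symm y.2 ≠ x := fun h => hx (by simp [← h])
  simp [switch, Equiv.swap_apply_of_ne_of_ne h₂ h₁]

lemma switch_apply_self (hxy : x ≠ y.1) (hx : σ x ≠ y.2) : switch σ x y x = σ y.1 := by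
  have h : x ≠ σ.symm y.2 := fun h => hx (by simp [h])
  simp [switch, Equiv.swap_apply_of_ne_of_ne hxy h]

lemma switch_apply_of_ne {z : α} (hx : z ≠ x) (hy : z ≠ y.1) (hz : σ z ≠ y.2) :
    switch σ x y z = σ z := by
  have h : z ≠ σ.symm y.2 := fun h => hz (by simp [h])
  simp [switch, Equiv.swap_apply_of_ne_of_ne hy h, Equiv.swap_apply_of_ne_of_ne hx hy]

lemma switch_mem_perfectMatchings (hσ : σ ∈ perfectMatchings adj) (h : IsSwitchable adj σ x y) :
    switch σ x y ∈ perfectMatchings adj := by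
  intro z
  by_cases hx : z = x
  · rw [hx, switch_apply_self h.ne_fst h.apply_ne_snd]
    exact h.adj_left
  by_cases hy : z = y.1
  · rw [hy, switch_apply_fst h.apply_fst_ne h.apply_ne_snd]
    exact h.adj_edge
  by_cases hz : σ z = y.2
  · rw [σ.eq_symm_apply.2 hz, switch_apply_symm_snd]
    exact h.adj_right
  · rw [switch_apply_of_ne hx hy hz]
    exact hσ z

lemma eq_or_apply_eq_of_switch_apply_eq (hy : σ y.1 ≠ y.2) (hx : σ x ≠ y.2) {e : α × β}
    (he₁ : e.1 ≠ x) (he₂ : e.2 ≠ σ x) (he : switch σ x y e.1 = e.2) :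
    e = y ∨ σ e.1 = e.2 := by
  by_cases hfst : e.1 = y.1
  · rw [hfst, switch_apply_fst hy hx] at he
    exact Or.inl (Prod.ext hfst he.symm)
  by_cases hsnd : σ e.1 = y.2
  · rw [σ.eq_symm_apply.2 hsnd, switch_apply_symm_snd] at he
    exact absurd he.symm he₂
  · exact Or.inr (switch_apply_of_ne he₁ hfst hsnd ▸ he)

lemma injOn_switch : {y | IsSwitchable adj σ x y}.InjOn (switch σ x) := by
  intro y hy z hz h
  have hfst : y.1 = z.1 := by
    have := DFunLike.congr_fun h x
    rwa [switch_apply_self hy.ne_fst hy.apply_ne_snd, switch_apply_self hz.ne_fst hz.apply_ne_snd,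
      σ.apply_eq_iff_eq] at this
  have hsnd : y.2 = z.2 := by
    have := DFunLike.congr_fun h y.1
    rwa [switch_apply_fst hy.apply_fst_ne hy.apply_ne_snd, hfst,
      switch_apply_fst hz.apply_fst_ne hz.apply_ne_snd] at this
  exact Prod.ext hfst hsnd

-- When `σ` contains `e`, it is recovered from `τ = switch σ e.1 y` and `y.1`, because
-- `σ.symm y.2 = τ.symm e.2`.
lemma ncard_setOf_switch_eq_le [Finite α] (e : α × β) (τ : α ≃ β) :
    {σ : α ≃ β | σ e.1 = e.2 ∧ ∃ y, switch σ e.1 y = τ}.ncard ≤ Nat.card α := by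
  have hsub : {σ : α ≃ β | σ e.1 = e.2 ∧ ∃ y, switch σ e.1 y = τ} ⊆
      (fun a => (Equiv.swap e.1 a * Equiv.swap a (τ.symm e.2))⁻¹.trans τ) '' Set.univ := by
    rintro σ ⟨hσ, y, rfl⟩
    have h : (switch σ e.1 y).symm e.2 = σ.symm y.2 := by
      rw [Equiv.symm_apply_eq, switch_apply_symm_snd, hσ]
    refine ⟨y.1, Set.mem_univ _, Equiv.ext fun z => ?_⟩
    simp only [h]
    simp [switch]
  exact (Set.ncard_le_ncard hsub).trans
    ((Set.ncard_image_le Set.finite_univ).trans (Set.ncard_univ α).le)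

lemma mul_ncard_le_of_switch_mem [Finite α] {X Y : Set (α ≃ β)} {e : α × β} {m : ℝ}
    {Z : (α ≃ β) → Set (α × β)} (hX : ∀ σ ∈ X, σ e.1 = e.2)
    (hZ : ∀ σ ∈ X, ∀ y ∈ Z σ, IsSwitchable adj σ e.1 y ∧ switch σ e.1 y ∈ Y)
    (hm : ∀ σ ∈ X, m ≤ (Z σ).ncard) :
    m * X.ncard ≤ Nat.card α * Y.ncard := by
  classical
  rcases X.eq_empty_or_nonempty with rfl | ⟨σ₀, -⟩
  · simp only [Set.ncard_empty, Nat.cast_zero, mul_zero]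
    positivity
  have : Finite β := Finite.of_equiv α σ₀
  have : Fintype (α ≃ β) := Fintype.ofFinite _
  have hcount := Finset.card_nsmul_le_card_nsmul (s := X.toFinset) (t := Y.toFinset)
    (fun σ τ => σ e.1 = e.2 ∧ ∃ y ∈ Z σ, switch σ e.1 y = τ) (m := m) (n := Nat.card α) ?_ ?_
  · rwa [nsmul_eq_mul, nsmul_eq_mul, mul_comm, mul_comm (_ : ℝ) (Nat.card α : ℝ),
      ← Set.ncard_eq_toFinset_card', ← Set.ncard_eq_toFinset_card'] at hcount
  · intro σ hσ
    rw [Set.mem_toFinset] at hσ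
    refine (hm σ hσ).trans (Nat.cast_le.2 ?_)
    rw [← Set.ncard_coe_finset, Finset.coe_bipartiteAbove]
    refine Set.ncard_le_ncard_of_injOn (switch σ e.1) (fun y hy => ?_)
      (injOn_switch.mono fun y hy => (hZ σ hσ y hy).1)
    exact ⟨Set.mem_toFinset.2 (hZ σ hσ y hy).2, hX σ hσ, y, hy, rfl⟩
  · intro τ _
    refine Nat.cast_le.2 (le_trans ?_ (ncard_setOf_switch_eq_le e τ))
    rw [← Set.ncard_coe_finset, Finset.coe_bipartiteBelow]
    exact Set.ncard_le_ncard fun σ ⟨_, hσ, y, _, hy⟩ => ⟨hσ, y, hy⟩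

end Switch

/-- The pairs in `α × β` sharing a coordinate with `t`, including `t` itself. -/
def meeting (t : α × β) : Set (α × β) := {y | y.1 = t.1 ∨ y.2 = t.2}

lemma ncard_meeting_le [Finite α] [Finite β] (t : α × β) :
    (meeting t).ncard ≤ Nat.card α + Nat.card β := by
  have hcover : meeting t = Prod.mk t.1 '' Set.univ ∪ (fun a => (a, t.2)) '' Set.univ := by
    ext ⟨a, b⟩
    simp [meeting, eq_comm]
  rw [hcover, add_comm, ← Set.ncard_univ α, ← Set.ncard_univ β]
  exact (Set.ncard_union_le _ _).trans (add_le_add (Set.ncard_image_le) (Set.ncard_image_le))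

/-- The bijections whose graph contains `T`. -/
def containing (T : Set (α × β)) : Set (α ≃ β) := {σ | ∀ t ∈ T, σ t.1 = t.2}

/-- The event that a bijection contains both edges of the conflict `d`. A system of conflicts is
encoded as a graph `F` on `α × β`; working with its darts rather than its edges counts each
conflict twice. -/
def conflictEvent (F : SimpleGraph (α × β)) (d : F.Dart) : Set (α ≃ β) :=
  containing {d.fst, d.snd}

variable {adj : α → β → Prop} {F : SimpleGraph (α × β)} {σ : α ≃ β} {e y : α × β}
  {S : Finset F.Dart} {T : Set (α × β)} {d : F.Dart}

lemma mem_conflictEvent :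
    σ ∈ conflictEvent F d ↔ σ d.fst.1 = d.fst.2 ∧ σ d.snd.1 = d.snd.2 := by
  simp [conflictEvent, containing]

lemma conflictEvent_eq_empty (h : d.fst.1 = d.snd.1) : conflictEvent F d = ∅ := by
  refine Set.eq_empty_of_forall_notMem fun σ hσ => d.adj.ne (Prod.ext h ?_)
  obtain ⟨hfst, hsnd⟩ := mem_conflictEvent.1 hσ
  rw [← hfst, ← hsnd, h]

lemma switch_mem_containing [DecidableEq α] (hσ : σ ∈ containing T) (hT : ∀ t ∈ T, t.1 ≠ e.1)
    (hy : ∀ t ∈ T, y ∉ meeting t) : switch σ e.1 y ∈ containing T := by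
  intro t ht
  obtain ⟨hfst, hsnd⟩ := not_or.1 (hy t ht)
  rw [switch_apply_of_ne (hT t ht) (Ne.symm hfst) fun h => hsnd (h.symm.trans (hσ t ht)), hσ t ht]

lemma switch_mem_avoiding [DecidableEq α] (hσ : σ ∈ avoiding (conflictEvent F) S)
    (he : σ e.1 = e.2) (hS : ∀ d ∈ S, d.fst ∉ meeting e ∧ d.snd ∉ meeting e)
    (hy : IsSwitchable adj σ e.1 y) (hyF : ∀ a, ¬F.Adj (a, σ a) y) :
    switch σ e.1 y ∈ avoiding (conflictEvent F) S := by
  have hold : ∀ f ∉ meeting e, switch σ e.1 y f.1 = f.2 → f = y ∨ σ f.1 = f.2 := by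
    intro f hf
    obtain ⟨hfst, hsnd⟩ := not_or.1 hf
    exact eq_or_apply_eq_of_switch_apply_eq hy.apply_fst_ne hy.apply_ne_snd hfst (he ▸ hsnd)
  have hyF' : ∀ f, F.Adj f y → σ f.1 ≠ f.2 := fun f hf h => hyF f.1 (h ▸ hf)
  refine mem_avoiding.2 fun d hd hmem => ?_
  obtain ⟨hfst, hsnd⟩ := mem_conflictEvent.1 hmem
  rcases hold d.fst (hS d hd).1 hfst with hfst | hfst <;>
    rcases hold d.snd (hS d hd).2 hsnd with hsnd | hsnd
  · exact d.adj.ne (hfst.trans hsnd.symm)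
  · exact hyF' d.snd (hfst ▸ d.adj.symm) hsnd
  · exact hyF' d.fst (hsnd ▸ d.adj) hfst
  · exact mem_avoiding.1 hσ d hd (mem_conflictEvent.2 ⟨hfst, hsnd⟩)

/-- The bijections no two of whose pairs form a conflict. -/
def conflictFree (F : SimpleGraph (α × β)) : Set (α ≃ β) :=
  {σ | ∀ a a', ¬F.Adj (a, σ a) (a', σ a')}

lemma avoiding_univ_eq_conflictFree [Fintype F.Dart] :
    avoiding (conflictEvent F) Finset.univ = conflictFree F := by
  ext σ
  simp only [mem_avoiding, Finset.mem_univ, true_imp_iff, mem_conflictEvent]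
  refine ⟨fun h a a' hadj => h ⟨(_, _), hadj⟩ ⟨rfl, rfl⟩, fun h d hd => h d.fst.1 d.snd.1 ?_⟩
  rw [hd.1, hd.2]
  exact d.adj

/-- The conflicts one of whose edges shares a vertex with an edge of `d`: the neighbours of `d` in
the dependency graph of the local lemma. -/
def touching (d : F.Dart) : Set F.Dart :=
  {d' | d'.fst ∈ meeting d.fst ∪ meeting d.snd ∨ d'.snd ∈ meeting d.fst ∪ meeting d.snd}

lemma notMem_touching {d' : F.Dart} : d' ∉ touching d ↔
    (d'.fst ∉ meeting d.fst ∧ d'.snd ∉ meeting d.fst) ∧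
      d'.fst ∉ meeting d.snd ∧ d'.snd ∉ meeting d.snd := by
  simp only [touching, Set.mem_ofPred_eq, Set.mem_union]
  tauto

variable [Finite α] [Finite β] {m k : ℝ}

lemma conflictFree_eq_univ (hk : ∀ f, (F.neighborSet f).ncard < 1) :
    conflictFree F = Set.univ := by
  refine Set.eq_univ_of_forall fun σ a a' hadj => ?_
  have hempty : F.neighborSet (a, σ a) = ∅ :=
    (Set.ncard_eq_zero).1 (Nat.lt_one_iff.1 (hk _))
  exact hempty.subset hadj

-- Switching the edge `e` away along the cycle given by `y` creates no conflict with an old edge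
-- and keeps `T`, unless `y` conflicts with an edge of `σ` or meets `T`.
lemma mul_ncard_containing_insert_le
    (hm : ∀ σ ∈ perfectMatchings adj, ∀ x, m ≤ {y | IsSwitchable adj σ x y}.ncard)
    (hk : ∀ f, ((F.neighborSet f).ncard : ℝ) ≤ k) (hT : ∀ t ∈ T, t.1 ≠ e.1)
    (hS : ∀ d ∈ S, d.fst ∉ meeting e ∧ d.snd ∉ meeting e) :
    (m - Nat.card α * k - T.ncard * (Nat.card α + Nat.card β)) *
        (perfectMatchings adj ∩ (containing (insert e T) ∩ avoiding (conflictEvent F) S)).ncard ≤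
      Nat.card α *
        (perfectMatchings adj ∩ (containing T ∩ avoiding (conflictEvent F) S)).ncard := by
  classical
  refine mul_ncard_le_of_switch_mem (adj := adj) (e := e)
    (Z := fun σ => {y | IsSwitchable adj σ e.1 y} \
      ((⋃ a ∈ Set.univ, F.neighborSet (a, σ a)) ∪ ⋃ t ∈ T, meeting t)) ?_ ?_ ?_
  · exact fun σ hσ => hσ.2.1 e (Set.mem_insert e T)
  · rintro σ ⟨hσ, hσT, hσS⟩ y ⟨hy, hy'⟩
    obtain ⟨hyF, hyT⟩ : (∀ a, ¬F.Adj (a, σ a) y) ∧ ∀ t ∈ T, y ∉ meeting t := by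
      simpa using hy'
    exact ⟨hy, switch_mem_perfectMatchings hσ hy,
      switch_mem_containing (fun t ht => hσT t (Set.mem_insert_of_mem e ht)) hT hyT,
      switch_mem_avoiding hσS (hσT e (Set.mem_insert e T)) hS hy hyF⟩
  · rintro σ ⟨hσ, -⟩
    have hconflict : ((⋃ a ∈ Set.univ, F.neighborSet (a, σ a)).ncard : ℝ) ≤ Nat.card α * k := by
      simpa only [Set.ncard_univ] using
        ncard_biUnion_le_mul (Set.finite_univ (α := α)) fun a _ => hk (a, σ a)
    have hmeet : ((⋃ t ∈ T, meeting t).ncard : ℝ) ≤ T.ncard * (Nat.card α + Nat.card β) :=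
      ncard_biUnion_le_mul T.toFinite fun t _ => by exact_mod_cast ncard_meeting_le t
    have hunion : (((⋃ a ∈ Set.univ, F.neighborSet (a, σ a)) ∪ ⋃ t ∈ T, meeting t).ncard : ℝ) ≤
        (⋃ a ∈ Set.univ, F.neighborSet (a, σ a)).ncard + (⋃ t ∈ T, meeting t).ncard := by
      exact_mod_cast Set.ncard_union_le _ _
    have hdiff : ({y | IsSwitchable adj σ e.1 y}.ncard : ℝ) ≤
        ({y | IsSwitchable adj σ e.1 y} \
          ((⋃ a ∈ Set.univ, F.neighborSet (a, σ a)) ∪ ⋃ t ∈ T, meeting t)).ncard +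
        ((⋃ a ∈ Set.univ, F.neighborSet (a, σ a)) ∪ ⋃ t ∈ T, meeting t).ncard := by
      exact_mod_cast Set.ncard_le_ncard_sdiff_add_ncard _ _
    linarith [hm σ hσ e.1]

lemma ncard_touching_le (hk : ∀ f, ((F.neighborSet f).ncard : ℝ) ≤ k) (d : F.Dart) :
    ((touching d).ncard : ℝ) ≤ 4 * (Nat.card α + Nat.card β) * k := by
  have hk₀ : 0 ≤ k := (Nat.cast_nonneg _).trans (hk d.fst)
  have hmeet : ((meeting d.fst ∪ meeting d.snd).ncard : ℝ) ≤ 2 * (Nat.card α + Nat.card β) := by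
    have := (Set.ncard_union_le (meeting d.fst) (meeting d.snd)).trans
      (add_le_add (ncard_meeting_le _) (ncard_meeting_le _))
    rw [two_mul]
    exact_mod_cast this
  calc ((touching d).ncard : ℝ)
      ≤ 2 * ((meeting d.fst ∪ meeting d.snd).ncard * k) := ncard_dart_fst_or_snd_mem_le hk _
    _ ≤ 2 * (2 * (Nat.card α + Nat.card β) * k) := by gcongr
    _ = 4 * (Nat.card α + Nat.card β) * k := by ring

lemma sq_mul_ncard_conflictEvent_le
    (hm : ∀ σ ∈ perfectMatchings adj, ∀ x, m ≤ {y | IsSwitchable adj σ x y}.ncard)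
    (hk : ∀ f, ((F.neighborSet f).ncard : ℝ) ≤ k) {r : ℝ} (hr : 0 ≤ r)
    (hrm : r ≤ m - Nat.card α * k - (Nat.card α + Nat.card β)) (hS : ∀ d' ∈ S, d' ∉ touching d) :
    r ^ 2 * (perfectMatchings adj ∩
        (conflictEvent F d ∩ avoiding (conflictEvent F) S)).ncard ≤
      (Nat.card α : ℝ) ^ 2 * (perfectMatchings adj ∩ avoiding (conflictEvent F) S).ncard := by
  by_cases hd : d.fst.1 = d.snd.1
  · simp only [conflictEvent_eq_empty hd, Set.empty_inter, Set.inter_empty, Set.ncard_empty,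
      Nat.cast_zero, mul_zero]
    positivity
  have hfst := mul_ncard_containing_insert_le (T := {d.snd}) hm hk (by simpa using Ne.symm hd)
    fun d' hd' => (notMem_touching.1 (hS d' hd')).1
  have hsnd := mul_ncard_containing_insert_le (T := ∅) hm hk (by simp)
    fun d' hd' => (notMem_touching.1 (hS d' hd')).2
  have hcontaining : (containing ∅ : Set (α ≃ β)) = Set.univ := by simp [containing]
  rw [Set.ncard_singleton, Nat.cast_one, one_mul] at hfst
  rw [Set.ncard_empty, Nat.cast_zero, zero_mul, sub_zero, insert_empty_eq, hcontaining,
    Set.univ_inter] at hsnd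
  have hrm' : r ≤ m - Nat.card α * k := hrm.trans (sub_le_self _ (by positivity))
  have hfst' := (mul_le_mul_of_nonneg_right hrm (Nat.cast_nonneg _)).trans hfst
  have hsnd' := (mul_le_mul_of_nonneg_right hrm' (Nat.cast_nonneg _)).trans hsnd
  calc r ^ 2 * (perfectMatchings adj ∩
        (conflictEvent F d ∩ avoiding (conflictEvent F) S)).ncard
      ≤ r * (Nat.card α * (perfectMatchings adj ∩
          (containing {d.snd} ∩ avoiding (conflictEvent F) S)).ncard) := by
        rw [pow_two, mul_assoc]
        exact mul_le_mul_of_nonneg_left hfst' hr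
    _ = Nat.card α * (r * (perfectMatchings adj ∩
          (containing {d.snd} ∩ avoiding (conflictEvent F) S)).ncard) := by ring
    _ ≤ Nat.card α * (Nat.card α *
          (perfectMatchings adj ∩ avoiding (conflictEvent F) S).ncard) :=
        mul_le_mul_of_nonneg_left hsnd' (Nat.cast_nonneg _)
    _ = _ := by ring

theorem exp_neg_mul_ncard_perfectMatchings_le
    (hm : ∀ σ ∈ perfectMatchings adj, ∀ x, m ≤ {y | IsSwitchable adj σ x y}.ncard)
    (hk : ∀ f, ((F.neighborSet f).ncard : ℝ) ≤ k) {r : ℝ} (hr : 0 < r)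
    (hrm : r ≤ m - Nat.card α * k - (Nat.card α + Nat.card β)) (hr₂ : 2 * Nat.card α ≤ r)
    (hlocal : 4 * (Nat.card α + Nat.card β) * k * (Nat.card α / r) ^ 2 ≤ 1 / 4) :
    Real.exp (-(4 * (Nat.card α * Nat.card β * k * (Nat.card α / r) ^ 2))) *
        (perfectMatchings adj).ncard ≤
      (perfectMatchings adj ∩ conflictFree F).ncard := by
  classical
  have : Fintype F.Dart := Fintype.ofFinite _
  let _ : MeasurableSpace (α ≃ β) := ⊤
  have : DiscreteMeasurableSpace (α ≃ β) := ⟨fun _ => trivial⟩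
  let P : MeasureTheory.Measure (α ≃ β) := .restrict .count (perfectMatchings adj)
  have hP : ∀ X, P.real X = (perfectMatchings adj ∩ X).ncard := measureReal_count_restrict _
  have hpair : ∀ d ∈ (Finset.univ : Finset F.Dart), ∀ S ⊆ (Finset.univ : Finset F.Dart),
      Disjoint S (touching d).toFinset →
      P.real (conflictEvent F d ∩ avoiding (conflictEvent F) S) ≤
        (Nat.card α / r) ^ 2 * P.real (avoiding (conflictEvent F) S) := by
    intro d _ S _ hS
    rw [hP, hP, div_pow, div_mul_eq_mul_div, le_div_iff₀ (by positivity), mul_comm]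
    exact sq_mul_ncard_conflictEvent_le hm hk hr.le hrm fun d' hd' h =>
      Finset.disjoint_left.1 hS hd' (Set.mem_toFinset.2 h)
  have hprob : (Nat.card α / r) ^ 2 ≤ 1 / 4 := by
    have : Nat.card α / r ≤ 1 / 2 := by
      rw [div_le_iff₀ hr]
      linarith
    calc (Nat.card α / r) ^ 2 ≤ (1 / 2) ^ 2 := by gcongr
      _ = 1 / 4 := by norm_num
  have hdarts : ((Finset.univ : Finset F.Dart).card : ℝ) ≤ Nat.card α * Nat.card β * k := by
    have := ncard_dart_fst_mem_le hk Set.univ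
    simpa [Set.ncard_univ, Nat.card_prod] using this
  have hlll := exp_neg_sum_mul_le_measureReal_avoiding (P := P)
    (N := fun d => (touching d).toFinset) (fun _ => sq_nonneg (Nat.card α / r))
    (fun _ _ => hprob) hpair fun d _ => ?_
  · rw [hP, hP, Set.inter_univ, avoiding_univ_eq_conflictFree] at hlll
    refine le_trans ?_ hlll
    rw [Finset.sum_const, nsmul_eq_mul]
    gcongr
  · rw [Finset.sum_const, nsmul_eq_mul, ← Set.ncard_eq_toFinset_card']
    exact (mul_le_mul_of_nonneg_right (ncard_touching_le hk d) (sq_nonneg _)).trans hlocal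

lemma sixteen_mul_div_sq_le_sqrt {γ μ : ℝ} (hγ : 0 < γ) (hμ₀ : 0 ≤ μ) (hμ : μ ≤ γ ^ 4 / 256) :
    16 * μ / γ ^ 2 ≤ √μ := by
  have hsqrt : √μ ≤ γ ^ 2 / 16 :=
    Real.sqrt_le_iff.2 ⟨by positivity, hμ.trans_eq (by ring)⟩
  rw [div_le_iff₀ (by positivity)]
  calc 16 * μ = √μ * (16 * √μ) := by linear_combination -16 * Real.mul_self_sqrt hμ₀
    _ ≤ √μ * γ ^ 2 := mul_le_mul_of_nonneg_left (by linarith) (Real.sqrt_nonneg μ)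

lemma eight_le_mul {γ μ x : ℝ} (hγ : 0 ≤ γ) (hγ₁ : γ ≤ 1) (hμ : μ ≤ γ ^ 4 / 256) (hx : 0 ≤ x)
    (h : 1 ≤ μ * x) : 8 ≤ γ * x := calc
  (8 : ℝ) ≤ 256 * (μ * x) := by linarith
  _ = 256 * μ * x := by ring
  _ ≤ γ ^ 4 * x := by gcongr; linarith
  _ ≤ γ * x := by gcongr; exact pow_le_of_le_one hγ hγ₁ four_ne_zero

lemma exp_neg_sqrt_mul_ncard_perfectMatchings_le_of_one_le {γ μ : ℝ} (hγ : 0 < γ) (hγ₁ : γ ≤ 1)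
    (hμ₀ : 0 < μ) (hμ : μ ≤ γ ^ 4 / 256) (hcard : Nat.card β = Nat.card α)
    (hone : 1 ≤ μ * Nat.card α)
    (hm : ∀ σ ∈ perfectMatchings adj, ∀ x,
      γ * (Nat.card α : ℝ) ^ 2 ≤ {y | IsSwitchable adj σ x y}.ncard)
    (hk : ∀ f, ((F.neighborSet f).ncard : ℝ) ≤ μ * Nat.card α) :
    Real.exp (-√μ * Nat.card α) * (perfectMatchings adj).ncard ≤
      (perfectMatchings adj ∩ conflictFree F).ncard := by
  set n := Nat.card α
  have hn : 0 < (n : ℝ) := pos_of_mul_pos_right (one_pos.trans_le hone) hμ₀.le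
  have hμγ : μ ≤ γ ^ 2 / 256 :=
    hμ.trans (by gcongr ?_ / _; exact pow_le_pow_of_le_one hγ.le hγ₁ (by norm_num))
  have hγn : 8 * n ≤ γ * n ^ 2 := calc
    8 * (n : ℝ) ≤ γ * n * n := by gcongr; exact eight_le_mul hγ.le hγ₁ hμ hn.le hone
    _ = γ * n ^ 2 := by ring
  have hμn : n * (μ * n) ≤ γ * n ^ 2 / 4 := calc
    n * (μ * n) = μ * n ^ 2 := by ring
    _ ≤ γ / 4 * n ^ 2 := by gcongr; linarith [pow_le_of_le_one hγ.le hγ₁ two_ne_zero]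
    _ = γ * n ^ 2 / 4 := by ring
  have hratio : (n / (γ * n ^ 2 / 2)) ^ 2 = 4 / (γ * n) ^ 2 := by
    field_simp
    norm_num
  have hlocal : 4 * (n + n) * (μ * n) * (4 / (γ * n) ^ 2) ≤ 1 / 4 := calc
    _ = 32 * μ / γ ^ 2 := by
      field_simp
      norm_num
    _ ≤ 1 / 4 := by
      rw [div_le_iff₀ (by positivity)]
      linarith [sq_nonneg γ]
  have hexp : 4 * (n * n * (μ * n) * (4 / (γ * n) ^ 2)) ≤ √μ * n := calc
    _ = 16 * μ / γ ^ 2 * n := by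
      field_simp
      norm_num
    _ ≤ √μ * n := by gcongr; exact sixteen_mul_div_sq_le_sqrt hγ hμ₀.le hμ
  refine le_trans ?_ (exp_neg_mul_ncard_perfectMatchings_le (r := γ * (n : ℝ) ^ 2 / 2) hm hk
    (by positivity) (by rw [hcard]; linarith) (by linarith) (by rwa [hcard, hratio]))
  rw [hcard, hratio, neg_mul]
  gcongr

theorem exp_neg_sqrt_mul_ncard_perfectMatchings_le {γ μ : ℝ} (hγ : 0 < γ) (hγ₁ : γ ≤ 1)
    (hμ₀ : 0 < μ) (hμ : μ ≤ γ ^ 4 / 256)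
    (hm : ∀ σ ∈ perfectMatchings adj, ∀ x,
      γ * (Nat.card α : ℝ) ^ 2 ≤ {y | IsSwitchable adj σ x y}.ncard)
    (hk : ∀ f, ((F.neighborSet f).ncard : ℝ) ≤ μ * Nat.card α) :
    Real.exp (-√μ * Nat.card α) * (perfectMatchings adj).ncard ≤
      (perfectMatchings adj ∩ conflictFree F).ncard := by
  rcases isEmpty_or_nonempty (α ≃ β) with hempty | ⟨⟨σ⟩⟩
  · simp [Set.eq_empty_of_isEmpty]
  rcases lt_or_ge (μ * Nat.card α) 1 with hlt | hone
  · have hfree : conflictFree F = Set.univ := conflictFree_eq_univ fun f => by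
      exact_mod_cast (hk f).trans_lt hlt
    have hexp : Real.exp (-√μ * Nat.card α) ≤ 1 :=
      Real.exp_le_one_iff.2 (mul_nonpos_of_nonpos_of_nonneg
        (neg_nonpos.2 (Real.sqrt_nonneg μ)) (Nat.cast_nonneg _))
    rw [hfree, Set.inter_univ]
    exact mul_le_of_le_one_left (Nat.cast_nonneg _) hexp
  · exact exp_neg_sqrt_mul_ncard_perfectMatchings_le_of_one_le hγ hγ₁ hμ₀ hμ
      (Nat.card_congr σ).symm hone hm hk

end Switching

section Bipartite

variable {V : Type*} {G : SimpleGraph V} {A B : Set V}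

/-- The edge of a graph with parts `A` and `B` encoded by a pair in `A × B`. -/
def pairEdge (e : A × B) : Sym2 V := s((e.1 : V), (e.2 : V))

lemma pairEdge_injective (hAB : Disjoint A B) : Function.Injective (pairEdge : A × B → Sym2 V) := by
  rintro ⟨a, b⟩ ⟨a', b'⟩ h
  rcases Sym2.eq_iff.1 h with ⟨ha, hb⟩ | ⟨hab, -⟩
  · exact Prod.ext (Subtype.ext ha) (Subtype.ext hb)
  · exact absurd hab (hAB.ne_of_mem a.2 b'.2)

/-- The edge relation of `G` between the parts `A` and `B`. -/
abbrev adjBetween (G : SimpleGraph V) (A B : Set V) : A → B → Prop := fun a b => G.Adj a b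

/-- The spanning subgraph of `G` whose edges are the pairs of `σ` that are edges of `G`. -/
def subgraphOfEquiv (G : SimpleGraph V) (σ : A ≃ B) : G.Subgraph where
  verts := Set.univ
  Adj u v := G.Adj u v ∧ ∃ a, s(u, v) = pairEdge (a, σ a)
  adj_sub := And.left
  edge_vert _ := Set.mem_univ _
  symm := ⟨fun _ _ h => ⟨h.1.symm, Sym2.eq_swap (α := V) ▸ h.2⟩⟩

variable {σ : A ≃ B}

lemma subgraphOfEquiv_adj (hAB : Disjoint A B)
    (hσ : σ ∈ perfectMatchings (adjBetween G A B)) {a : A} {b : B} :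
    (subgraphOfEquiv G σ).Adj a b ↔ σ a = b := by
  refine ⟨fun ⟨_, a', h⟩ => ?_, fun h => h ▸ ⟨hσ a, a, rfl⟩⟩
  have hpair : (a, b) = (a', σ a') := pairEdge_injective hAB h
  obtain ⟨rfl, rfl⟩ := Prod.mk.inj hpair
  rfl

lemma mem_edgeSet_subgraphOfEquiv (hσ : σ ∈ perfectMatchings (adjBetween G A B)) {e : Sym2 V} :
    e ∈ (subgraphOfEquiv G σ).edgeSet ↔ ∃ a, e = pairEdge (a, σ a) := by
  induction e with
  | _ u v =>
  refine ⟨And.right, fun h => ⟨?_, h⟩⟩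
  obtain ⟨a, h⟩ := h
  rw [← SimpleGraph.mem_edgeSet, h]
  exact hσ a

lemma isPerfectMatching_subgraphOfEquiv (hU : A ∪ B = Set.univ) (hG : G.IsBipartiteWith A B)
    (hσ : σ ∈ perfectMatchings (adjBetween G A B)) : (subgraphOfEquiv G σ).IsPerfectMatching := by
  rw [SimpleGraph.Subgraph.isPerfectMatching_iff]
  intro v
  rcases hU.symm ▸ Set.mem_univ v with hv | hv
  · lift v to A using hv
    refine ⟨σ v, (subgraphOfEquiv_adj hG.disjoint hσ).2 rfl, fun w hw => ?_⟩
    lift w to B using hG.mem_of_mem_adj v.2 hw.adj_sub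
    rw [(subgraphOfEquiv_adj hG.disjoint hσ).1 hw]
  · lift v to B using hv
    refine ⟨σ.symm v, ((subgraphOfEquiv_adj hG.disjoint hσ).2 (σ.apply_symm_apply v)).symm,
      fun w hw => ?_⟩
    lift w to A using hG.symm.mem_of_mem_adj v.2 hw.adj_sub
    rw [← (subgraphOfEquiv_adj hG.disjoint hσ).1 hw.symm, σ.symm_apply_apply]

lemma injOn_subgraphOfEquiv (hAB : Disjoint A B) :
    Set.InjOn (subgraphOfEquiv G) (perfectMatchings (adjBetween G A B)) := by
  intro σ hσ τ hτ h
  ext a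
  have hadj := (subgraphOfEquiv_adj hAB hσ).2 (rfl : σ a = σ a)
  rw [h, subgraphOfEquiv_adj hAB hτ] at hadj
  rw [hadj]

lemma surjOn_subgraphOfEquiv (hG : G.IsBipartiteWith A B) :
    Set.SurjOn (subgraphOfEquiv G) (perfectMatchings (adjBetween G A B))
      {M : G.Subgraph | M.IsPerfectMatching} := by
  intro M hM
  choose f hf hunique using SimpleGraph.Subgraph.isPerfectMatching_iff.1 hM
  have hinv : Function.Involutive f := fun v => (hunique _ _ (hf v).symm).symm
  let σ : A ≃ B :=
    { toFun a := ⟨f a, hG.mem_of_mem_adj a.2 (hf a).adj_sub⟩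
      invFun b := ⟨f b, hG.symm.mem_of_mem_adj b.2 (hf b).adj_sub⟩
      left_inv a := Subtype.ext (hinv a)
      right_inv b := Subtype.ext (hinv b) }
  refine ⟨σ, fun a => (hf a).adj_sub, SimpleGraph.Subgraph.ext ?_ ?_⟩
  · exact (Set.eq_univ_of_forall hM.2).symm
  · ext u v
    refine ⟨fun ⟨_, a, h⟩ => ?_, fun h => ⟨h.adj_sub, ?_⟩⟩
    · rw [← SimpleGraph.Subgraph.mem_edgeSet, h]
      exact hf a
    · rcases hG.mem_of_adj h.adj_sub with ⟨hu, -⟩ | ⟨-, hv⟩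
      · exact ⟨⟨u, hu⟩, congrArg (fun w => s(u, w)) (hunique _ _ h)⟩
      · exact ⟨⟨v, hv⟩, Sym2.eq_swap.trans (congrArg (fun w => s(v, w)) (hunique _ _ h.symm))⟩

lemma ncard_isPerfectMatching_le [Finite V] (hG : G.IsBipartiteWith A B) :
    {M : G.Subgraph | M.IsPerfectMatching}.ncard ≤ (perfectMatchings (adjBetween G A B)).ncard :=
  (Set.ncard_le_ncard (surjOn_subgraphOfEquiv hG)).trans Set.ncard_image_le

lemma switchableEdges_subset_image (hG : G.IsBipartiteWith A B)
    (hσ : σ ∈ perfectMatchings (adjBetween G A B)) (x : A) :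
    switchableEdges G (subgraphOfEquiv G σ) A B x (σ x) ⊆
      pairEdge '' {y | IsSwitchable (adjBetween G A B) σ x y} := by
  rintro _ ⟨a, ha, b, hb, rfl, hab, hab', a₂, b₂, ha₂, hb₂, hadj₁, hadj₂, hne⟩
  lift a to A using ha
  lift b to B using hb
  lift a₂ to A using hG.symm.mem_of_mem_adj b.2 ha₂.adj_sub.symm
  lift b₂ to B using hG.mem_of_mem_adj a.2 hb₂.adj_sub
  rw [subgraphOfEquiv_adj hG.disjoint hσ] at hab' ha₂ hb₂
  subst ha₂ hb₂
  simp only [List.pairwise_cons, List.mem_cons, List.not_mem_nil, or_false, ne_eq,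
    forall_eq_or_imp, forall_eq] at hne
  obtain ⟨⟨-, -, -, hxa, -⟩, ⟨-, hxb, -⟩, -⟩ := hne
  refine ⟨(a, σ a₂), ⟨hab, hadj₂.symm, ?_, hab', ?_, ?_⟩, rfl⟩
  · simpa using hadj₁.symm
  · exact fun h => hxa (congrArg Subtype.val h)
  · exact fun h => hxb (congrArg Subtype.val h)

lemma ncard_switchableEdges_le [Finite V] (hG : G.IsBipartiteWith A B)
    (hσ : σ ∈ perfectMatchings (adjBetween G A B)) (x : A) :
    (switchableEdges G (subgraphOfEquiv G σ) A B x (σ x)).ncard ≤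
      {y | IsSwitchable (adjBetween G A B) σ x y}.ncard :=
  (Set.ncard_le_ncard (switchableEdges_subset_image hG hσ x)).trans Set.ncard_image_le

/-- A system of conflicts between the edges of a graph with parts `A` and `B`, seen as a graph on
`A × B`. -/
def conflictGraph (A B : Set V) (F : Set (Sym2 (Sym2 V))) : SimpleGraph (A × B) :=
  (SimpleGraph.fromEdgeSet F).comap pairEdge

variable {F : Set (Sym2 (Sym2 V))}

lemma ncard_neighborSet_conflictGraph_le [Finite V] {k : ℝ} (hAB : Disjoint A B) (hk₀ : 0 ≤ k)
    (hF : ∀ p ∈ F, ∀ e ∈ p, e ∈ G.edgeSet)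
    (hk : ∀ e ∈ G.edgeSet, ({f : Sym2 V | s(e, f) ∈ F}.ncard : ℝ) ≤ k) (e : A × B) :
    (((conflictGraph A B F).neighborSet e).ncard : ℝ) ≤ k := by
  by_cases he : pairEdge e ∈ G.edgeSet
  · refine (Nat.cast_le.2 ?_).trans (hk _ he)
    exact Set.ncard_le_ncard_of_injOn pairEdge (fun _ hf => hf.1) (pairEdge_injective hAB).injOn
  · have hempty : (conflictGraph A B F).neighborSet e = ∅ :=
      Set.eq_empty_of_forall_notMem fun f hf => he (hF _ hf.1 _ (Sym2.mem_mk_left _ _))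
    rwa [hempty, Set.ncard_empty, Nat.cast_zero]

lemma notMem_of_mem_conflictFree (hσ : σ ∈ perfectMatchings (adjBetween G A B))
    (hfree : σ ∈ conflictFree (conflictGraph A B F)) :
    ∀ e ∈ (subgraphOfEquiv G σ).edgeSet, ∀ f ∈ (subgraphOfEquiv G σ).edgeSet,
      e ≠ f → s(e, f) ∉ F := by
  simp only [mem_edgeSet_subgraphOfEquiv hσ]
  rintro _ ⟨a, rfl⟩ _ ⟨a', rfl⟩ hne hmem
  exact hfree a a' ⟨hmem, hne⟩

lemma ncard_inter_conflictFree_le [Finite V] (hU : A ∪ B = Set.univ) (hG : G.IsBipartiteWith A B) :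
    (perfectMatchings (adjBetween G A B) ∩ conflictFree (conflictGraph A B F)).ncard ≤
      {M : G.Subgraph | M.IsPerfectMatching ∧
        ∀ e ∈ M.edgeSet, ∀ f ∈ M.edgeSet, e ≠ f → s(e, f) ∉ F}.ncard := by
  refine Set.ncard_le_ncard_of_injOn (subgraphOfEquiv G) ?_
    ((injOn_subgraphOfEquiv hG.disjoint).mono Set.inter_subset_left)
  rintro σ ⟨hσ, hfree⟩
  exact ⟨isPerfectMatching_subgraphOfEquiv hU hG hσ, notMem_of_mem_conflictFree hσ hfree⟩

theorem conflict_free_PM_via_switchings_general [Finite V] {γ μ : ℝ} (hγ : 0 < γ) (hγ₁ : γ ≤ 1)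
    (hμ₀ : 0 < μ) (hμ : μ ≤ γ ^ 4 / 256) (hU : A ∪ B = Set.univ) (hG : G.IsBipartiteWith A B)
    (hswitch : ∀ M : G.Subgraph, M.IsPerfectMatching → ∀ a ∈ A, ∀ b ∈ B, M.Adj a b →
      γ * (A.ncard : ℝ) ^ 2 ≤ ((switchableEdges G M A B a b).ncard : ℝ))
    (hF : ∀ p ∈ F, ∀ e ∈ p, e ∈ G.edgeSet)
    (hk : ∀ e ∈ G.edgeSet, ({f : Sym2 V | s(e, f) ∈ F}.ncard : ℝ) ≤ μ * A.ncard) :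
    Real.exp (-√μ * A.ncard) * ({M : G.Subgraph | M.IsPerfectMatching}.ncard : ℝ) ≤
      ({M : G.Subgraph | M.IsPerfectMatching ∧
        ∀ e ∈ M.edgeSet, ∀ f ∈ M.edgeSet, e ≠ f → s(e, f) ∉ F}.ncard : ℝ) := by
  have hm : ∀ σ ∈ perfectMatchings (adjBetween G A B), ∀ x : A, γ * (A.ncard : ℝ) ^ 2 ≤
      {y | IsSwitchable (adjBetween G A B) σ x y}.ncard := fun σ hσ x =>
    (hswitch _ (isPerfectMatching_subgraphOfEquiv hU hG hσ) x x.2 (σ x) (σ x).2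
      ((subgraphOfEquiv_adj hG.disjoint hσ).2 rfl)).trans
      (Nat.cast_le.2 (ncard_switchableEdges_le hG hσ x))
  have hdeg : ∀ e, (((conflictGraph A B F).neighborSet e).ncard : ℝ) ≤ μ * A.ncard :=
    ncard_neighborSet_conflictGraph_le hG.disjoint (by positivity) hF hk
  calc Real.exp (-√μ * A.ncard) * ({M : G.Subgraph | M.IsPerfectMatching}.ncard : ℝ)
      ≤ Real.exp (-√μ * A.ncard) * (perfectMatchings (adjBetween G A B)).ncard := by
        gcongr
        exact ncard_isPerfectMatching_le hG
    _ ≤ (perfectMatchings (adjBetween G A B) ∩ conflictFree (conflictGraph A B F)).ncard :=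
        exp_neg_sqrt_mul_ncard_perfectMatchings_le hγ hγ₁ hμ₀ hμ hm hdeg
    _ ≤ _ := Nat.cast_le.2 (ncard_inter_conflictFree_le hU hG)

end Bipartite

/-- if every edge of every perfect matching of a balanced bipartite graph `G`
on `2n` vertices has at least `γn²` switchable edges, then for every `μn`-bounded system
of conflicts `F`, at least an `e^{−√μ n}` proportion of the perfect matchings of `G`
are `F`-conflict-free. -/
theorem conflict_free_PM_via_switchings :
    ∀ γ : ℝ, γ ∈ Set.Ioc (0 : ℝ) 1 →
    ∃ μ₀ : ℝ, 0 < μ₀ ∧ ∀ μ ∈ Set.Ioc (0 : ℝ) μ₀,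
    ∃ n₀ : ℕ, ∀ n : ℕ, n₀ ≤ n →
      ∀ (V : Type) [Fintype V] (G : SimpleGraph V) (A B : Set V),
        A ∪ B = Set.univ → Disjoint A B → A.ncard = n → B.ncard = n →
        (∀ u v : V, G.Adj u v → (u ∈ A ∧ v ∈ B) ∨ (u ∈ B ∧ v ∈ A)) →
        (∃ M : G.Subgraph, M.IsPerfectMatching) →
        (∀ M : G.Subgraph, M.IsPerfectMatching →
          ∀ a₁ ∈ A, ∀ b₁ ∈ B, M.Adj a₁ b₁ →
            γ * (n : ℝ) ^ 2 ≤ ((switchableEdges G M A B a₁ b₁).ncard : ℝ)) →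
        ∀ F : Set (Sym2 (Sym2 V)),
          (∀ p ∈ F, ∀ e ∈ p, e ∈ G.edgeSet) →
          (∀ e ∈ G.edgeSet, (({f : Sym2 V | s(e, f) ∈ F}).ncard : ℝ) ≤ μ * n) →
          Real.exp (-(Real.sqrt μ) * n) * (({M : G.Subgraph | M.IsPerfectMatching}).ncard : ℝ)
            ≤ (({M : G.Subgraph | M.IsPerfectMatching ∧
                ∀ e ∈ M.edgeSet, ∀ f ∈ M.edgeSet, e ≠ f → s(e, f) ∉ F}).ncard : ℝ) := by
  refine fun γ hγ => ⟨γ ^ 4 / 256, div_pos (pow_pos hγ.1 4) (by norm_num), fun μ hμ => ⟨0, ?_⟩⟩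
  rintro _ - V _ G A B hU hAB rfl - hbip - hswitch F hF hk
  exact conflict_free_PM_via_switchings_general hγ.1 hγ.2 hμ.1 hμ.2 hU ⟨hAB, hbip⟩ hswitch hF hk
end
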